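/- arXiv:1910.12568 — 3 statements merged into one kernel-verified Lean document; each statement's English description precedes it below -/
import Mathlib

section
/- Every proper gradient map f : ℝ² → ℝ² is proper gradient homotopic to a generic proper gradient map. -/
open Set Metric Filter

noncomputable section

/-- Euclidean space `ℝⁿ`. -/
abbrev Euc (n : ℕ) := EuclideanSpace ℝ (Fin n)

/-- A map `f : ℝⁿ → ℝⁿ` is gradient if it is the gradient of a `C¹` function `φ : ℝⁿ → ℝ`. -/
def IsGradient {n : ℕ} (f : Euc n → Euc n) : Prop :=
  ∃ φ : Euc n → ℝ, ContDiff ℝ 1 φ ∧ ∀ x, gradient φ x = f x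

/-- A map is proper if preimages of compact sets are compact (our maps are continuous anyway). -/
def IsProper {n : ℕ} (f : Euc n → Euc n) : Prop :=
  ∀ K : Set (Euc n), IsCompact K → IsCompact (f ⁻¹' K)

/-- `h : [0,1] × ℝⁿ → ℝⁿ` is a gradient homotopy: it is continuous, each `h t` is a
gradient map, and the zero set `h⁻¹(0)` (within `[0,1] × ℝⁿ`) is compact. -/
def IsGradientHomotopy {n : ℕ} (h : ℝ → Euc n → Euc n) : Prop :=
  ContinuousOn (fun p : ℝ × Euc n => h p.1 p.2) (Icc 0 1 ×ˢ univ) ∧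
  (∀ t ∈ Icc (0:ℝ) 1, IsGradient (h t)) ∧
  IsCompact {p : ℝ × Euc n | p.1 ∈ Icc (0:ℝ) 1 ∧ h p.1 p.2 = 0}

/-- Two maps are gradient homotopic if some gradient homotopy connects them. -/
def GradientHomotopic {n : ℕ} (f g : Euc n → Euc n) : Prop :=
  ∃ h : ℝ → Euc n → Euc n, IsGradientHomotopy h ∧ h 0 = f ∧ h 1 = g

/-- `h : [0,1] × ℝⁿ → ℝⁿ` is a proper gradient homotopy: it is continuous, each `h t` is a
gradient map, and `h` is proper as a map on `[0,1] × ℝⁿ`. -/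
def IsProperGradientHomotopy {n : ℕ} (h : ℝ → Euc n → Euc n) : Prop :=
  ContinuousOn (fun p : ℝ × Euc n => h p.1 p.2) (Icc 0 1 ×ˢ univ) ∧
  (∀ t ∈ Icc (0:ℝ) 1, IsGradient (h t)) ∧
  (∀ K : Set (Euc n), IsCompact K →
    IsCompact {p : ℝ × Euc n | p.1 ∈ Icc (0:ℝ) 1 ∧ h p.1 p.2 ∈ K})

/-- Two maps are proper gradient homotopic if some proper gradient homotopy connects them. -/
def ProperGradientHomotopic {n : ℕ} (f g : Euc n → Euc n) : Prop :=
  ∃ h : ℝ → Euc n → Euc n, IsProperGradientHomotopy h ∧ h 0 = f ∧ h 1 = g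

open scoped RealInnerProductSpace

/-- `p` is a source of the gradient map `f = ∇φ`: a zero of `f` at which the Hessian of `φ`,
i.e. the derivative of `f`, is positive definite. -/
def IsSourceAt (f : Euc 2 → Euc 2) (p : Euc 2) : Prop :=
  f p = 0 ∧ ∀ v : Euc 2, v ≠ 0 → 0 < ⟪fderiv ℝ f p v, v⟫

/-- `p` is a sink of the gradient map `f = ∇φ`: a zero of `f` at which the Hessian of `φ`
is negative definite. -/
def IsSinkAt (f : Euc 2 → Euc 2) (p : Euc 2) : Prop :=
  f p = 0 ∧ ∀ v : Euc 2, v ≠ 0 → ⟪fderiv ℝ f p v, v⟫ < 0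

/-- `p` is a saddle of `f`: a zero of `f` which is neither a source nor a sink. -/
def IsSaddleAt (f : Euc 2 → Euc 2) (p : Euc 2) : Prop :=
  f p = 0 ∧ ¬ IsSourceAt f p ∧ ¬ IsSinkAt f p

/-- `γ : ℝ → ℝ²` is a (full) trajectory of the local flow of `ẋ = f(x)`. -/
def IsTrajectory (f : Euc 2 → Euc 2) (γ : ℝ → Euc 2) : Prop :=
  ∀ t : ℝ, HasDerivAt γ (f (γ t)) t

/-- No trajectory of the local flow of `ẋ = f(x)` connects two (distinct) saddle points. -/
def NoSaddleConnection (f : Euc 2 → Euc 2) : Prop :=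
  ¬ ∃ (γ : ℝ → Euc 2) (p q : Euc 2), IsTrajectory f γ ∧
      IsSaddleAt f p ∧ IsSaddleAt f q ∧ p ≠ q ∧
      Filter.Tendsto γ Filter.atBot (nhds p) ∧ Filter.Tendsto γ Filter.atTop (nhds q)

/-- `f` is a generic gradient map with potential `φ`: `φ` is `C²` with `∇φ = f`, all critical
points are nondegenerate, distinct critical points have distinct critical values, and no
trajectory of the local flow connects two saddle points. -/
def IsGenericGradientPair (φ : Euc 2 → ℝ) (f : Euc 2 → Euc 2) : Prop :=
  ContDiff ℝ 2 φ ∧ (∀ x, gradient φ x = f x) ∧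
  (∀ p : Euc 2, f p = 0 → Function.Bijective (fderiv ℝ f p)) ∧
  (∀ p q : Euc 2, f p = 0 → f q = 0 → φ p = φ q → p = q) ∧
  NoSaddleConnection f

/-- `f` is a generic gradient map. -/
def IsGenericGradient (f : Euc 2 → Euc 2) : Prop :=
  ∃ φ : Euc 2 → ℝ, IsGenericGradientPair φ f

/-- The set `A_f` of sources and sinks of `f`. -/
def sourceSinkSet (f : Euc 2 → Euc 2) : Set (Euc 2) :=
  {p | IsSourceAt f p ∨ IsSinkAt f p}

/-- The set `B_f` of saddles of `f`. -/
def saddleSet (f : Euc 2 → Euc 2) : Set (Euc 2) :=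
  {p | IsSaddleAt f p}

/-- `z ∈ E_x⁻`: the trajectory through `z` tends to `x` as `t → -∞`. -/
def InBackwardBasin (f : Euc 2 → Euc 2) (x z : Euc 2) : Prop :=
  ∃ γ : ℝ → Euc 2, γ 0 = z ∧ (∀ t ∈ Set.Iic (0:ℝ), HasDerivAt γ (f (γ t)) t) ∧
    Filter.Tendsto γ Filter.atBot (nhds x)

/-- `z ∈ E_y⁺` for a stationary point `y`: the trajectory through `z` tends to `y` in
forward time.  (A forward trajectory converging to a stationary point exists for all
`t ≥ 0`.) -/
def InForwardBasin (f : Euc 2 → Euc 2) (y z : Euc 2) : Prop :=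
  ∃ γ : ℝ → Euc 2, γ 0 = z ∧ (∀ t ∈ Set.Ici (0:ℝ), HasDerivAt γ (f (γ t)) t) ∧
    Filter.Tendsto γ Filter.atTop (nhds y)

/-- `z ∈ E_∞⁺`: the trajectory through `z` escapes to infinity as `t → ω_z`, where
`ω_z ∈ (0, ∞]` is the endpoint of the maximal forward interval of existence. -/
def EscapesToInfinity (f : Euc 2 → Euc 2) (z : Euc 2) : Prop :=
  ∃ γ : ℝ → Euc 2, γ 0 = z ∧
    (((∀ t ∈ Set.Ici (0:ℝ), HasDerivAt γ (f (γ t)) t) ∧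
        Filter.Tendsto (fun t => ‖γ t‖) Filter.atTop Filter.atTop) ∨
      (∃ ω : ℝ, 0 < ω ∧ (∀ t ∈ Set.Ico (0:ℝ) ω, HasDerivAt γ (f (γ t)) t) ∧
        Filter.Tendsto (fun t => ‖γ t‖) (nhdsWithin ω (Set.Iio ω)) Filter.atTop))

/-- The set of asymptotic backward directions `V_x^P ⊆ S¹`: unit vectors
`v_z = lim_{t → -∞} f(η^t z)/|f(η^t z)|` over points `z ∈ E_x⁻` satisfying `P`
(membership in `E_y⁺` or `E_∞⁺`). -/
def dirSet (f : Euc 2 → Euc 2) (x : Euc 2) (P : Euc 2 → Prop) : Set (Euc 2) :=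
  {v | ∃ (z : Euc 2) (γ : ℝ → Euc 2), γ 0 = z ∧
    (∀ t ∈ Set.Iic (0:ℝ), HasDerivAt γ (f (γ t)) t) ∧
    Filter.Tendsto γ Filter.atBot (nhds x) ∧ P z ∧
    Filter.Tendsto (fun t => (‖f (γ t)‖)⁻¹ • f (γ t)) Filter.atBot (nhds v)}

/-- `V_x^y` for a stationary point `y`. -/
def dirSetTo (f : Euc 2 → Euc 2) (x y : Euc 2) : Set (Euc 2) :=
  dirSet f x (InForwardBasin f y)

/-- `V_x^∞`. -/
def dirSetInf (f : Euc 2 → Euc 2) (x : Euc 2) : Set (Euc 2) :=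
  dirSet f x (EscapesToInfinity f)

open Topology in
/-- basic calculus of gradients -/
lemma gr_cont {ψ : Euc 2 → ℝ} (h : ContDiff ℝ 1 ψ) : Continuous (gradient ψ) := by
  unfold gradient
  exact (LinearIsometryEquiv.continuous _).comp (h.continuous_fderiv (by norm_num))

lemma gr_contDiff {ψ : Euc 2 → ℝ} (h : ContDiff ℝ 2 ψ) : ContDiff ℝ 1 (gradient ψ) := by
  unfold gradient
  exact (LinearIsometryEquiv.contDiff _).comp (h.fderiv_right (by norm_num))

lemma gr_has {ψ : Euc 2 → ℝ} (h : ContDiff ℝ 1 ψ) (x : Euc 2) :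
    HasGradientAt ψ (gradient ψ x) x :=
  ((h.differentiable (by norm_num)) x).hasGradientAt

lemma hg_add {φ ψ : Euc 2 → ℝ} {a b x : Euc 2} (h1 : HasGradientAt φ a x)
    (h2 : HasGradientAt ψ b x) : HasGradientAt (fun y => φ y + ψ y) (a + b) x := by
  rw [hasGradientAt_iff_hasFDerivAt] at *
  rw [map_add]
  exact h1.add h2

lemma hg_mul {φ ψ : Euc 2 → ℝ} {a b x : Euc 2} (h1 : HasGradientAt φ a x)
    (h2 : HasGradientAt ψ b x) :
    HasGradientAt (fun y => φ y * ψ y) (φ x • b + ψ x • a) x := by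
  rw [hasGradientAt_iff_hasFDerivAt] at *
  rw [map_add, map_smul, map_smul]
  exact h1.mul h2

lemma hg_const_mul {φ : Euc 2 → ℝ} {a x : Euc 2} (c : ℝ) (h1 : HasGradientAt φ a x) :
    HasGradientAt (fun y => c * φ y) (c • a) x := by
  have := hg_mul (hasGradientAt_const x c) h1
  simpa using this

lemma hg_sub {φ ψ : Euc 2 → ℝ} {a b x : Euc 2} (h1 : HasGradientAt φ a x)
    (h2 : HasGradientAt ψ b x) : HasGradientAt (fun y => φ y - ψ y) (a - b) x := by
  rw [hasGradientAt_iff_hasFDerivAt] at *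
  rw [map_sub]
  exact h1.sub h2

lemma hg_inner (e p x : Euc 2) : HasGradientAt (fun y => ⟪e, y - p⟫) e x := by
  rw [hasGradientAt_iff_hasFDerivAt]
  have h : HasFDerivAt (fun y : Euc 2 => innerSL ℝ e (y - p)) ((innerSL ℝ e).comp (ContinuousLinearMap.id ℝ (Euc 2))) x :=
    (innerSL ℝ e).hasFDerivAt.comp x ((hasFDerivAt_id x).sub_const p)
  exact h

/-- chain rule along a curve -/
lemma hg_curve {ψ : Euc 2 → ℝ} {γ : ℝ → Euc 2} {a v : Euc 2} {t : ℝ}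
    (h1 : HasGradientAt ψ a (γ t)) (h2 : HasDerivAt γ v t) :
    HasDerivAt (fun s => ψ (γ s)) ⟪a, v⟫ t := by
  rw [hasGradientAt_iff_hasFDerivAt] at h1
  exact h1.comp_hasDerivAt t h2

lemma homotopy_of_bdd {φ ψ : Euc 2 → ℝ} {f : Euc 2 → Euc 2} (hφ : ContDiff ℝ 1 φ)
    (hψ : ContDiff ℝ 1 ψ) (hf : ∀ x, gradient φ x = f x) (C : ℝ)
    (hC : ∀ x, ‖gradient ψ x - f x‖ ≤ C) (hprop : IsProper f) :
    IsProper (gradient ψ) ∧ ProperGradientHomotopic f (gradient ψ) := by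
  have hff : f = gradient φ := (funext hf).symm
  have cf : Continuous f := hff ▸ gr_cont hφ
  have cg := gr_cont hψ
  have key : ∀ M t x, t ∈ Icc (0:ℝ) 1 → ‖(1 - t) • f x + t • gradient ψ x‖ ≤ M →
      x ∈ f ⁻¹' closedBall 0 (M + C) := by
    intro M t x ht hM
    simp only [mem_preimage, mem_closedBall, dist_zero_right]
    have : f x = ((1 - t) • f x + t • gradient ψ x) - t • (gradient ψ x - f x) := by module
    rw [this]
    refine (norm_sub_le _ _).trans (add_le_add hM ?_)
    rw [norm_smul, Real.norm_of_nonneg ht.1]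
    nlinarith [hC x, norm_nonneg (gradient ψ x - f x), ht.1, ht.2]
  refine ⟨?_, fun t x => (1 - t) • f x + t • gradient ψ x, ⟨?_, ?_, ?_⟩, ?_, ?_⟩
  · intro K hK
    obtain ⟨M, hM⟩ := hK.isBounded.exists_norm_le
    refine (hprop _ (isCompact_closedBall 0 (M + C))).of_isClosed_subset (hK.isClosed.preimage cg) ?_
    intro x hx
    apply key M 1 x (by simp)
    simpa using hM _ hx
  · apply Continuous.continuousOn
    fun_prop
  · intro t ht
    refine ⟨fun x => (1 - t) * φ x + t * ψ x, by fun_prop, fun x => ?_⟩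
    have := hg_add (hg_const_mul (1 - t) (gr_has hφ x)) (hg_const_mul t (gr_has hψ x))
    rw [this.gradient, hf]
  · intro K hK
    obtain ⟨M, hM⟩ := hK.isBounded.exists_norm_le
    refine ((isCompact_Icc (a := (0:ℝ)) (b := 1)).prod (hprop _ (isCompact_closedBall 0 (M + C)))).of_isClosed_subset ?_ ?_
    · have c2 : Continuous (fun p : ℝ × Euc 2 => (1 - p.1) • f p.2 + p.1 • gradient ψ p.2) := by
        fun_prop
      exact (isClosed_Icc.preimage continuous_fst).inter (hK.isClosed.preimage c2)
    · rintro ⟨t, x⟩ ⟨h1, h2⟩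
      exact ⟨h1, key M t x h1 (hM _ h2)⟩
  · funext x; simp
  · funext x; simp

lemma approx_compact {φ : Euc 2 → ℝ} (hφ : ContDiff ℝ 1 φ) (R δ : ℝ) (hδ : 0 < δ) :
    ∃ g : Euc 2 → ℝ, ContDiff ℝ 2 g ∧
      ∀ x, ‖x‖ ≤ R → |g x - φ x| ≤ δ ∧ ‖gradient g x - gradient φ x‖ ≤ δ := by
  let χ : ContDiffBump (0 : Euc 2) := ⟨|R| + 1, |R| + 2, by positivity, by linarith⟩
  let φ₁ : Euc 2 → ℝ := fun x => χ x * φ x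
  have hφ₁ : ContDiff ℝ 1 φ₁ := χ.contDiff.mul hφ
  have hcs : HasCompactSupport φ₁ := χ.hasCompactSupport.mul_right
  have u1 : UniformContinuous φ₁ := hcs.uniformContinuous_of_continuous hφ₁.continuous
  have c2 := hφ₁.continuous_fderiv (by norm_num)
  have u2 : UniformContinuous (fderiv ℝ φ₁) :=
    (hcs.fderiv ℝ).uniformContinuous_of_continuous c2
  obtain ⟨r1, hr1, h1⟩ := Metric.uniformContinuous_iff.1 u1 δ hδ
  obtain ⟨r2, hr2, h2⟩ := Metric.uniformContinuous_iff.1 u2 δ hδ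
  have hr : 0 < min r1 r2 := lt_min hr1 hr2
  let ρ : ContDiffBump (0 : Euc 2) := ⟨min r1 r2 / 2, min r1 r2, half_pos hr, half_lt_self hr⟩
  let g := MeasureTheory.convolution (ρ.normed MeasureTheory.volume) φ₁
    (ContinuousLinearMap.lsmul ℝ ℝ) MeasureTheory.volume
  have hli : MeasureTheory.LocallyIntegrable (ρ.normed MeasureTheory.volume)
      (MeasureTheory.volume : MeasureTheory.Measure (Euc 2)) :=
    ρ.continuous_normed.locallyIntegrable
  have hg2 : ContDiff ℝ (2 : ℕ∞) g :=
    ρ.hasCompactSupport_normed.contDiff_convolution_left _ ρ.contDiff_normed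
      hφ₁.continuous.locallyIntegrable
  refine ⟨g, hg2, fun x hx => ?_⟩
  have hev : φ₁ =ᶠ[nhds x] φ := by
    have : ball (0 : Euc 2) (|R| + 1) ∈ nhds x := by
      apply isOpen_ball.mem_nhds
      simp only [mem_ball, dist_zero_right]
      linarith [le_abs_self R]
    filter_upwards [this] with y hy
    have : χ y = 1 := χ.one_of_mem_closedBall (ball_subset_closedBall hy)
    simp [φ₁, this]
  have hd := hcs.hasFDerivAt_convolution_right (ContinuousLinearMap.lsmul ℝ ℝ) hli hφ₁ x
  have hconv : (MeasureTheory.convolution (ρ.normed MeasureTheory.volume) (fderiv ℝ φ₁)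
      ((ContinuousLinearMap.lsmul ℝ ℝ).precompR (Euc 2)) MeasureTheory.volume) x =
      (MeasureTheory.convolution (ρ.normed MeasureTheory.volume) (fderiv ℝ φ₁)
      (ContinuousLinearMap.lsmul ℝ ℝ) MeasureTheory.volume) x := by
    unfold MeasureTheory.convolution
    congr 1
  rw [hconv] at hd
  constructor
  · rw [← hev.eq_of_nhds, ← Real.dist_eq]
    refine ρ.dist_normed_convolution_le hφ₁.continuous.aestronglyMeasurable ?_
    intro y hy
    exact (h1 (lt_of_lt_of_le hy (min_le_left _ _))).le
  · have e1 : gradient g x - gradient φ x =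
        (InnerProductSpace.toDual ℝ (Euc 2)).symm (fderiv ℝ g x - fderiv ℝ φ₁ x) := by
      rw [map_sub, ← hev.gradient_eq]; rfl
    rw [e1, LinearIsometryEquiv.norm_map, ← dist_eq_norm]
    have := hd.fderiv
    change fderiv ℝ g x = _ at this
    rw [this]
    refine ρ.dist_normed_convolution_le c2.aestronglyMeasurable ?_
    intro y hy
    exact (h2 (lt_of_lt_of_le hy (min_le_right _ _))).le

/-- smooth step function -/
def stepFn (n : ℕ) (x : Euc 2) : ℝ := Real.smoothTransition (‖x‖ ^ 2 - n)

lemma stepFn_contDiff (n : ℕ) : ContDiff ℝ 2 (stepFn n) := by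
  unfold stepFn
  exact Real.smoothTransition.contDiff.comp ((contDiff_norm_sq ℝ).sub contDiff_const)

lemma stepFn_one {n : ℕ} {x : Euc 2} (h : (n:ℝ) + 1 ≤ ‖x‖ ^ 2) : stepFn n x = 1 :=
  Real.smoothTransition.one_of_one_le (by linarith)

lemma stepFn_zero {n : ℕ} {x : Euc 2} (h : ‖x‖ ^ 2 ≤ n) : stepFn n x = 0 :=
  Real.smoothTransition.zero_of_nonpos (by linarith)

lemma stepFn_grad {n : ℕ} {x : Euc 2} (h : (n:ℝ) + 1 ≤ ‖x‖ ^ 2) : gradient (stepFn n) x = 0 := by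
  have : IsLocalMax (stepFn n) x := by
    refine Filter.Eventually.of_forall fun y => ?_
    rw [stepFn_one h]
    exact Real.smoothTransition.le_one _
  unfold gradient
  rw [this.fderiv_eq_zero, map_zero]

/-- gluing of approximations -/
def glue (a : ℕ → Euc 2 → ℝ) : ℕ → Euc 2 → ℝ
  | 0 => a 0
  | N + 1 => fun x => glue a N x + stepFn N x * (a (N + 1) x - a N x)

lemma glue_contDiff {a : ℕ → Euc 2 → ℝ} (ha : ∀ n, ContDiff ℝ 2 (a n)) (N : ℕ) :
    ContDiff ℝ 2 (glue a N) := by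
  induction N with
  | zero => exact ha 0
  | succ N ih => exact ih.add ((stepFn_contDiff N).mul ((ha _).sub (ha _)))

lemma glue_grad_succ {a : ℕ → Euc 2 → ℝ} (ha : ∀ n, ContDiff ℝ 2 (a n)) (N : ℕ) (x : Euc 2) :
    gradient (glue a (N + 1)) x = gradient (glue a N) x +
      (stepFn N x • (gradient (a (N + 1)) x - gradient (a N) x) +
        (a (N + 1) x - a N x) • gradient (stepFn N) x) := by
  have k : ∀ {g : Euc 2 → ℝ}, ContDiff ℝ 2 g → HasGradientAt g (gradient g x) x :=
    fun h => gr_has (h.of_le (by norm_num)) x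
  exact (hg_add (k (glue_contDiff ha N)) (hg_mul (k (stepFn_contDiff N))
    (hg_sub (k (ha (N + 1))) (k (ha N))))).gradient

lemma glue_grad_far {a : ℕ → Euc 2 → ℝ} (ha : ∀ n, ContDiff ℝ 2 (a n)) (N : ℕ) (x : Euc 2)
    (hx : (N : ℝ) ≤ ‖x‖ ^ 2) : gradient (glue a N) x = gradient (a N) x := by
  induction N with
  | zero => rfl
  | succ N ih =>
    push_cast at hx
    rw [glue_grad_succ ha, ih (by linarith), stepFn_one hx, stepFn_grad hx]
    simp

lemma glue_stable {a : ℕ → Euc 2 → ℝ} (N k : ℕ) (x : Euc 2)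
    (hx : ‖x‖ ^ 2 ≤ N) : glue a (N + k) x = glue a N x := by
  induction k with
  | zero => rfl
  | succ k ih =>
    rw [← add_assoc]
    change glue a (N + k) x + stepFn (N + k) x * _ = _
    rw [ih, stepFn_zero (by push_cast; linarith [(Nat.cast_nonneg k : (0:ℝ) ≤ k)])]
    simp

lemma exists_smooth {φ : Euc 2 → ℝ} (hφ : ContDiff ℝ 1 φ) :
    ∃ ψ : Euc 2 → ℝ, ContDiff ℝ 2 ψ ∧ ∀ x, ‖gradient ψ x - gradient φ x‖ ≤ 2 := by
  have hD : ∀ n : ℕ, ∃ D : ℝ, 0 ≤ D ∧ ∀ x : Euc 2, ‖x‖ ≤ n + 2 → ‖gradient (stepFn n) x‖ ≤ D := by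
    intro n
    obtain ⟨C, hC⟩ := (isCompact_closedBall (0 : Euc 2) (n + 2)).exists_bound_of_continuousOn
      (gr_cont ((stepFn_contDiff n).of_le (by norm_num))).continuousOn
    refine ⟨|C|, abs_nonneg _, fun x hx => (hC x ?_).trans (le_abs_self C)⟩
    simpa using hx
  choose D hD0 hD using hD
  let S : ℕ → ℝ := fun n => ∑ j ∈ Finset.range (n + 1), D j
  have hS0 : ∀ n, 0 ≤ S n := fun n => Finset.sum_nonneg fun j _ => hD0 j
  have hDS : ∀ n, D n ≤ S n := fun n =>
    Finset.single_le_sum (fun j _ => hD0 j) (Finset.self_mem_range_succ n)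
  have hSS : ∀ n, S n ≤ S (n + 1) := fun n => by
    simp only [S]; rw [Finset.sum_range_succ _ (n + 1)]; linarith [hD0 (n + 1)]
  let δ : ℕ → ℝ := fun n => 1 / (4 * (1 + S n))
  have hδ : ∀ n, 0 < δ n := fun n => by have := hS0 n; positivity
  choose a ha hab using fun n : ℕ => approx_compact hφ (n + 2) (δ n) (hδ n)
  have hδ1 : ∀ n, δ n ≤ 1 / 4 := fun n => by
    have := hS0 n
    apply one_div_le_one_div_of_le <;> linarith
  have hδD : ∀ n, δ n * D n ≤ 1 / 4 := fun n => by
    have h0 := hS0 n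
    have := hDS n
    simp only [δ]
    rw [div_mul_eq_mul_div, div_le_div_iff₀ (by positivity) (by norm_num)]
    linarith
  have hδD' : ∀ n, δ (n + 1) * D n ≤ 1 / 4 := fun n => by
    have h0 := hS0 (n + 1)
    have := hDS n
    have := hSS n
    simp only [δ]
    rw [div_mul_eq_mul_div, div_le_div_iff₀ (by positivity) (by norm_num)]
    linarith
  let ψ : Euc 2 → ℝ := fun x => glue a (⌊‖x‖ ^ 2⌋₊ + 1) x
  have hψ : ∀ (N : ℕ) (x : Euc 2), ‖x‖ ^ 2 < N → ψ x = glue a N x := by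
    intro N x hx
    have h1 : ⌊‖x‖ ^ 2⌋₊ < N := (Nat.floor_lt (by positivity)).2 hx
    obtain ⟨k, rfl⟩ := Nat.exists_eq_add_of_le (Nat.succ_le_of_lt h1)
    have h2 := Nat.lt_floor_add_one (‖x‖ ^ 2)
    exact (glue_stable (⌊‖x‖ ^ 2⌋₊ + 1) k x (by push_cast; exact h2.le)).symm
  have hev : ∀ (N : ℕ) (x : Euc 2), ‖x‖ ^ 2 < N → ψ =ᶠ[nhds x] glue a N := by
    intro N x hx
    have : {y : Euc 2 | ‖y‖ ^ 2 < N} ∈ nhds x :=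
      (isOpen_lt (by fun_prop) continuous_const).mem_nhds hx
    filter_upwards [this] with y hy using hψ N y hy
  refine ⟨ψ, ?_, ?_⟩
  · rw [contDiff_iff_contDiffAt]
    intro x
    have := hev (⌊‖x‖ ^ 2⌋₊ + 1) x (by push_cast; exact Nat.lt_floor_add_one _)
    exact (glue_contDiff ha _).contDiffAt.congr_of_eventuallyEq this
  · intro x
    set n := ⌊‖x‖ ^ 2⌋₊ with hn
    have hlt : ‖x‖ ^ 2 < n + 1 := Nat.lt_floor_add_one _
    have hle : (n : ℝ) ≤ ‖x‖ ^ 2 := Nat.floor_le (by positivity)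
    have hx2 : ‖x‖ ≤ n + 2 := by nlinarith [norm_nonneg x, (Nat.cast_nonneg n : (0:ℝ) ≤ n)]
    rw [(hev (n + 1) x (by push_cast; exact hlt)).gradient_eq, glue_grad_succ ha, glue_grad_far ha n x hle]
    obtain ⟨p1, p2⟩ := hab n x hx2
    obtain ⟨q1, q2⟩ := hab (n + 1) x (by push_cast; linarith)
    have t0 : 0 ≤ stepFn n x := Real.smoothTransition.nonneg _
    have t1 : stepFn n x ≤ 1 := Real.smoothTransition.le_one _
    have e : gradient (a n) x + (stepFn n x • (gradient (a (n + 1)) x - gradient (a n) x) +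
        (a (n + 1) x - a n x) • gradient (stepFn n) x) - gradient φ x =
        (gradient (a n) x - gradient φ x) +
        stepFn n x • ((gradient (a (n + 1)) x - gradient φ x) - (gradient (a n) x - gradient φ x)) +
        ((a (n + 1) x - φ x) - (a n x - φ x)) • gradient (stepFn n) x := by
      rw [sub_sub_sub_cancel_right, sub_sub_sub_cancel_right]; module
    rw [e]
    have b1 : ‖stepFn n x • ((gradient (a (n + 1)) x - gradient φ x) - (gradient (a n) x - gradient φ x))‖
        ≤ 1 / 2 := by
      rw [norm_smul, Real.norm_of_nonneg t0]
      have := norm_sub_le (gradient (a (n + 1)) x - gradient φ x) (gradient (a n) x - gradient φ x)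
      have h3 := hδ1 n
      have h4 := hδ1 (n + 1)
      refine (mul_le_of_le_one_left (norm_nonneg _) t1).trans ?_
      linarith
    have b2 : ‖((a (n + 1) x - φ x) - (a n x - φ x)) • gradient (stepFn n) x‖ ≤ 1 / 2 := by
      rw [norm_smul]
      have h5 : ‖(a (n + 1) x - φ x) - (a n x - φ x)‖ ≤ δ (n + 1) + δ n :=
        (norm_sub_le _ _).trans (add_le_add q1 p1)
      calc _ ≤ (δ (n + 1) + δ n) * D n := by
            apply mul_le_mul h5 (hD n x hx2) (norm_nonneg _)
            linarith [hδ n, hδ (n + 1)]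
        _ ≤ _ := by linarith [hδD n, hδD' n]
    refine (norm_add_le _ _).trans ?_
    have := norm_add_le (gradient (a n) x - gradient φ x) (stepFn n x • ((gradient (a (n + 1)) x - gradient φ x) - (gradient (a n) x - gradient φ x)))
    have h3 := hδ1 n
    linarith

lemma lower_bound {T : Euc 2 →L[ℝ] Euc 2} (h : Function.Bijective T) :
    ∃ m : ℝ, 0 < m ∧ ∀ z, m * ‖z‖ ≤ ‖T z‖ := by
  obtain ⟨K, hK, hT⟩ := T.toLinearMap.exists_antilipschitzWith (LinearMap.ker_eq_bot.2 h.1)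
  refine ⟨(K:ℝ)⁻¹, by positivity, fun z => ?_⟩
  have := hT.le_mul_dist z 0
  simp only [dist_zero_right, map_zero, ContinuousLinearMap.coe_coe] at this
  rw [inv_mul_le_iff₀ (by exact_mod_cast hK)]
  exact this

lemma exists_regular {F : Euc 2 → Euc 2} (hF : ContDiff ℝ 1 F) :
    ∃ a : Euc 2, ‖a‖ ≤ 1 ∧ ∀ p, F p + a = 0 → Function.Bijective (fderiv ℝ F p) := by
  let s : Set (Euc 2) := {p | (fderiv ℝ F p).det = 0}
  have h0 : MeasureTheory.volume (F '' s) = 0 := by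
    refine MeasureTheory.addHaar_image_eq_zero_of_det_fderivWithin_eq_zero MeasureTheory.volume
      (f' := fun x => fderiv ℝ F x) (fun x _ => ?_) (fun x hx => hx)
    exact ((hF.differentiable (by norm_num)) x).hasFDerivAt.hasFDerivWithinAt
  have h1 : ∃ y ∈ ball (0 : Euc 2) 1, y ∉ F '' s := by
    by_contra! hcon
    have := MeasureTheory.measure_mono_null (μ := MeasureTheory.volume) (s := ball (0 : Euc 2) 1) hcon h0
    exact (Metric.measure_ball_pos MeasureTheory.volume (0 : Euc 2) one_pos).ne' this
  obtain ⟨y, hy, hys⟩ := h1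
  refine ⟨-y, by simpa using (mem_ball_zero_iff.1 hy).le, fun p hp => ?_⟩
  have hFp : F p = y := by simpa [← sub_eq_add_neg, sub_eq_zero] using hp
  have hdet : (fderiv ℝ F p).det ≠ 0 := fun h => hys ⟨p, h, hFp⟩
  have hu : IsUnit (LinearMap.det (fderiv ℝ F p).toLinearMap) := isUnit_iff_ne_zero.2 hdet
  have := (LinearMap.isUnit_iff_isUnit_det _).2 hu
  exact (Module.End.isUnit_iff _).1 this

lemma finite_zeros {F : Euc 2 → Euc 2} (hF : ContDiff ℝ 1 F) (hc : IsCompact {x | F x = 0})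
    (hb : ∀ p, F p = 0 → Function.Bijective (fderiv ℝ F p)) : {x | F x = 0}.Finite := by
  by_contra hinf
  obtain ⟨p, hp, hacc⟩ := Set.Infinite.exists_accPt_of_subset_isCompact hinf hc Subset.rfl
  have hT := (hb p hp).1
  obtain ⟨K, -, hK⟩ := (fderiv ℝ F p).toLinearMap.exists_antilipschitzWith
    (LinearMap.ker_eq_bot.2 hT)
  have := ((hF.differentiable (by norm_num)) p).hasFDerivAt.eventually_ne (c := 0) ⟨K, hK⟩
  rw [accPt_iff_frequently_nhdsNE] at hacc
  exact hacc (this.mono fun x hx h => hx h)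

/-- `ψ` is exactly quadratic (nondegenerate) near `p`. -/
def QuadAt (ψ : Euc 2 → ℝ) (p : Euc 2) : Prop :=
  ∃ H : Euc 2 →L[ℝ] Euc 2, (∀ x y, ⟪H x, y⟫ = ⟪x, H y⟫) ∧ Function.Bijective H ∧
    ∀ᶠ x in nhds p, ψ x = ψ p + ⟪H (x - p), x - p⟫ / 2

lemma hess_symm {ψ : Euc 2 → ℝ} (hψ : ContDiff ℝ 2 ψ) (p x y : Euc 2) :
    ⟪fderiv ℝ (gradient ψ) p x, y⟫ = ⟪x, fderiv ℝ (gradient ψ) p y⟫ := by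
  have hs : IsSymmSndFDerivAt ℝ ψ p := hψ.contDiffAt.isSymmSndFDerivAt (by simp)
  have hd : DifferentiableAt ℝ (fderiv ℝ ψ) p :=
    (hψ.fderiv_right (m := 1) (by norm_num)).differentiable (by norm_num) p
  have key : ∀ v w, ⟪fderiv ℝ (gradient ψ) p v, w⟫ = fderiv ℝ (fderiv ℝ ψ) p v w := by
    intro v w
    have h1 : HasFDerivAt (gradient ψ) (fderiv ℝ (gradient ψ) p) p :=
      ((gr_contDiff hψ).differentiable (by norm_num) p).hasFDerivAt
    have h2 := h1.inner ℝ (hasFDerivAt_const w p)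
    have h3 := hd.hasFDerivAt.clm_apply (hasFDerivAt_const w p)
    have e : (fun x => ⟪gradient ψ x, w⟫) = fun x => fderiv ℝ ψ x w := by
      funext x
      exact inner_gradient_left
    rw [e] at h2
    have := congrArg (fun T => T v) (h2.unique h3)
    simpa using this
  rw [key, hs x y, real_inner_comm, key]

lemma quad_grad {H : Euc 2 →L[ℝ] Euc 2} (hH : ∀ x y, ⟪H x, y⟫ = ⟪x, H y⟫) (p x : Euc 2) :
    HasGradientAt (fun y => ⟪H (y - p), y - p⟫ / 2) (H (x - p)) x := by
  rw [hasGradientAt_iff_hasFDerivAt]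
  have h1 : HasFDerivAt (fun y : Euc 2 => y - p) (ContinuousLinearMap.id ℝ (Euc 2)) x :=
    (hasFDerivAt_id x).sub_const p
  have h2 : HasFDerivAt (fun y : Euc 2 => H (y - p)) H x := by
    exact (H.hasFDerivAt.comp x h1).congr_fderiv (by ext; simp)
  have h3 := ((h2.inner ℝ h1).mul_const (1/2 : ℝ))
  have e : (fun y : Euc 2 => ⟪H (y - p), y - p⟫ / 2) = fun y => ⟪H (y - p), y - p⟫ * (1/2) := by
    funext y; ring
  rw [e]
  refine h3.congr_fderiv ?_
  ext v
  simp only [smul_apply, ContinuousLinearMap.comp_apply,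
    ContinuousLinearMap.prod_apply, fderivInnerCLM_apply, ContinuousLinearMap.id_apply,
    InnerProductSpace.toDual_apply_apply, smul_eq_mul]
  rw [hH v (x - p), real_inner_comm (H (x - p)) v]
  ring

lemma quad_contDiff (H : Euc 2 →L[ℝ] Euc 2) (p : Euc 2) :
    ContDiff ℝ 2 (fun y => ⟪H (y - p), y - p⟫ / 2) := by
  have h1 : ContDiff ℝ 2 (fun y : Euc 2 => y - p) := contDiff_id.sub contDiff_const
  exact ((H.contDiff.comp h1).inner ℝ h1).div_const 2

lemma quad_mod {ψ : Euc 2 → ℝ} (hψ : ContDiff ℝ 2 ψ) {p : Euc 2} (hp : gradient ψ p = 0)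
    (hb : Function.Bijective (fderiv ℝ (gradient ψ) p)) {ρ : ℝ} (hρ : 0 < ρ) :
    ∃ ε₀ : ℝ, 0 < ε₀ ∧ ∀ ε, |ε| < ε₀ → ∃ ψ' : Euc 2 → ℝ, ContDiff ℝ 2 ψ' ∧
      (∀ x, ρ ≤ ‖x - p‖ → ψ' x = ψ x) ∧ (∀ x, gradient ψ' x = 0 ↔ gradient ψ x = 0) ∧
      QuadAt ψ' p ∧ ψ' p = ψ p + ε := by
  set H := fderiv ℝ (gradient ψ) p with hHdef
  have hH : ∀ x y, ⟪H x, y⟫ = ⟪x, H y⟫ := hess_symm hψ p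
  obtain ⟨m, hm, hmb⟩ := lower_bound hb
  let β : ContDiffBump (0 : Euc 2) := ⟨1, 2, by norm_num, by norm_num⟩
  have hβ1 : ContDiff ℝ 1 β := β.contDiff
  have hβ2 : ContDiff ℝ 2 β := β.contDiff
  obtain ⟨C, hC⟩ : ∃ C : ℝ, ∀ y, ‖gradient β y‖ ≤ C := by
    have hcs : HasCompactSupport (gradient β) := by
      have h1 := β.hasCompactSupport.fderiv ℝ
      exact h1.comp_left (g := (InnerProductSpace.toDual ℝ (Euc 2)).symm) (map_zero _)
    exact hcs.exists_bound_of_continuous (gr_cont hβ1)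
  have hC0 : 0 ≤ C := (norm_nonneg _).trans (hC 0)
  have hβg0 : ∀ y : Euc 2, ‖y‖ ≤ 1 → gradient β y = 0 := by
    intro y hy
    have h1 : β y = 1 := β.one_of_mem_closedBall (by simpa using hy)
    have : IsLocalMax β y := Filter.Eventually.of_forall fun z => by rw [h1]; exact β.le_one
    unfold gradient
    rw [this.fderiv_eq_zero, map_zero]
  let η : ℝ := m / (4 * (1 + 2 * C))
  have hη : 0 < η := by positivity
  have hη1 : η * (1 + 2 * C) = m / 4 := by simp only [η]; field_simp
  have hηm : η ≤ m / 4 := by nlinarith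
  -- linearisation
  have hlin : ∀ᶠ x in nhds p, ‖gradient ψ x - H (x - p)‖ ≤ η * ‖x - p‖ := by
    have h1 := ((gr_contDiff hψ).differentiable (by norm_num) p).hasFDerivAt.isLittleO.def hη
    filter_upwards [h1] with x hx
    simpa [hp] using hx
  obtain ⟨r₀, hr₀, hball⟩ := Metric.eventually_nhds_iff.1 hlin
  let r := min r₀ ρ / 4
  have hr : 0 < r := by have := lt_min hr₀ hρ; simp only [r]; positivity
  have hr1 : 2 * r < r₀ := by
    have := min_le_left r₀ ρ
    simp only [r]; linarith [lt_min hr₀ hρ]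
  have hr2 : 2 * r < ρ := by
    have := min_le_right r₀ ρ
    simp only [r]; linarith [lt_min hr₀ hρ]
  have hb1 : ∀ x, ‖x - p‖ ≤ 2 * r → ‖gradient ψ x - H (x - p)‖ ≤ η * ‖x - p‖ := by
    intro x hx
    exact hball (by rw [dist_eq_norm]; linarith)
  let q : Euc 2 → ℝ := fun y => ⟪H (y - p), y - p⟫ / 2
  have hqg : ∀ x, HasGradientAt q (H (x - p)) x := quad_grad hH p
  have hqc : ContDiff ℝ 2 q := quad_contDiff H p
  have hψ1 : ContDiff ℝ 1 ψ := hψ.of_le (by norm_num)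
  let w : Euc 2 → ℝ := fun y => (ψ p + q y) - ψ y
  have hwg : ∀ x, HasGradientAt w (H (x - p) - gradient ψ x) x := by
    intro x
    have := hg_sub (hg_add (hasGradientAt_const x (ψ p)) (hqg x)) (gr_has hψ1 x)
    simpa using this
  have hw : ∀ x, ‖x - p‖ ≤ 2 * r → |w x| ≤ η * ‖x - p‖ * ‖x - p‖ := by
    intro x hx
    have hwp : w p = 0 := by simp [w, q]
    have := Convex.norm_image_sub_le_of_norm_hasFDerivWithin_le (𝕜 := ℝ) (f := w)
      (s := closedBall p ‖x - p‖) (C := η * ‖x - p‖) (x := p) (y := x)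
      (fun z _ => ((hasGradientAt_iff_hasFDerivAt).1 (hwg z)).hasFDerivWithinAt)
      (fun z hz => ?_) (convex_closedBall _ _) (by simp) (by simp [dist_eq_norm])
    · rw [hwp, sub_zero] at this
      exact this
    · rw [mem_closedBall, dist_eq_norm] at hz
      rw [LinearIsometryEquiv.norm_map, norm_sub_rev]
      refine (hb1 z (hz.trans hx)).trans ?_
      gcongr
  refine ⟨r ^ 2 * (m / (4 * (C + 1))), by positivity, fun ε hε => ?_⟩
  let B : Euc 2 → ℝ := fun x => β (r⁻¹ • (x - p))
  have hBg : ∀ x, HasGradientAt B (r⁻¹ • gradient β (r⁻¹ • (x - p))) x := by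
    intro x
    rw [hasGradientAt_iff_hasFDerivAt]
    have h1 : HasFDerivAt (fun y : Euc 2 => r⁻¹ • (y - p))
        (r⁻¹ • ContinuousLinearMap.id ℝ (Euc 2)) x :=
      ((hasFDerivAt_id x).sub_const p).const_smul r⁻¹
    have h2 := (gr_has hβ1 (r⁻¹ • (x - p)))
    rw [hasGradientAt_iff_hasFDerivAt] at h2
    refine (h2.comp x h1).congr_fderiv ?_
    ext v
    simp [inner_smul_left, inner_smul_right]
  have hBc : ContDiff ℝ 2 B := hβ2.comp (by fun_prop : ContDiff ℝ 2 fun x : Euc 2 => r⁻¹ • (x - p))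
  have hnorm : ∀ x : Euc 2, ‖r⁻¹ • (x - p)‖ = ‖x - p‖ / r := by
    intro x
    rw [norm_smul, Real.norm_of_nonneg (by positivity)]; field_simp
  have hB1 : ∀ x, ‖x - p‖ ≤ r → B x = 1 := by
    intro x hx
    apply β.one_of_mem_closedBall
    rw [mem_closedBall, dist_zero_right, hnorm]
    exact (div_le_one hr).2 hx
  have hB0 : ∀ x, 2 * r ≤ ‖x - p‖ → B x = 0 := by
    intro x hx
    apply β.zero_of_le_dist
    rw [dist_zero_right, hnorm, le_div_iff₀ hr]
    exact hx
  let ψ' : Euc 2 → ℝ := fun x => ψ x + B x * (w x + ε)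
  have hψ'c : ContDiff ℝ 2 ψ' := by
    refine hψ.add (hBc.mul ((ContDiff.sub (contDiff_const.add hqc) hψ).add contDiff_const))
  have hψ'g : ∀ x, gradient ψ' x = gradient ψ x +
      (B x • (H (x - p) - gradient ψ x) + (w x + ε) • r⁻¹ • gradient β (r⁻¹ • (x - p))) := by
    intro x
    have h1 := hg_add (hwg x) (hasGradientAt_const x ε)
    rw [add_zero] at h1
    exact (hg_add (gr_has hψ1 x) (hg_mul (hBg x) h1)).gradient
  have hout : ∀ x, 2 * r < ‖x - p‖ → ψ' =ᶠ[nhds x] ψ := by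
    intro x hx
    have : {y : Euc 2 | 2 * r < ‖y - p‖} ∈ nhds x :=
      (isOpen_lt continuous_const (by fun_prop)).mem_nhds hx
    filter_upwards [this] with y hy
    simp [ψ', hB0 y (le_of_lt hy)]
  refine ⟨ψ', hψ'c, ?_, ?_, ?_, ?_⟩
  · intro x hx
    simp [ψ', hB0 x (by linarith)]
  · intro x
    rcases lt_or_ge (2 * r) ‖x - p‖ with h | h
    · rw [(hout x h).gradient_eq]
    rcases eq_or_ne x p with rfl | hne
    · rw [hψ'g]
      simp [hp, hβg0]
    have hpos : 0 < ‖x - p‖ := norm_pos_iff.2 (sub_ne_zero.2 hne)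
    have hHm := hmb (x - p)
    have e1 : ∀ v : Euc 2, ‖v - H (x - p)‖ ≤ m / 2 * ‖x - p‖ → v ≠ 0 := by
      rintro v hv rfl
      rw [zero_sub, norm_neg] at hv
      nlinarith
    have hn2 : gradient ψ x ≠ 0 := by
      apply e1
      refine (hb1 x h).trans ?_
      gcongr
      linarith
    have hn1 : gradient ψ' x ≠ 0 := by
      apply e1
      rw [hψ'g]
      have e2 : gradient ψ x + (B x • (H (x - p) - gradient ψ x) +
          (w x + ε) • r⁻¹ • gradient β (r⁻¹ • (x - p))) - H (x - p) =
          (1 - B x) • (gradient ψ x - H (x - p)) +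
          (w x + ε) • r⁻¹ • gradient β (r⁻¹ • (x - p)) := by module
      rw [e2]
      refine (norm_add_le _ _).trans ?_
      have b1 : ‖(1 - B x) • (gradient ψ x - H (x - p))‖ ≤ η * ‖x - p‖ := by
        rw [norm_smul, Real.norm_of_nonneg (sub_nonneg.2 β.le_one)]
        refine (mul_le_of_le_one_left (norm_nonneg _) ?_).trans (hb1 x h)
        have : 0 ≤ B x := β.nonneg
        linarith
      have b2 : ‖(w x + ε) • r⁻¹ • gradient β (r⁻¹ • (x - p))‖ ≤
          (η * (2 * C) + m / 4) * ‖x - p‖ := by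
        rcases le_or_gt ‖x - p‖ r with h3 | h3
        · rw [hβg0 _ (by rw [hnorm]; exact (div_le_one hr).2 h3)]
          simp only [smul_zero, norm_zero]
          positivity
        · rw [norm_smul, norm_smul, Real.norm_of_nonneg (by positivity : 0 ≤ r⁻¹)]
          have c1 : ‖w x + ε‖ ≤ η * ‖x - p‖ * ‖x - p‖ + |ε| :=
            (norm_add_le _ _).trans (add_le_add (hw x h) le_rfl)
          have c2 : |ε| * (C + 1) ≤ r ^ 2 * (m / 4) := by
            have : r ^ 2 * (m / 4) = r ^ 2 * (m / (4 * (C + 1))) * (C + 1) := by field_simp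
            rw [this]
            gcongr
          have c3 : ‖w x + ε‖ * C ≤ (η * (2 * C) + m / 4) * ‖x - p‖ * r := by
            calc _ ≤ (η * ‖x - p‖ * ‖x - p‖ + |ε|) * C := by gcongr
              _ = η * ‖x - p‖ * C * ‖x - p‖ + |ε| * C := by ring
              _ ≤ η * ‖x - p‖ * C * (2 * r) + r ^ 2 * (m / 4) := by
                  refine add_le_add ?_ ?_
                  · exact mul_le_mul_of_nonneg_left h (by positivity)
                  · nlinarith [abs_nonneg ε]
              _ ≤ η * ‖x - p‖ * C * (2 * r) + ‖x - p‖ * r * (m / 4) := by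
                  gcongr
                  nlinarith
              _ = _ := by ring
          calc _ ≤ ‖w x + ε‖ * (r⁻¹ * C) := by gcongr; exact hC _
            _ = ‖w x + ε‖ * C / r := by field_simp
            _ ≤ _ := (div_le_iff₀ hr).2 c3
      nlinarith
    exact ⟨fun h => absurd h hn1, fun h => absurd h hn2⟩
  · have hψ'p : ψ' p = ψ p + ε := by simp [ψ', hB1 p (by simpa using hr.le), w, q]
    refine ⟨H, hH, hb, ?_⟩
    filter_upwards [ball_mem_nhds p hr] with x hx
    rw [mem_ball, dist_eq_norm] at hx
    rw [hψ'p]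
    simp only [ψ', hB1 x hx.le, w, q]
    ring
  · simp [ψ', hB1 p (by simpa using hr.le), w, q]

lemma bdd_of_eq_out {ψ ψ' : Euc 2 → ℝ} (h : ContDiff ℝ 1 ψ) (h' : ContDiff ℝ 1 ψ') {p : Euc 2}
    {ρ : ℝ} (ho : ∀ x, ρ ≤ ‖x - p‖ → ψ' x = ψ x) :
    ∃ C, ∀ x, ‖gradient ψ' x - gradient ψ x‖ ≤ C := by
  obtain ⟨C, hC⟩ := (isCompact_closedBall p ρ).exists_bound_of_continuousOn
    ((gr_cont h').sub (gr_cont h)).continuousOn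
  refine ⟨max C 0, fun x => ?_⟩
  by_cases hx : ‖x - p‖ ≤ ρ
  · exact (hC x (by simpa [dist_eq_norm] using hx)).trans (le_max_left _ _)
  · have e : ψ' =ᶠ[nhds x] ψ := by
      have : {y : Euc 2 | ρ < ‖y - p‖} ∈ nhds x :=
        (isOpen_lt continuous_const (by fun_prop)).mem_nhds (not_le.1 hx)
      filter_upwards [this] with y hy using ho y (le_of_lt hy)
    rw [e.gradient_eq]
    simp

lemma QuadAt.congr {ψ ψ' : Euc 2 → ℝ} {p : Euc 2} (h : QuadAt ψ p) (e : ψ' =ᶠ[nhds p] ψ) :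
    QuadAt ψ' p := by
  obtain ⟨H, h1, h2, h3⟩ := h
  refine ⟨H, h1, h2, ?_⟩
  filter_upwards [h3, e] with x hx ex
  rw [ex, hx, e.eq_of_nhds]

lemma quad_gradient {ψ : Euc 2 → ℝ} {p : Euc 2} {H : Euc 2 →L[ℝ] Euc 2}
    (hH : ∀ x y, ⟪H x, y⟫ = ⟪x, H y⟫) (h : ∀ᶠ x in nhds p, ψ x = ψ p + ⟪H (x - p), x - p⟫ / 2) :
    ∀ᶠ x in nhds p, gradient ψ x = H (x - p) := by
  filter_upwards [eventually_eventually_nhds.2 h] with x hx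
  have e : ψ =ᶠ[nhds x] fun y => ψ p + ⟪H (y - p), y - p⟫ / 2 := hx
  rw [e.gradient_eq]
  have := (hg_add (hasGradientAt_const x (ψ p)) (quad_grad hH p x)).gradient
  rw [this, zero_add]

lemma quad_fderiv {ψ : Euc 2 → ℝ} {p : Euc 2} {H : Euc 2 →L[ℝ] Euc 2}
    (hH : ∀ x y, ⟪H x, y⟫ = ⟪x, H y⟫) (h : ∀ᶠ x in nhds p, ψ x = ψ p + ⟪H (x - p), x - p⟫ / 2) :
    fderiv ℝ (gradient ψ) p = H := by
  have e : gradient ψ =ᶠ[nhds p] fun x => H (x - p) := quad_gradient hH h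
  rw [e.fderiv_eq]
  have h1 : HasFDerivAt (fun y : Euc 2 => y - p) (ContinuousLinearMap.id ℝ (Euc 2)) p :=
    (hasFDerivAt_id p).sub_const p
  exact ((H.hasFDerivAt.comp p h1).congr_fderiv (by ext; simp)).fderiv

lemma QuadAt.bij {ψ : Euc 2 → ℝ} {p : Euc 2} (h : QuadAt ψ p) :
    Function.Bijective (fderiv ℝ (gradient ψ) p) := by
  obtain ⟨H, h1, h2, h3⟩ := h
  rw [quad_fderiv h1 h3]
  exact h2

lemma QuadAt.zero {ψ : Euc 2 → ℝ} {p : Euc 2} (h : QuadAt ψ p) : gradient ψ p = 0 := by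
  obtain ⟨H, h1, h2, h3⟩ := h
  rw [(quad_gradient h1 h3).self_of_nhds]
  simp

lemma eventuallyEq_out {ψ ψ' : Euc 2 → ℝ} {p x : Euc 2} {ρ : ℝ}
    (ho : ∀ x, ρ ≤ ‖x - p‖ → ψ' x = ψ x) (hx : ρ < ‖x - p‖) : ψ' =ᶠ[nhds x] ψ := by
  have : {y : Euc 2 | ρ < ‖y - p‖} ∈ nhds x :=
    (isOpen_lt continuous_const (by fun_prop)).mem_nhds hx
  filter_upwards [this] with y hy using ho y (le_of_lt hy)

lemma exists_sep (Z : Finset (Euc 2)) (p : Euc 2) :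
    ∃ ρ > 0, ∀ x ∈ Z, x ≠ p → ρ < ‖x - p‖ := by
  have h : ∀ᶠ ρ in nhdsWithin (0:ℝ) (Ioi 0), ∀ x ∈ Z, x ≠ p → ρ < ‖x - p‖ := by
    rw [Filter.eventually_all_finset]
    intro x _
    by_cases hx : x = p
    · simp [hx]
    · have : 0 < ‖x - p‖ := norm_pos_iff.2 (sub_ne_zero.2 hx)
      filter_upwards [nhdsWithin_le_nhds (Iio_mem_nhds this)] with ρ hρ _ using hρ
  obtain ⟨ρ, h1, h2⟩ := (h.and self_mem_nhdsWithin).exists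
  exact ⟨ρ, h2, h1⟩

lemma distinct_vals {ψ : Euc 2 → ℝ} (hψ : ContDiff ℝ 2 ψ) (Z : Finset (Euc 2))
    (hZ : ∀ x, gradient ψ x = 0 ↔ x ∈ Z)
    (hb : ∀ p ∈ Z, Function.Bijective (fderiv ℝ (gradient ψ) p)) :
    ∃ ψ' : Euc 2 → ℝ, ContDiff ℝ 2 ψ' ∧ (∃ C, ∀ x, ‖gradient ψ' x - gradient ψ x‖ ≤ C) ∧
      (∀ x, gradient ψ' x = 0 ↔ x ∈ Z) ∧ (∀ p ∈ Z, QuadAt ψ' p) ∧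
      (∀ p ∈ Z, ∀ q ∈ Z, ψ' p = ψ' q → p = q) := by
  classical
  suffices H : ∀ S : Finset (Euc 2), S ⊆ Z → 
    ∃ ψ' : Euc 2 → ℝ, ContDiff ℝ 2 ψ' ∧ (∃ C, ∀ x, ‖gradient ψ' x - gradient ψ x‖ ≤ C) ∧
      (∀ x, gradient ψ' x = 0 ↔ x ∈ Z) ∧ (∀ p ∈ Z, Function.Bijective (fderiv ℝ (gradient ψ') p)) ∧
      (∀ p ∈ S, QuadAt ψ' p) ∧
      (∀ p ∈ S, ∀ q ∈ S, ψ' p = ψ' q → p = q) by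
    obtain ⟨ψ', h1, h2, h3, h4, h5, h6⟩ := H Z subset_rfl
    exact ⟨ψ', h1, h2, h3, h5, h6⟩
  intro S
  induction S using Finset.induction_on with
  | empty => 
    intro _
    exact ⟨ψ, hψ, ⟨0, by simp⟩, hZ, hb, by simp, by simp⟩
  | insert p S hpS ih =>
    intro hS
    obtain ⟨ψ₁, h1, ⟨C, h2⟩, h3, h4, h5, h6⟩ := ih ((Finset.subset_insert _ _).trans hS)
    have hpZ : p ∈ Z := hS (Finset.mem_insert_self _ _)
    have hSZ : S ⊆ Z := (Finset.subset_insert _ _).trans hS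
    obtain ⟨ρ, hρ, hsep⟩ := exists_sep Z p
    obtain ⟨ε₀, hε₀, hmod⟩ := quad_mod h1 ((h3 p).2 hpZ) (h4 p hpZ) hρ
    obtain ⟨ε, hε1, hε2⟩ : ∃ ε : ℝ, |ε| < ε₀ ∧ ∀ q ∈ S, ψ₁ p + ε ≠ ψ₁ q := by
      have hinf : (Ioo (-ε₀) ε₀).Infinite := Ioo_infinite (by linarith)
      obtain ⟨ε, he, hn⟩ := hinf.exists_notMem_finset (S.image fun q => ψ₁ q - ψ₁ p)
      refine ⟨ε, abs_lt.2 he, fun q hq h => hn ?_⟩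
      rw [Finset.mem_image]
      exact ⟨q, hq, by linarith⟩
    obtain ⟨ψ₂, g1, g2, g3, g4, g5⟩ := hmod ε hε1
    have hloc : ∀ q ∈ Z, q ≠ p → ψ₂ =ᶠ[nhds q] ψ₁ := fun q hq hqp =>
      eventuallyEq_out g2 (hsep q hq hqp)
    have hne : ∀ q ∈ S, q ≠ p := fun q hq h => hpS (h ▸ hq)
    have hv : ∀ q ∈ S, ψ₂ q = ψ₁ q := fun q hq => (hloc q (hSZ hq) (hne q hq)).eq_of_nhds
    refine ⟨ψ₂, g1, ?_, fun x => (g3 x).trans (h3 x), ?_, ?_, ?_⟩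
    · obtain ⟨C', hC'⟩ := bdd_of_eq_out (h1.of_le (by norm_num)) (g1.of_le (by norm_num)) g2
      refine ⟨C' + C, fun x => ?_⟩
      have : gradient ψ₂ x - gradient ψ x = (gradient ψ₂ x - gradient ψ₁ x) +
        (gradient ψ₁ x - gradient ψ x) := by abel
      rw [this]
      exact (norm_add_le _ _).trans (add_le_add (hC' x) (h2 x))
    · intro q hq
      by_cases hqp : q = p
      · rw [hqp]; exact g4.bij
      · have e : gradient ψ₂ =ᶠ[nhds q] gradient ψ₁ := by
          filter_upwards [eventually_eventually_nhds.2 (hloc q hq hqp)] with x hx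
          exact Filter.EventuallyEq.gradient_eq hx
        rw [e.fderiv_eq]
        exact h4 q hq
    · intro q hq
      rcases Finset.mem_insert.1 hq with rfl | hq
      · exact g4
      · exact (h5 q hq).congr (hloc q (hSZ hq) (hne q hq))
    · intro q hq q' hq' he
      rcases Finset.mem_insert.1 hq with hq1 | hq1 <;>
        rcases Finset.mem_insert.1 hq' with hq2 | hq2
      · rw [hq1, hq2]
      · rw [hq1, g5, hv q' hq2] at he
        exact absurd he (hε2 q' hq2)
      · rw [hq2, g5, hv q hq1] at he
        exact absurd he.symm (hε2 q hq1)
      · rw [hv q hq1, hv q' hq2] at he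
        exact h6 q hq1 q' hq2 he

/-- An orthonormal frame of the plane. -/
structure Frame (e₁ e₂ : Euc 2) : Prop where
  n1 : ⟪e₁, e₁⟫ = 1
  n2 : ⟪e₂, e₂⟫ = 1
  o : ⟪e₁, e₂⟫ = 0
  rep : ∀ x : Euc 2, x = ⟪e₁, x⟫ • e₁ + ⟪e₂, x⟫ • e₂

lemma Frame.ext_of {e₁ e₂ x y : Euc 2} (h : Frame e₁ e₂) (h1 : ⟪e₁, x⟫ = ⟪e₁, y⟫)
    (h2 : ⟪e₂, x⟫ = ⟪e₂, y⟫) : x = y := by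
  rw [h.rep x, h.rep y, h1, h2]

lemma Frame.norm1 {e₁ e₂ : Euc 2} (h : Frame e₁ e₂) : ‖e₁‖ = 1 := by
  have := h.n1
  rw [real_inner_self_eq_norm_sq] at this
  nlinarith [norm_nonneg e₁]

lemma Frame.norm2 {e₁ e₂ : Euc 2} (h : Frame e₁ e₂) : ‖e₂‖ = 1 := by
  have := h.n2
  rw [real_inner_self_eq_norm_sq] at this
  nlinarith [norm_nonneg e₂]

lemma saddle_form {ψ : Euc 2 → ℝ} {p : Euc 2} (hq : QuadAt ψ p)
    (hs : IsSaddleAt (gradient ψ) p) :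
    ∃ e₁ e₂ : Euc 2, ∃ a b : ℝ, Frame e₁ e₂ ∧ 0 < a ∧ 0 < b ∧ ∀ᶠ x in nhds p,
      ψ x = ψ p + (a * ⟪e₁, x - p⟫ ^ 2 - b * ⟪e₂, x - p⟫ ^ 2) / 2 ∧
      gradient ψ x = (a * ⟪e₁, x - p⟫) • e₁ - (b * ⟪e₂, x - p⟫) • e₂ := by
  obtain ⟨H, hH, hb, hev⟩ := hq
  have hfd := quad_fderiv hH hev
  have hgr := quad_gradient hH hev
  have hT : (H : Euc 2 →ₗ[ℝ] Euc 2).IsSymmetric := fun x y => hH x y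
  have hn : Module.finrank ℝ (Euc 2) = 2 := by simp
  let B := hT.eigenvectorBasis hn
  let l := hT.eigenvalues hn
  have hB : ∀ i, H (B i) = l i • B i := fun i => hT.apply_eigenvectorBasis hn i
  have hon := B.orthonormal
  have hfr : Frame (B 0) (B 1) := by
    refine ⟨?_, ?_, ?_, ?_⟩
    · rw [real_inner_self_eq_norm_sq, hon.1]; norm_num
    · rw [real_inner_self_eq_norm_sq, hon.1]; norm_num
    · exact hon.2 (by norm_num)
    · intro x
      have := B.sum_repr' x
      rw [Fin.sum_univ_two] at this
      exact this.symm
  have hHx : ∀ x, H x = (l 0 * ⟪B 0, x⟫) • B 0 + (l 1 * ⟪B 1, x⟫) • B 1 := by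
    intro x
    conv_lhs => rw [hfr.rep x]
    rw [map_add, map_smul, map_smul, hB, hB, smul_smul, smul_smul, mul_comm, mul_comm (l 1)]
  have hHq : ∀ x, ⟪H x, x⟫ = l 0 * ⟪B 0, x⟫ ^ 2 + l 1 * ⟪B 1, x⟫ ^ 2 := by
    intro x
    rw [hHx x, inner_add_left, real_inner_smul_left, real_inner_smul_left]
    ring
  have hl : ∀ i, l i ≠ 0 := by
    intro i hi
    have h0 : H (B i) = H 0 := by rw [hB, hi, zero_smul, map_zero]
    have h1 := hb.1 h0
    have := hon.1 i
    rw [h1] at this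
    simp at this
  have hanti : l 1 ≤ l 0 := hT.eigenvalues_antitone hn (by decide : (0 : Fin 2) ≤ 1)
  have hne : ∀ v : Euc 2, v ≠ 0 → 0 < ⟪B 0, v⟫ ^ 2 ∨ 0 < ⟪B 1, v⟫ ^ 2 := by
    intro v hv
    by_contra hc
    push Not at hc
    have h1 : ⟪B 0, v⟫ = 0 := by nlinarith [sq_nonneg ⟪B 0, v⟫]
    have h2 : ⟪B 1, v⟫ = 0 := by nlinarith [sq_nonneg ⟪B 1, v⟫]
    apply hv
    rw [hfr.rep v, h1, h2]; simp
  obtain ⟨hs0, hs1, hs2⟩ := hs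
  have h1 : l 1 < 0 := by
    by_contra hc
    have hp : 0 < l 1 := lt_of_le_of_ne (not_lt.1 hc) (hl 1).symm
    refine hs1 ⟨hs0, fun v hv => ?_⟩
    rw [hfd, hHq]
    rcases hne v hv with h | h
    · have := mul_pos (hp.trans_le hanti) h
      have := mul_nonneg hp.le (sq_nonneg ⟪B 1, v⟫)
      linarith
    · have := mul_pos hp h
      have := mul_nonneg (hp.le.trans hanti) (sq_nonneg ⟪B 0, v⟫)
      linarith
  have h0 : 0 < l 0 := by
    by_contra hc
    have hp : l 0 < 0 := lt_of_le_of_ne (not_lt.1 hc) (hl 0)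
    refine hs2 ⟨hs0, fun v hv => ?_⟩
    rw [hfd, hHq]
    rcases hne v hv with h | h
    · have := mul_neg_of_neg_of_pos hp h
      have := mul_nonpos_of_nonpos_of_nonneg h1.le (sq_nonneg ⟪B 1, v⟫)
      linarith
    · have := mul_neg_of_neg_of_pos h1 h
      have := mul_nonpos_of_nonpos_of_nonneg hp.le (sq_nonneg ⟪B 0, v⟫)
      linarith
  refine ⟨B 0, B 1, l 0, - l 1, hfr, h0, by linarith, ?_⟩
  filter_upwards [hev, hgr] with x hx hx'
  rw [hx, hx', hHq, hHx]
  refine ⟨by ring, by module⟩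

lemma ode_back {F : Euc 2 → Euc 2} (hF : ContDiff ℝ 1 F) {γ γ' : ℝ → Euc 2} {c d : ℝ}
    (hγ : ∀ t ∈ Icc c d, HasDerivAt γ (F (γ t)) t)
    (hγ' : ∀ t ∈ Icc c d, HasDerivAt γ' (F (γ' t)) t) :
    (γ d = γ' d → EqOn γ γ' (Icc c d)) ∧ (γ c = γ' c → EqOn γ γ' (Icc c d)) := by
  have c1 : ContinuousOn γ (Icc c d) := fun t ht => (hγ t ht).continuousAt.continuousWithinAt
  have c2 : ContinuousOn γ' (Icc c d) := fun t ht => (hγ' t ht).continuousAt.continuousWithinAt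
  have hb : Bornology.IsBounded (γ '' Icc c d ∪ γ' '' Icc c d) :=
    ((isCompact_Icc.image_of_continuousOn c1).union
      (isCompact_Icc.image_of_continuousOn c2)).isBounded
  obtain ⟨R, hR⟩ := hb.subset_closedBall 0
  obtain ⟨K, hK⟩ := (hF.contDiffOn (s := closedBall (0 : Euc 2) R)).exists_lipschitzOnWith
    (by norm_num) (convex_closedBall _ _) (isCompact_closedBall _ _)
  have m1 : ∀ t ∈ Icc c d, γ t ∈ closedBall (0 : Euc 2) R := fun t ht =>
    hR (Or.inl ⟨t, ht, rfl⟩)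
  have m2 : ∀ t ∈ Icc c d, γ' t ∈ closedBall (0 : Euc 2) R := fun t ht =>
    hR (Or.inr ⟨t, ht, rfl⟩)
  constructor
  · intro he
    exact ODE_solution_unique_of_mem_Icc_left (v := fun _ => F) (s := fun _ => closedBall 0 R)
      (fun _ _ => hK) c1 (fun t ht => (hγ t (Ioc_subset_Icc_self ht)).hasDerivWithinAt)
      (fun t ht => m1 t (Ioc_subset_Icc_self ht)) c2
      (fun t ht => (hγ' t (Ioc_subset_Icc_self ht)).hasDerivWithinAt)
      (fun t ht => m2 t (Ioc_subset_Icc_self ht)) he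
  · intro he
    exact ODE_solution_unique_of_mem_Icc_right (v := fun _ => F) (s := fun _ => closedBall 0 R)
      (fun _ _ => hK) c1 (fun t ht => (hγ t (Ico_subset_Icc_self ht)).hasDerivWithinAt)
      (fun t ht => m1 t (Ico_subset_Icc_self ht)) c2
      (fun t ht => (hγ' t (Ico_subset_Icc_self ht)).hasDerivWithinAt)
      (fun t ht => m2 t (Ico_subset_Icc_self ht)) he

lemma exp_sol {u : ℝ → ℝ} {c : ℝ} {I : Set ℝ} (hI : I.OrdConnected)
    (h : ∀ t ∈ I, HasDerivAt u (c * u t) t) {s t : ℝ} (hs : s ∈ I) (ht : t ∈ I) :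
    u t = u s * Real.exp (c * (t - s)) := by
  let g : ℝ → ℝ := fun t => u t * Real.exp (-(c * (t - s)))
  have hg : ∀ t ∈ I, HasDerivAt g 0 t := by
    intro t ht
    have h1 : HasDerivAt (fun t => -(c * (t - s))) (-(c * 1)) t :=
      (((hasDerivAt_id t).sub_const s).const_mul c).neg
    have := (h t ht).mul h1.exp
    exact this.congr_deriv (by ring)
  have key : g t = g s := by
    rcases le_total s t with hst | hst
    · exact constant_of_has_deriv_right_zero
        (fun x hx => (hg x (hI.out hs ht hx)).continuousAt.continuousWithinAt)
        (fun x hx => (hg x (hI.out hs ht (Ico_subset_Icc_self hx))).hasDerivWithinAt) t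
        ⟨hst, le_rfl⟩
    · exact (constant_of_has_deriv_right_zero
        (fun x hx => (hg x (hI.out ht hs hx)).continuousAt.continuousWithinAt)
        (fun x hx => (hg x (hI.out ht hs (Ico_subset_Icc_self hx))).hasDerivWithinAt) s
        ⟨hst, le_rfl⟩).symm
  simp only [g, sub_self, mul_zero, neg_zero, Real.exp_zero, mul_one] at key
  rw [← key, mul_assoc, ← Real.exp_add]
  simp

lemma traj_const {ψ : Euc 2 → ℝ} (hψ : ContDiff ℝ 1 ψ) {γ : ℝ → Euc 2} {d : ℝ} (hd : 0 ≤ d)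
    (hγ : ∀ t ∈ Icc 0 d, HasDerivAt γ (gradient ψ (γ t)) t) (he : ψ (γ d) = ψ (γ 0)) :
    γ d = γ 0 := by
  have hder : ∀ t ∈ Icc 0 d, HasDerivAt (fun s => ψ (γ s))
      ⟪gradient ψ (γ t), gradient ψ (γ t)⟫ t := fun t ht => hg_curve (gr_has hψ _) (hγ t ht)
  have hmono : MonotoneOn (fun s => ψ (γ s)) (Icc 0 d) := by
    refine monotoneOn_of_hasDerivWithinAt_nonneg (convex_Icc _ _)
      (fun t ht => (hder t ht).continuousAt.continuousWithinAt)
      (fun t ht => (hder t (interior_subset ht)).hasDerivWithinAt)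
      (fun t _ => real_inner_self_nonneg)
  have hconst : ∀ t ∈ Icc 0 d, ψ (γ t) = ψ (γ 0) := by
    intro t ht
    apply le_antisymm
    · rw [← he]; exact hmono ht ⟨hd, le_rfl⟩ ht.2
    · exact hmono ⟨le_rfl, hd⟩ ht ht.1
  refine constant_of_has_deriv_right_zero
    (fun t ht => (hγ t ht).continuousAt.continuousWithinAt) (fun t ht => ?_) d ⟨hd, le_rfl⟩
  have h1 := (hder t (Ico_subset_Icc_self ht)).hasDerivWithinAt (s := Ici t)
  have h2 : HasDerivWithinAt (fun s => ψ (γ s)) 0 (Ici t) t := by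
    refine (hasDerivWithinAt_const t (Ici t) (ψ (γ 0))).congr_of_eventuallyEq ?_ 
      (hconst t (Ico_subset_Icc_self ht))
    filter_upwards [Icc_mem_nhdsGE ht.2] with s hs
    exact hconst s ⟨ht.1.trans hs.1, hs.2⟩
  have h3 := (uniqueDiffOn_Ici t t self_mem_Ici).eq_deriv _ h1 h2
  have h4 := inner_self_eq_zero.1 h3
  have := (hγ t (Ico_subset_Icc_self ht)).hasDerivWithinAt (s := Ici t)
  rwa [h4] at this

lemma Frame.in1 {e₁ e₂ : Euc 2} (h : Frame e₁ e₂) (c d : ℝ) : ⟪e₁, c • e₁ + d • e₂⟫ = c := by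
  rw [inner_add_right, real_inner_smul_right, real_inner_smul_right, h.n1, h.o]; ring

lemma Frame.in2 {e₁ e₂ : Euc 2} (h : Frame e₁ e₂) (c d : ℝ) : ⟪e₂, c • e₁ + d • e₂⟫ = d := by
  rw [inner_add_right, real_inner_smul_right, real_inner_smul_right, h.n2, real_inner_comm, h.o]
  ring

lemma near_saddle {ψ : Euc 2 → ℝ} {q e₁ e₂ : Euc 2} {a b : ℝ} (hfr : Frame e₁ e₂)
    (ha : 0 < a)
    (hev : ∀ᶠ x in nhds q, gradient ψ x = (a * ⟪e₁, x - q⟫) • e₁ - (b * ⟪e₂, x - q⟫) • e₂)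
    {γ : ℝ → Euc 2} (hγ : ∀ t ≥ 0, HasDerivAt γ (gradient ψ (γ t)) t)
    (hq : Tendsto γ atTop (nhds q)) :
    ∀ᶠ T in atTop, ∀ t ≥ T, ⟪e₁, γ t - q⟫ = 0 ∧
      ⟪e₂, γ t - q⟫ = ⟪e₂, γ T - q⟫ * Real.exp (-b * (t - T)) := by
  have h1 : ∀ᶠ T in atTop, ∀ t ≥ T, 0 ≤ t ∧
      gradient ψ (γ t) = (a * ⟪e₁, γ t - q⟫) • e₁ - (b * ⟪e₂, γ t - q⟫) • e₂ :=
    eventually_forall_ge_atTop.2 ((eventually_ge_atTop 0).and (hq.eventually hev))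
  filter_upwards [h1] with T hT
  have d1 : ∀ t ∈ Ici T, HasDerivAt (fun s => ⟪e₁, γ s - q⟫) (a * ⟪e₁, γ t - q⟫) t := by
    intro t ht
    have := hg_curve (hg_inner e₁ q (γ t)) (hγ t (hT t ht).1)
    rw [(hT t ht).2, sub_eq_add_neg, ← neg_smul, hfr.in1] at this
    exact this
  have d2 : ∀ t ∈ Ici T, HasDerivAt (fun s => ⟪e₂, γ s - q⟫) (-b * ⟪e₂, γ t - q⟫) t := by
    intro t ht
    have := hg_curve (hg_inner e₂ q (γ t)) (hγ t (hT t ht).1)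
    rw [(hT t ht).2, sub_eq_add_neg, ← neg_smul, hfr.in2] at this
    exact this.congr_deriv (by ring)
  intro t ht
  refine ⟨?_, exp_sol ordConnected_Ici d2 self_mem_Ici ht⟩
  by_contra hne
  have e1 : ∀ s ≥ t, |⟪e₁, γ t - q⟫| ≤ |⟪e₁, γ s - q⟫| := by
    intro s hs
    have := exp_sol ordConnected_Ici d1 (s := t) (t := s) ht (le_trans ht hs : T ≤ s)
    rw [this, abs_mul, Real.abs_exp]
    exact le_mul_of_one_le_right (abs_nonneg _) (Real.one_le_exp
      (mul_nonneg ha.le (sub_nonneg.2 hs)))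
  have l1 : Tendsto (fun s => |⟪e₁, γ s - q⟫|) atTop (nhds 0) := by
    have : Continuous fun x : Euc 2 => |⟪e₁, x - q⟫| := by fun_prop
    have := (this.tendsto q).comp hq
    simpa [Function.comp_def] using this
  have := ge_of_tendsto l1 (eventually_atTop.2 ⟨t, e1⟩)
  exact hne (abs_nonpos_iff.1 this)

lemma sign_exists {ψ : Euc 2 → ℝ} {q e₁ e₂ : Euc 2} {a b : ℝ} (hfr : Frame e₁ e₂)
    (ha : 0 < a)
    (hev : ∀ᶠ x in nhds q, gradient ψ x = (a * ⟪e₁, x - q⟫) • e₁ - (b * ⟪e₂, x - q⟫) • e₂)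
    {γ : ℝ → Euc 2} (hγ : ∀ t ≥ 0, HasDerivAt γ (gradient ψ (γ t)) t)
    (hq : Tendsto γ atTop (nhds q)) :
    ∃ σ : SignType, ∀ᶠ t in atTop, SignType.sign ⟪e₂, γ t - q⟫ = σ := by
  obtain ⟨T, hT⟩ := (near_saddle hfr ha hev hγ hq).exists
  refine ⟨SignType.sign ⟪e₂, γ T - q⟫, eventually_atTop.2 ⟨T, fun t ht => ?_⟩⟩
  rw [(hT t ht).2, sign_mul, sign_pos (Real.exp_pos _), mul_one]

lemma meet_aux {ψ : Euc 2 → ℝ} (hψ : ContDiff ℝ 2 ψ) {γ γ' : ℝ → Euc 2}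
    (hγ : ∀ t ≥ 0, HasDerivAt γ (gradient ψ (γ t)) t)
    (hγ' : ∀ t ≥ 0, HasDerivAt γ' (gradient ψ (γ' t)) t)
    (hl : ψ (γ 0) = ψ (γ' 0)) {T T' : ℝ} (h0 : 0 ≤ T') (hT : T' ≤ T) (he : γ T = γ' T') :
    γ 0 = γ' 0 := by
  have hs : ∀ t ∈ Icc 0 T', HasDerivAt (fun t => γ (t + (T - T')))
      (gradient ψ (γ (t + (T - T')))) t := by
    intro t ht
    exact (hγ (t + (T - T')) (by linarith [ht.1])).comp_add_const t (T - T')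
  have h1 := (ode_back (gr_contDiff hψ) hs (fun t ht => hγ' t ht.1)).1 (by simpa using he)
  have h2 := h1 (⟨le_rfl, h0⟩ : (0:ℝ) ∈ Icc 0 T')
  simp only [zero_add] at h2
  rw [← h2]
  refine (traj_const (hψ.of_le (by norm_num)) (sub_nonneg.2 hT) (fun t ht => hγ t ht.1) ?_).symm
  rw [h2, hl]

lemma meet {ψ : Euc 2 → ℝ} (hψ : ContDiff ℝ 2 ψ) {q e₁ e₂ : Euc 2} {a b : ℝ}
    (hfr : Frame e₁ e₂) (ha : 0 < a) (hb : 0 < b)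
    (hev : ∀ᶠ x in nhds q, gradient ψ x = (a * ⟪e₁, x - q⟫) • e₁ - (b * ⟪e₂, x - q⟫) • e₂)
    {γ γ' : ℝ → Euc 2} (hγ : ∀ t ≥ 0, HasDerivAt γ (gradient ψ (γ t)) t)
    (hγ' : ∀ t ≥ 0, HasDerivAt γ' (gradient ψ (γ' t)) t)
    (hq : Tendsto γ atTop (nhds q)) (hq' : Tendsto γ' atTop (nhds q)) {σ : SignType}
    (hσ : ∀ᶠ t in atTop, SignType.sign ⟪e₂, γ t - q⟫ = σ)
    (hσ' : ∀ᶠ t in atTop, SignType.sign ⟪e₂, γ' t - q⟫ = σ)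
    (hl : ψ (γ 0) = ψ (γ' 0)) : γ 0 = γ' 0 := by
  obtain ⟨T, hT, hT', hs, hs', hT0⟩ := ((near_saddle hfr ha hev hγ hq).and
    ((near_saddle hfr ha hev hγ' hq').and (hσ.and (hσ'.and (eventually_ge_atTop 0))))).exists
  -- core: find a later time on the orbit with the larger coordinate
  have core : ∀ δ δ' : ℝ → Euc 2,
      (∀ t ≥ T, ⟪e₁, δ t - q⟫ = 0 ∧
        ⟪e₂, δ t - q⟫ = ⟪e₂, δ T - q⟫ * Real.exp (-b * (t - T))) →
      (∀ t ≥ T, ⟪e₁, δ' t - q⟫ = 0 ∧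
        ⟪e₂, δ' t - q⟫ = ⟪e₂, δ' T - q⟫ * Real.exp (-b * (t - T))) →
      0 < ⟪e₂, δ' T - q⟫ / ⟪e₂, δ T - q⟫ → ⟪e₂, δ' T - q⟫ / ⟪e₂, δ T - q⟫ ≤ 1 →
      ∃ T₁ ≥ T, δ T₁ = δ' T := by
    intro δ δ' hδ hδ' hpos hle
    have hlog : Real.log (⟪e₂, δ' T - q⟫ / ⟪e₂, δ T - q⟫) ≤ 0 := Real.log_nonpos hpos.le hle
    let τ := -Real.log (⟪e₂, δ' T - q⟫ / ⟪e₂, δ T - q⟫) / b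
    have hτ : 0 ≤ τ := div_nonneg (by linarith) hb.le
    have hge : T + τ ≥ T := by linarith
    refine ⟨T + τ, hge, ?_⟩
    have : δ (T + τ) - q = δ' T - q := by
      apply hfr.ext_of
      · rw [(hδ _ hge).1, (hδ' T le_rfl).1]
      · rw [(hδ _ hge).2]
        have e : -b * (T + τ - T) = Real.log (⟪e₂, δ' T - q⟫ / ⟪e₂, δ T - q⟫) := by
          simp only [τ]; field_simp; ring
        rw [e, Real.exp_log hpos]
        have : ⟪e₂, δ T - q⟫ ≠ 0 := by
          intro h; rw [h] at hpos; simp at hpos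
        field_simp
    exact sub_left_injective this
  rcases lt_trichotomy σ 0 with h | h | h
  · have n1 : ⟪e₂, γ T - q⟫ < 0 := by
      rw [← sign_eq_neg_one_iff, hs]; exact (by decide : ∀ σ : SignType, σ < 0 → σ = -1) σ h
    have n2 : ⟪e₂, γ' T - q⟫ < 0 := by
      rw [← sign_eq_neg_one_iff, hs']; exact (by decide : ∀ σ : SignType, σ < 0 → σ = -1) σ h
    rcases le_total ⟪e₂, γ T - q⟫ ⟪e₂, γ' T - q⟫ with hc | hc
    · obtain ⟨T₁, h1, h2⟩ := core γ γ' hT hT' (div_pos_of_neg_of_neg n2 n1)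
        ((div_le_one_of_neg n1).2 hc)
      exact meet_aux hψ hγ hγ' hl hT0 h1 h2
    · obtain ⟨T₁, h1, h2⟩ := core γ' γ hT' hT (div_pos_of_neg_of_neg n1 n2)
        ((div_le_one_of_neg n2).2 hc)
      exact (meet_aux hψ hγ' hγ hl.symm hT0 h1 h2).symm
  · refine meet_aux hψ hγ hγ' hl hT0 le_rfl ?_
    rw [h] at hs hs'
    rw [sign_eq_zero_iff] at hs hs'
    have : γ T - q = γ' T - q := by
      apply hfr.ext_of
      · rw [(hT T le_rfl).1, (hT' T le_rfl).1]
      · rw [hs, hs']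
    exact sub_left_injective this
  · have n1 : 0 < ⟪e₂, γ T - q⟫ := by
      rw [← sign_eq_one_iff, hs]; exact (by decide : ∀ σ : SignType, 0 < σ → σ = 1) σ h
    have n2 : 0 < ⟪e₂, γ' T - q⟫ := by
      rw [← sign_eq_one_iff, hs']; exact (by decide : ∀ σ : SignType, 0 < σ → σ = 1) σ h
    rcases le_total ⟪e₂, γ T - q⟫ ⟪e₂, γ' T - q⟫ with hc | hc
    · obtain ⟨T₁, h1, h2⟩ := core γ' γ hT' hT (div_pos n1 n2) ((div_le_one n2).2 hc)
      exact (meet_aux hψ hγ' hγ hl.symm hT0 h1 h2).symm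
    · obtain ⟨T₁, h1, h2⟩ := core γ γ' hT hT' (div_pos n2 n1) ((div_le_one n1).2 hc)
      exact meet_aux hψ hγ hγ' hl hT0 h1 h2

/-- The support region of the perturbation. -/
def Reg (p e₁ e₂ : Euc 2) (r : ℝ) (x : Euc 2) : Prop :=
  r ≤ |⟪e₁, x - p⟫| ∧ |⟪e₁, x - p⟫| ≤ 3 * r ∧ |⟪e₂, x - p⟫| ≤ r

/-- Data for the perturbation near a saddle point. -/
structure Setup (ψ β : Euc 2 → ℝ) (p e₁ e₂ : Euc 2) (a b r C : ℝ) : Prop where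
  fr : Frame e₁ e₂
  ha : 0 < a
  hb : 0 < b
  hr : 0 < r
  hψ : ContDiff ℝ 2 ψ
  val : ∀ x, |⟪e₁, x - p⟫| < 5 * r → |⟪e₂, x - p⟫| < 5 * r →
    ψ x = ψ p + (a * ⟪e₁, x - p⟫ ^ 2 - b * ⟪e₂, x - p⟫ ^ 2) / 2
  grad : ∀ x, |⟪e₁, x - p⟫| < 5 * r → |⟪e₂, x - p⟫| < 5 * r →
    gradient ψ x = (a * ⟪e₁, x - p⟫) • e₁ + (-(b * ⟪e₂, x - p⟫)) • e₂
  hβ : ContDiff ℝ 2 β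
  β0 : ∀ x, 0 ≤ β x
  β1 : ∀ x, β x ≤ 1
  βC : ∀ x, ‖gradient β x‖ ≤ C
  supp : ∀ x, β x ≠ 0 → Reg p e₁ e₂ r x
  supp' : ∀ x, gradient β x ≠ 0 → Reg p e₁ e₂ r x
  cen : ∀ x, |⟪e₁, x - p⟫| = 2 * r → ⟪e₂, x - p⟫ = 0 → β x = 1

/-- Smallness conditions on the parameter. -/
structure SmallP (a b r C s : ℝ) : Prop where
  pos : 0 < s
  c1 : s * C ≤ a / 2
  c2 : s * C ≤ b / 2
  c3 : 2 * s / b < r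
  c4 : 2 * s ^ 2 / b < 2 * a * r ^ 2
  c5 : s < 3 / 2 * a * r

lemma small_ev {a b r C : ℝ} (ha : 0 < a) (hb : 0 < b) (hr : 0 < r) :
    ∀ᶠ s in nhdsWithin (0:ℝ) (Ioi 0), SmallP a b r C s := by
  have key : ∀ (f : ℝ → ℝ) (c : ℝ), Continuous f → f 0 < c →
      ∀ᶠ s in nhdsWithin (0:ℝ) (Ioi 0), f s < c := fun f c hf h =>
    nhdsWithin_le_nhds (hf.continuousAt.eventually_lt continuousAt_const h)
  have h1 := key (fun s => s * C) (a / 2) (by fun_prop) (by simp; positivity)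
  have h2 := key (fun s => s * C) (b / 2) (by fun_prop) (by simp; positivity)
  have h3 := key (fun s => 2 * s / b) r (by fun_prop) (by simp; positivity)
  have h4 := key (fun s => 2 * s ^ 2 / b) (2 * a * r ^ 2) (by fun_prop) (by simp; positivity)
  have h5 := key (fun s => s) (3 / 2 * a * r) (by fun_prop) (by positivity)
  filter_upwards [h1, h2, h3, h4, h5, self_mem_nhdsWithin] with s g1 g2 g3 g4 g5 g6
  exact ⟨g6, g1.le, g2.le, g3, g4, g5⟩

/-- The perturbed function. -/
def pert (ψ β : Euc 2 → ℝ) (p e₂ : Euc 2) (s : ℝ) : Euc 2 → ℝ :=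
  fun x => ψ x + s * (⟪e₂, x - p⟫ * β x)

section pertsec

variable {ψ β : Euc 2 → ℝ} {p e₁ e₂ : Euc 2} {a b r C s : ℝ}

lemma Setup.pert_c2 (S : Setup ψ β p e₁ e₂ a b r C) (s : ℝ) : ContDiff ℝ 2 (pert ψ β p e₂ s) := by
  have h1 : ContDiff ℝ 2 (fun x : Euc 2 => ⟪e₂, x - p⟫) :=
    contDiff_const.inner ℝ (contDiff_id.sub contDiff_const)
  exact S.hψ.add (contDiff_const.mul (h1.mul S.hβ))

lemma Setup.pert_grad (S : Setup ψ β p e₁ e₂ a b r C) (s : ℝ) (x : Euc 2) :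
    gradient (pert ψ β p e₂ s) x =
      gradient ψ x + s • (⟪e₂, x - p⟫ • gradient β x + β x • e₂) := by
  have hψ1 : ContDiff ℝ 1 ψ := S.hψ.of_le (by norm_num)
  have hβ1 : ContDiff ℝ 1 β := S.hβ.of_le (by norm_num)
  exact (hg_add (gr_has hψ1 x) (hg_const_mul s (hg_mul (hg_inner e₂ p x) (gr_has hβ1 x)))).gradient

lemma Setup.pert_off (S : Setup ψ β p e₁ e₂ a b r C) (s : ℝ) {x : Euc 2}
    (hx : ¬ Reg p e₁ e₂ r x) : pert ψ β p e₂ s x = ψ x ∧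
      gradient (pert ψ β p e₂ s) x = gradient ψ x := by
  have h1 : β x = 0 := by by_contra h; exact hx (S.supp x h)
  have h2 : gradient β x = 0 := by by_contra h; exact hx (S.supp' x h)
  constructor
  · simp [pert, h1]
  · rw [S.pert_grad, h1, h2]; simp

lemma reg_closed (p e₁ e₂ : Euc 2) (r : ℝ) : IsClosed {x | Reg p e₁ e₂ r x} := by
  have h1 : Continuous fun x : Euc 2 => |⟪e₁, x - p⟫| := by fun_prop
  have h2 : Continuous fun x : Euc 2 => |⟪e₂, x - p⟫| := by fun_prop
  exact (isClosed_le continuous_const h1).inter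
    ((isClosed_le h1 continuous_const).inter (isClosed_le h2 continuous_const))

lemma Setup.pert_loc (S : Setup ψ β p e₁ e₂ a b r C) (s : ℝ) {x : Euc 2}
    (hx : ¬ Reg p e₁ e₂ r x) : pert ψ β p e₂ s =ᶠ[nhds x] ψ := by
  filter_upwards [(reg_closed p e₁ e₂ r).isOpen_compl.mem_nhds hx] with y hy
  exact (S.pert_off s hy).1

/-- values on a slightly larger region -/
lemma Setup.val_lt (S : Setup ψ β p e₁ e₂ a b r C) (hs : SmallP a b r C s) {x : Euc 2}
    (hu : |⟪e₁, x - p⟫| ≤ 3 * r) (hv : |⟪e₂, x - p⟫| ≤ r) :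
    pert ψ β p e₂ s x < ψ p + 6 * a * r ^ 2 := by
  have hr := S.hr
  have ha := S.ha
  unfold pert
  rw [S.val x (by linarith) (by linarith)]
  have h1 : ⟪e₁, x - p⟫ ^ 2 ≤ (3 * r) ^ 2 := sq_le_sq' (abs_le.1 hu).1 (abs_le.1 hu).2
  have h2 : ⟪e₂, x - p⟫ * β x ≤ r := by
    have := S.β0 x
    have := S.β1 x
    have h3 := (abs_le.1 hv).2
    nlinarith
  have h3 : s * (⟪e₂, x - p⟫ * β x) ≤ s * r := mul_le_mul_of_nonneg_left h2 hs.pos.le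
  have h4 : s * r < 3 / 2 * a * r * r := mul_lt_mul_of_pos_right hs.c5 hr
  have h5 : 0 ≤ b * ⟪e₂, x - p⟫ ^ 2 := mul_nonneg S.hb.le (sq_nonneg _)
  have h6 : a * ⟪e₁, x - p⟫ ^ 2 ≤ a * (3 * r) ^ 2 := mul_le_mul_of_nonneg_left h1 ha.le
  nlinarith

lemma Setup.in1 (S : Setup ψ β p e₁ e₂ a b r C) (s : ℝ) {x : Euc 2}
    (hu : |⟪e₁, x - p⟫| < 5 * r) (hv : |⟪e₂, x - p⟫| < 5 * r) :
    ⟪e₁, gradient (pert ψ β p e₂ s) x⟫ =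
      a * ⟪e₁, x - p⟫ + s * (⟪e₂, x - p⟫ * ⟪e₁, gradient β x⟫) := by
  rw [S.pert_grad, inner_add_right, S.grad x hu hv, S.fr.in1, real_inner_smul_right,
    inner_add_right, real_inner_smul_right, real_inner_smul_right, S.fr.o]
  ring

lemma Setup.in2 (S : Setup ψ β p e₁ e₂ a b r C) (s : ℝ) {x : Euc 2}
    (hu : |⟪e₁, x - p⟫| < 5 * r) (hv : |⟪e₂, x - p⟫| < 5 * r) :
    ⟪e₂, gradient (pert ψ β p e₂ s) x⟫ =
      (-b + s * ⟪e₂, gradient β x⟫) * ⟪e₂, x - p⟫ + s * β x := by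
  rw [S.pert_grad, inner_add_right, S.grad x hu hv, S.fr.in2, real_inner_smul_right,
    inner_add_right, real_inner_smul_right, real_inner_smul_right, S.fr.n2]
  ring

lemma Setup.h1_le (S : Setup ψ β p e₁ e₂ a b r C) (x : Euc 2) : |⟪e₁, gradient β x⟫| ≤ C := by
  have := abs_real_inner_le_norm e₁ (gradient β x)
  rw [S.fr.norm1, one_mul] at this
  exact this.trans (S.βC x)

lemma Setup.h2_le (S : Setup ψ β p e₁ e₂ a b r C) (x : Euc 2) : |⟪e₂, gradient β x⟫| ≤ C := by
  have := abs_real_inner_le_norm e₂ (gradient β x)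
  rw [S.fr.norm2, one_mul] at this
  exact this.trans (S.βC x)

lemma Setup.err1 (S : Setup ψ β p e₁ e₂ a b r C) (hs : SmallP a b r C s) (x : Euc 2) :
    |s * (⟪e₂, x - p⟫ * ⟪e₁, gradient β x⟫)| ≤ a / 2 * |⟪e₁, x - p⟫| := by
  by_cases h : gradient β x = 0
  · rw [h]; simp only [inner_zero_right, mul_zero, abs_zero]
    have := S.ha
    positivity
  · obtain ⟨g1, g2, g3⟩ := S.supp' x h
    rw [abs_mul, abs_mul, abs_of_pos hs.pos]
    have := S.h1_le x
    have hC : 0 ≤ C := (abs_nonneg _).trans this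
    calc s * (|⟪e₂, x - p⟫| * |⟪e₁, gradient β x⟫|) ≤ s * (r * C) := by
          have := hs.pos
          have := S.hr
          gcongr
      _ = (s * C) * r := by ring
      _ ≤ a / 2 * |⟪e₁, x - p⟫| := by
          have := hs.c1
          have := S.hr
          have := S.ha
          gcongr

lemma Setup.box (S : Setup ψ β p e₁ e₂ a b r C) {x : Euc 2} (hx : gradient ψ x = 0)
    (hu : |⟪e₁, x - p⟫| < 5 * r) (hv : |⟪e₂, x - p⟫| < 5 * r) : x = p := by
  have h1 := S.grad x hu hv
  rw [hx] at h1
  have h2 := S.fr.in1 (a * ⟪e₁, x - p⟫) (-(b * ⟪e₂, x - p⟫))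
  have h3 := S.fr.in2 (a * ⟪e₁, x - p⟫) (-(b * ⟪e₂, x - p⟫))
  rw [← h1, inner_zero_right] at h2 h3
  have h4 : ⟪e₁, x - p⟫ = 0 := by
    rcases mul_eq_zero.1 h2.symm with h | h
    · exact absurd h S.ha.ne'
    · exact h
  have h5 : ⟪e₂, x - p⟫ = 0 := by
    rcases mul_eq_zero.1 (neg_eq_zero.1 h3.symm) with h | h
    · exact absurd h S.hb.ne'
    · exact h
  have : x - p = 0 := by rw [S.fr.rep (x - p), h4, h5]; simp
  exact sub_eq_zero.1 this

lemma Setup.not_reg (S : Setup ψ β p e₁ e₂ a b r C) {x : Euc 2} (hx : gradient ψ x = 0) :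
    ¬ Reg p e₁ e₂ r x := by
  rintro ⟨h1, h2, h3⟩
  have hr := S.hr
  have := S.box hx (by linarith) (by linarith)
  subst this
  simp at h1
  linarith

lemma Setup.crit (S : Setup ψ β p e₁ e₂ a b r C) (hs : SmallP a b r C s) (x : Euc 2) :
    gradient (pert ψ β p e₂ s) x = 0 ↔ gradient ψ x = 0 := by
  by_cases hx : Reg p e₁ e₂ r x
  · constructor
    · intro h
      exfalso
      obtain ⟨h1, h2, h3⟩ := hx
      have hr := S.hr
      have ha := S.ha
      have e := S.in1 s (x := x) (by linarith) (by linarith)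
      rw [h, inner_zero_right] at e
      have e2 := S.err1 hs x
      have e3 : a * ⟪e₁, x - p⟫ = - (s * (⟪e₂, x - p⟫ * ⟪e₁, gradient β x⟫)) := by linarith
      rw [← abs_neg, ← e3, abs_mul, abs_of_pos ha] at e2
      nlinarith
    · intro h
      exact absurd hx (S.not_reg h)
  · rw [(S.pert_off s hx).2]

end pertsec

lemma sq_mono {U g : ℝ → ℝ} {a t₀ t₁ : ℝ} (ha : 0 < a)
    (hU : ∀ t ∈ Icc t₀ t₁, HasDerivAt U (a * U t + g t) t)
    (hg : ∀ t ∈ Icc t₀ t₁, |g t| ≤ a / 2 * |U t|) : MonotoneOn (fun t => U t ^ 2) (Icc t₀ t₁) := by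
  have hd : ∀ t ∈ Icc t₀ t₁, HasDerivAt (fun t => U t ^ 2) (2 * U t * (a * U t + g t)) t := by
    intro t ht
    exact ((hU t ht).pow 2).congr_deriv (by simp)
  refine monotoneOn_of_hasDerivWithinAt_nonneg (convex_Icc _ _)
      (fun t ht => (hd t ht).continuousAt.continuousWithinAt)
      (fun t ht => (hd t (interior_subset ht)).hasDerivWithinAt) (fun t ht => ?_)
  have h1 := hg t (interior_subset ht)
  have h2 : |U t * g t| ≤ a / 2 * (U t) ^ 2 := by
    rw [abs_mul, ← sq_abs (U t)]
    nlinarith [abs_nonneg (U t)]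
  have h3 := (abs_le.1 h2).1
  nlinarith [sq_nonneg (U t)]

lemma v_est {V B c : ℝ → ℝ} {b s t₀ t₁ : ℝ} (hb : 0 < b) (hs : 0 < s) (hc : Continuous c)
    (hcb : ∀ t, c t ≤ -b / 2) (hB0 : ∀ t, 0 ≤ B t) (hB1 : ∀ t, B t ≤ 1)
    (hV : ∀ t ∈ Icc t₀ t₁, HasDerivAt V (c t * V t + s * B t) t) (h0 : V t₀ = 0) :
    (∀ t ∈ Icc t₀ t₁, 0 ≤ V t ∧ V t ≤ 2 * s / b) ∧
    ∀ t ∈ Icc t₀ t₁, V t = 0 → ∀ τ ∈ Ioo t₀ t, V τ = 0 ∧ B τ = 0 := by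
  let A : ℝ → ℝ := fun t => ∫ x in t₀..t, c x
  have hA : ∀ t, HasDerivAt A (c t) t := fun t => hc.integral_hasStrictDerivAt t₀ t |>.hasDerivAt
  let W : ℝ → ℝ := fun t => V t * Real.exp (-A t)
  have hW : ∀ t ∈ Icc t₀ t₁, HasDerivAt W (s * B t * Real.exp (-A t)) t := by
    intro t ht
    exact ((hV t ht).mul (hA t).neg.exp).congr_deriv (by simp only [Pi.neg_apply]; ring)
  have hWm : MonotoneOn W (Icc t₀ t₁) := by
    refine monotoneOn_of_hasDerivWithinAt_nonneg (convex_Icc _ _)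
      (fun t ht => (hW t ht).continuousAt.continuousWithinAt)
      (fun t ht => (hW t (interior_subset ht)).hasDerivWithinAt) (fun t ht => ?_)
    have := hB0 t
    positivity
  have hW0 : W t₀ = 0 := by simp [W, h0]
  have hWn : ∀ t ∈ Icc t₀ t₁, 0 ≤ W t := by
    intro t ht
    rw [← hW0]
    exact hWm ⟨le_rfl, ht.1.trans ht.2⟩ ht ht.1
  have hVn : ∀ t ∈ Icc t₀ t₁, 0 ≤ V t := by
    intro t ht
    exact nonneg_of_mul_nonneg_left (hWn t ht) (Real.exp_pos _)
  constructor
  · intro t ht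
    refine ⟨hVn t ht, ?_⟩
    let k := 2 * s / b
    have hk : b / 2 * k = s := by simp only [k]; field_simp
    let X : ℝ → ℝ := fun t => (V t - k) * Real.exp (b / 2 * (t - t₀))
    have hX : ∀ t ∈ Icc t₀ t₁, HasDerivAt X
        ((c t * V t + s * B t + b / 2 * (V t - k)) * Real.exp (b / 2 * (t - t₀))) t := by
      intro t ht
      have h1 : HasDerivAt (fun t => b / 2 * (t - t₀)) (b / 2 * 1) t :=
        ((hasDerivAt_id t).sub_const t₀).const_mul _
      exact (((hV t ht).sub_const k).mul h1.exp).congr_deriv (by ring)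
    have hXm : AntitoneOn X (Icc t₀ t₁) := by
      refine antitoneOn_of_hasDerivWithinAt_nonpos (convex_Icc _ _)
        (fun t ht => (hX t ht).continuousAt.continuousWithinAt)
        (fun t ht => (hX t (interior_subset ht)).hasDerivWithinAt) (fun t ht => ?_)
      have h1 := hVn t (interior_subset ht)
      have h2 := mul_le_mul_of_nonneg_right (hcb t) h1
      have h3 := mul_le_mul_of_nonneg_left (hB1 t) hs.le
      refine mul_nonpos_of_nonpos_of_nonneg ?_ (Real.exp_pos _).le
      nlinarith
    have h1 := hXm ⟨le_rfl, ht.1.trans ht.2⟩ ht ht.1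
    have h2 : X t₀ ≤ 0 := by
      simp only [X, h0, sub_self, mul_zero, Real.exp_zero, mul_one, zero_sub, k]
      have : 0 ≤ 2 * s / b := by positivity
      linarith
    have h3 : (V t - k) * Real.exp (b / 2 * (t - t₀)) ≤ 0 := h1.trans h2
    have := nonpos_of_mul_nonpos_left h3 (Real.exp_pos _)
    linarith
  · intro t ht hVt τ hτ
    have hWt : W t = 0 := by simp [W, hVt]
    have hz : ∀ x ∈ Icc t₀ t, W x = 0 := by
      intro x hx
      apply le_antisymm _ (hWn x ⟨hx.1, hx.2.trans ht.2⟩)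
      rw [← hWt]
      exact hWm ⟨hx.1, hx.2.trans ht.2⟩ ht hx.2
    have h1 := hz τ ⟨hτ.1.le, hτ.2.le⟩
    refine ⟨(mul_eq_zero.1 h1).resolve_right (Real.exp_ne_zero _), ?_⟩
    have h2 : HasDerivAt W 0 τ := by
      refine (hasDerivAt_const τ (0:ℝ)).congr_of_eventuallyEq ?_
      filter_upwards [Ioo_mem_nhds hτ.1 hτ.2] with x hx
      exact hz x ⟨hx.1.le, hx.2.le⟩
    have h3 := (hW τ ⟨hτ.1.le, hτ.2.le.trans ht.2⟩).unique h2
    have h4 := (mul_eq_zero.1 h3).resolve_right (Real.exp_ne_zero _)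
    exact (mul_eq_zero.1 h4).resolve_left hs.ne'

section outsec

variable {ψ β : Euc 2 → ℝ} {p e₁ e₂ : Euc 2} {a b r C s : ℝ}

/-- starting time near the saddle -/
lemma Setup.start (S : Setup ψ β p e₁ e₂ a b r C) {γ : ℝ → Euc 2}
    (hγ : IsTrajectory (gradient (pert ψ β p e₂ s)) γ) (hp : Tendsto γ atBot (nhds p))
    {q : Euc 2} (hq : Tendsto γ atTop (nhds q)) (hqp : q ≠ p) :
    ∃ t₀, |⟪e₁, γ t₀ - p⟫| < r ∧ ⟪e₂, γ t₀ - p⟫ = 0 ∧ ⟪e₁, γ t₀ - p⟫ ≠ 0 := by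
  have hr := S.hr
  have l1 : Tendsto (fun t => |⟪e₁, γ t - p⟫|) atBot (nhds 0) := by
    have : Continuous fun x : Euc 2 => |⟪e₁, x - p⟫| := by fun_prop
    have := (this.tendsto p).comp hp
    simpa [Function.comp_def] using this
  have l2 : Tendsto (fun t => |⟪e₂, γ t - p⟫|) atBot (nhds 0) := by
    have : Continuous fun x : Euc 2 => |⟪e₂, x - p⟫| := by fun_prop
    have := (this.tendsto p).comp hp
    simpa [Function.comp_def] using this
  obtain ⟨t₀, ht₀⟩ := eventually_atBot.1
    ((l1.eventually (Iio_mem_nhds hr)).and (l2.eventually (Iio_mem_nhds hr)))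
  have ht : ∀ t ∈ Iic t₀, |⟪e₁, γ t - p⟫| < r ∧ |⟪e₂, γ t - p⟫| < r := ht₀
  have hg : ∀ t ∈ Iic t₀, HasDerivAt (fun s => ⟪e₂, γ s - p⟫) (-b * ⟪e₂, γ t - p⟫) t := by
    intro t h
    obtain ⟨h1, h2⟩ := ht t h
    have := hg_curve (hg_inner e₂ p (γ t)) (hγ t)
    rw [(S.pert_off s (fun h => absurd h.1 (not_le.2 h1))).2,
      S.grad (γ t) (by linarith) (by linarith), S.fr.in2] at this
    exact this.congr_deriv (by ring)
  have hv0 : ⟪e₂, γ t₀ - p⟫ = 0 := by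
    have e1 : ∀ t ≤ t₀, |⟪e₂, γ t₀ - p⟫| ≤ |⟪e₂, γ t - p⟫| := by
      intro t h
      have := exp_sol ordConnected_Iic hg (s := t₀) (t := t) self_mem_Iic h
      rw [this, abs_mul, Real.abs_exp]
      refine le_mul_of_one_le_right (abs_nonneg _) (Real.one_le_exp ?_)
      have := S.hb
      nlinarith
    have := ge_of_tendsto l2 (eventually_atBot.2 ⟨t₀, e1⟩)
    exact abs_nonpos_iff.1 this
  refine ⟨t₀, (ht t₀ self_mem_Iic).1, hv0, fun hu0 => hqp ?_⟩
  have hγp : γ t₀ = p := by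
    have : γ t₀ - p = 0 := by rw [S.fr.rep (γ t₀ - p), hu0, hv0]; simp
    exact sub_eq_zero.1 this
  have hz : gradient (pert ψ β p e₂ s) p = 0 := by
    have hnr : ¬ Reg p e₁ e₂ r p := by
      rintro ⟨h, _⟩
      simp at h; linarith
    rw [(S.pert_off s hnr).2, S.grad p (by simpa using hr) (by simpa using hr)]
    simp
  have hconst : ∀ t ≥ t₀, γ t = p := by
    intro t h
    have := (ode_back (gr_contDiff (S.pert_c2 s)) (γ := γ) (γ' := fun _ => p) (c := t₀) (d := t)
      (fun t _ => hγ t) (fun t _ => by rw [hz]; exact hasDerivAt_const t p)).2 hγp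
    exact this ⟨h, le_rfl⟩
  refine tendsto_nhds_unique hq (tendsto_const_nhds.congr' ?_)
  filter_upwards [eventually_ge_atTop t₀] with t h using (hconst t h).symm

lemma Setup.out (S : Setup ψ β p e₁ e₂ a b r C) (hs : SmallP a b r C s) {γ : ℝ → Euc 2}
    (hγ : IsTrajectory (gradient (pert ψ β p e₂ s)) γ) (hp : Tendsto γ atBot (nhds p))
    {q : Euc 2} (hq : Tendsto γ atTop (nhds q)) (hqz : gradient ψ q = 0) (hqp : q ≠ p) :
    ∃ τ, ψ (γ τ) = ψ p + 6 * a * r ^ 2 ∧ 0 < ⟪e₂, γ τ - p⟫ ∧ ⟪e₂, γ τ - p⟫ ≤ 2 * s / b ∧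
      ∀ t ≥ τ, HasDerivAt γ (gradient ψ (γ t)) t := by
  obtain ⟨t₀, hu0, hv0, hne⟩ := S.start hγ hp hq hqp
  have hr := S.hr
  have ha := S.ha
  have hb := S.hb
  have hsp := hs.pos
  have hγc : Continuous γ := continuous_iff_continuousAt.2 fun t => (hγ t).continuousAt
  let U : ℝ → ℝ := fun t => ⟪e₁, γ t - p⟫
  let V : ℝ → ℝ := fun t => ⟪e₂, γ t - p⟫
  have hUc : Continuous U := by fun_prop
  have hVc : Continuous V := by fun_prop
  let E : Set ℝ := {t | t₀ ≤ t ∧ (4 * r ≤ |U t| ∨ r ≤ |V t|)}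
  have hEc : IsClosed E := (isClosed_le continuous_const continuous_id).inter
    ((isClosed_le continuous_const hUc.abs).union (isClosed_le continuous_const hVc.abs))
  have hEn : E.Nonempty := by
    by_contra hemp
    rw [not_nonempty_iff_eq_empty] at hemp
    have hin : ∀ t ≥ t₀, |U t| ≤ 4 * r ∧ |V t| ≤ r := by
      intro t ht
      have : t ∉ E := by rw [hemp]; exact notMem_empty t
      simp only [E, mem_ofPred_eq, not_and_or, not_or, not_le] at this
      rcases this with h | h
      · linarith
      · exact ⟨h.1.le, h.2.le⟩
    have k1 : |⟪e₁, q - p⟫| ≤ 4 * r := by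
      have : Continuous fun x : Euc 2 => |⟪e₁, x - p⟫| := by fun_prop
      exact le_of_tendsto ((this.tendsto q).comp hq)
        (eventually_atTop.2 ⟨t₀, fun t ht => (hin t ht).1⟩)
    have k2 : |⟪e₂, q - p⟫| ≤ r := by
      have : Continuous fun x : Euc 2 => |⟪e₂, x - p⟫| := by fun_prop
      exact le_of_tendsto ((this.tendsto q).comp hq)
        (eventually_atTop.2 ⟨t₀, fun t ht => (hin t ht).2⟩)
    exact hqp (S.box hqz (by linarith) (by linarith))
  have hEb : BddBelow E := ⟨t₀, fun t ht => ht.1⟩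
  let t₁ := sInf E
  have ht₁ : t₁ ∈ E := hEc.csInf_mem hEn hEb
  have h01 : t₀ ≤ t₁ := ht₁.1
  have hU0 : |U t₀| < r := hu0
  have hV0 : V t₀ = 0 := hv0
  have h01' : t₀ < t₁ := by
    refine lt_of_le_of_ne h01 fun h => ?_
    have := ht₁.2
    rw [← h, hV0, abs_zero] at this
    rcases this with h | h <;> linarith
  have hlt : ∀ t ∈ Ico t₀ t₁, |U t| < 4 * r ∧ |V t| < r := by
    intro t ht
    by_contra hc
    have : t ∈ E := by
      refine ⟨ht.1, ?_⟩
      rw [not_and_or, not_lt, not_lt] at hc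
      exact hc
    exact absurd (csInf_le hEb this) (not_le.2 ht.2)
  have hle : ∀ t ∈ Icc t₀ t₁, |U t| ≤ 4 * r ∧ |V t| ≤ r := by
    have hcl : IsClosed {t | |U t| ≤ 4 * r ∧ |V t| ≤ r} :=
      (isClosed_le hUc.abs continuous_const).inter (isClosed_le hVc.abs continuous_const)
    have : closure (Ico t₀ t₁) ⊆ {t | |U t| ≤ 4 * r ∧ |V t| ≤ r} :=
      hcl.closure_subset_iff.2 fun t ht => ⟨(hlt t ht).1.le, (hlt t ht).2.le⟩
    rw [closure_Ico h01'.ne] at this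
    exact this
  have hUd : ∀ t ∈ Icc t₀ t₁, HasDerivAt U (a * U t +
      s * (⟪e₂, γ t - p⟫ * ⟪e₁, gradient β (γ t)⟫)) t := by
    intro t ht
    have := hg_curve (hg_inner e₁ p (γ t)) (hγ t)
    obtain ⟨k1, k2⟩ := hle t ht
    rw [S.in1 s (lt_of_le_of_lt k1 (by linarith)) (lt_of_le_of_lt k2 (by linarith))] at this
    exact this
  have hVd : ∀ t ∈ Icc t₀ t₁, HasDerivAt V ((-b + s * ⟪e₂, gradient β (γ t)⟫) * V t +
      s * β (γ t)) t := by
    intro t ht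
    have := hg_curve (hg_inner e₂ p (γ t)) (hγ t)
    obtain ⟨k1, k2⟩ := hle t ht
    rw [S.in2 s (lt_of_le_of_lt k1 (by linarith)) (lt_of_le_of_lt k2 (by linarith))] at this
    exact this
  have hmono := sq_mono ha hUd (fun t _ => S.err1 hs (γ t))
  have hcc : Continuous fun t => -b + s * ⟪e₂, gradient β (γ t)⟫ := by
    have : Continuous fun t => gradient β (γ t) :=
      (gr_cont (S.hβ.of_le (by norm_num))).comp hγc
    fun_prop
  obtain ⟨hVb, hVz⟩ := v_est hb hsp hcc (fun t => by
    have h1 := (abs_le.1 (S.h2_le (γ t))).2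
    have h2 := mul_le_mul_of_nonneg_left h1 hsp.le
    have := hs.c2
    linarith) (fun t => S.β0 (γ t)) (fun t => S.β1 (γ t)) hVd hV0
  have hUt1 : 4 * r ≤ |U t₁| := by
    rcases ht₁.2 with h | h
    · exact h
    · obtain ⟨g1, g2⟩ := hVb t₁ ⟨h01, le_rfl⟩
      rw [abs_of_nonneg g1] at h
      linarith [hs.c3]
  -- energy
  let En : ℝ → ℝ := fun t => pert ψ β p e₂ s (γ t)
  have hEd : ∀ t, HasDerivAt En ⟪gradient (pert ψ β p e₂ s) (γ t),
      gradient (pert ψ β p e₂ s) (γ t)⟫ t := fun t =>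
    hg_curve (gr_has ((S.pert_c2 s).of_le (by norm_num)) _) (hγ t)
  have hEm : Monotone En := monotone_of_hasDerivAt_nonneg hEd (fun t => real_inner_self_nonneg)
  have hEcont : Continuous En := continuous_iff_continuousAt.2 fun t => (hEd t).continuousAt
  have e0 : En t₀ ≤ ψ p + 6 * a * r ^ 2 :=
    (S.val_lt hs (le_of_lt (hU0.trans (by linarith)))
      (by rw [hv0, abs_zero]; exact hr.le)).le
  have offbig : ∀ t, 3 * r < |U t| → ¬ Reg p e₁ e₂ r (γ t) := fun t ht h =>
    absurd h.2.1 (not_le.2 ht)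
  have e1 : ψ p + 6 * a * r ^ 2 ≤ En t₁ := by
    obtain ⟨k1, k2⟩ := hle t₁ ⟨h01, le_rfl⟩
    have := (S.pert_off s (offbig t₁ (by linarith))).1
    simp only [En]
    rw [this, S.val (γ t₁) (lt_of_le_of_lt k1 (by linarith)) (lt_of_le_of_lt k2 (by linarith))]
    obtain ⟨g1, g2⟩ := hVb t₁ ⟨h01, le_rfl⟩
    have g3 : b * V t₁ ^ 2 ≤ b * (2 * s / b) ^ 2 := by gcongr
    have g4 : b * (2 * s / b) ^ 2 = 2 * (2 * s ^ 2 / b) := by field_simp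
    have g5 : (4 * r) ^ 2 ≤ U t₁ ^ 2 := by
      rw [← sq_abs (U t₁)]; gcongr
    have g6 : a * (4 * r) ^ 2 ≤ a * U t₁ ^ 2 := by gcongr
    have := hs.c4
    change _ ≤ ψ p + (a * U t₁ ^ 2 - b * V t₁ ^ 2) / 2
    nlinarith
  obtain ⟨τ, hτ, hEτ⟩ := intermediate_value_Icc h01 hEcont.continuousOn ⟨e0, e1⟩
  have hUτ : 3 * r < |U τ| := by
    by_contra hc
    have := S.val_lt hs (not_lt.1 hc) (hle τ hτ).2
    exact absurd hEτ this.ne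
  refine ⟨τ, ?_, ?_, (hVb τ hτ).2, ?_⟩
  · rw [← hEτ]
    exact (S.pert_off s (offbig τ hUτ)).1.symm
  · refine lt_of_le_of_ne (hVb τ hτ).1 fun hzero => ?_
    have hz := hVz τ hτ hzero.symm
    obtain ⟨w, hw, hw2⟩ := intermediate_value_Icc hτ.1 hUc.abs.continuousOn
      (⟨by linarith, by linarith⟩ : 2 * r ∈ Icc |U t₀| |U τ|)
    have hw' : w ∈ Ioo t₀ τ := by
      refine ⟨lt_of_le_of_ne hw.1 ?_, lt_of_le_of_ne hw.2 ?_⟩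
      · rintro rfl; simp only at hw2; linarith
      · rintro rfl; simp only at hw2; linarith
    obtain ⟨z1, z2⟩ := hz w hw'
    have := S.cen (γ w) hw2 z1
    rw [z2] at this
    exact zero_ne_one this
  · intro t ht
    have hnr : ¬ Reg p e₁ e₂ r (γ t) := by
      rintro ⟨k1, k2, k3⟩
      have h1 := S.val_lt hs k2 k3
      have h2 := hEm ht
      rw [hEτ] at h2
      exact absurd h1 (not_lt.2 h2)
    rw [← (S.pert_off s hnr).2]
    exact hγ t

end outsec

lemma exists_beta {p e₁ e₂ : Euc 2} (hfr : Frame e₁ e₂) {r : ℝ} (hr : 0 < r) :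
    ∃ (β : Euc 2 → ℝ) (C : ℝ), ContDiff ℝ 2 β ∧ (∀ x, 0 ≤ β x) ∧ (∀ x, β x ≤ 1) ∧
      (∀ x, ‖gradient β x‖ ≤ C) ∧ (∀ x, β x ≠ 0 → Reg p e₁ e₂ r x) ∧
      (∀ x, gradient β x ≠ 0 → Reg p e₁ e₂ r x) ∧
      (∀ x, |⟪e₁, x - p⟫| = 2 * r → ⟪e₂, x - p⟫ = 0 → β x = 1) := by
  let c₁ : Euc 2 := p + (2 * r) • e₁
  let c₂ : Euc 2 := p - (2 * r) • e₁
  let b₁ : ContDiffBump c₁ := ⟨r / 2, r, by positivity, by linarith⟩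
  let b₂ : ContDiffBump c₂ := ⟨r / 2, r, by positivity, by linarith⟩
  have u1 : ∀ x, ⟪e₁, x - c₁⟫ = ⟪e₁, x - p⟫ - 2 * r := by
    intro x
    have : x - c₁ = (x - p) - (2 * r) • e₁ := by simp only [c₁]; abel
    rw [this, inner_sub_right, real_inner_smul_right, hfr.n1]; ring
  have v1 : ∀ x, ⟪e₂, x - c₁⟫ = ⟪e₂, x - p⟫ := by
    intro x
    have : x - c₁ = (x - p) - (2 * r) • e₁ := by simp only [c₁]; abel
    rw [this, inner_sub_right, real_inner_smul_right, real_inner_comm e₁ e₂, hfr.o]; ring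
  have u2 : ∀ x, ⟪e₁, x - c₂⟫ = ⟪e₁, x - p⟫ + 2 * r := by
    intro x
    have : x - c₂ = (x - p) + (2 * r) • e₁ := by simp only [c₂]; abel
    rw [this, inner_add_right, real_inner_smul_right, hfr.n1]; ring
  have v2 : ∀ x, ⟪e₂, x - c₂⟫ = ⟪e₂, x - p⟫ := by
    intro x
    have : x - c₂ = (x - p) + (2 * r) • e₁ := by simp only [c₂]; abel
    rw [this, inner_add_right, real_inner_smul_right, real_inner_comm e₁ e₂, hfr.o]; ring
  have z1 : ∀ x, b₁ x ≠ 0 → |⟪e₁, x - p⟫ - 2 * r| < r ∧ |⟪e₂, x - p⟫| < r := by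
    intro x hx
    have hd : ‖x - c₁‖ < r := by
      by_contra hc
      exact hx (b₁.zero_of_le_dist (by rw [dist_eq_norm]; exact not_lt.1 hc))
    have k1 := abs_real_inner_le_norm e₁ (x - c₁)
    have k2 := abs_real_inner_le_norm e₂ (x - c₁)
    rw [hfr.norm1, one_mul, u1] at k1
    rw [hfr.norm2, one_mul, v1] at k2
    exact ⟨k1.trans_lt hd, k2.trans_lt hd⟩
  have z2 : ∀ x, b₂ x ≠ 0 → |⟪e₁, x - p⟫ + 2 * r| < r ∧ |⟪e₂, x - p⟫| < r := by
    intro x hx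
    have hd : ‖x - c₂‖ < r := by
      by_contra hc
      exact hx (b₂.zero_of_le_dist (by rw [dist_eq_norm]; exact not_lt.1 hc))
    have k1 := abs_real_inner_le_norm e₁ (x - c₂)
    have k2 := abs_real_inner_le_norm e₂ (x - c₂)
    rw [hfr.norm1, one_mul, u2] at k1
    rw [hfr.norm2, one_mul, v2] at k2
    exact ⟨k1.trans_lt hd, k2.trans_lt hd⟩
  let β : Euc 2 → ℝ := fun x => b₁ x + b₂ x
  have hβc : ContDiff ℝ 2 β := b₁.contDiff.add b₂.contDiff
  have hcs : HasCompactSupport β := b₁.hasCompactSupport.add b₂.hasCompactSupport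
  obtain ⟨C, hC⟩ : ∃ C : ℝ, ∀ y, ‖gradient β y‖ ≤ C := by
    have hcs' : HasCompactSupport (gradient β) := by
      have h1 := hcs.fderiv ℝ
      exact h1.comp_left (g := (InnerProductSpace.toDual ℝ (Euc 2)).symm) (map_zero _)
    exact hcs'.exists_bound_of_continuous (gr_cont (hβc.of_le (by norm_num)))
  have hle : ∀ x, β x ≤ 1 := by
    intro x
    by_cases h1 : b₁ x = 0
    · simp only [β, h1, zero_add]; exact b₂.le_one
    · have h2 : b₂ x = 0 := by
        by_contra h2
        have k1 := abs_lt.1 (z1 x h1).1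
        have k2 := abs_lt.1 (z2 x h2).1
        linarith [k1.1, k2.2]
      simp only [β, h2, add_zero]; exact b₁.le_one
  have hsupp : ∀ x, β x ≠ 0 → Reg p e₁ e₂ r x := by
    intro x hx
    by_cases h1 : b₁ x = 0
    · have h2 : b₂ x ≠ 0 := by
        intro h2; exact hx (by simp [β, h1, h2])
      obtain ⟨k1, k2⟩ := z2 x h2
      obtain ⟨k3, k4⟩ := abs_lt.1 k1
      have : |⟪e₁, x - p⟫| = -⟪e₁, x - p⟫ := abs_of_neg (by linarith)
      exact ⟨by rw [this]; linarith, by rw [this]; linarith, k2.le⟩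
    · obtain ⟨k1, k2⟩ := z1 x h1
      obtain ⟨k3, k4⟩ := abs_lt.1 k1
      have : |⟪e₁, x - p⟫| = ⟪e₁, x - p⟫ := abs_of_pos (by linarith)
      exact ⟨by rw [this]; linarith, by rw [this]; linarith, k2.le⟩
  refine ⟨β, C, hβc, fun x => add_nonneg b₁.nonneg b₂.nonneg, hle, hC, hsupp, ?_, ?_⟩
  · intro x hx
    by_contra hnr
    apply hx
    have e : β =ᶠ[nhds x] fun _ => 0 := by
      filter_upwards [(reg_closed p e₁ e₂ r).isOpen_compl.mem_nhds hnr] with y hy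
      by_contra h
      exact hy (hsupp y h)
    rw [e.gradient_eq]
    exact gradient_fun_const x 0
  · intro x hu hv
    apply le_antisymm (hle x)
    have hx : x - p = ⟪e₁, x - p⟫ • e₁ := by
      conv_lhs => rw [hfr.rep (x - p), hv]
      simp
    rcases abs_eq (by positivity : 0 ≤ 2 * r) |>.1 hu with h | h
    · have : x = c₁ := by
        rw [h] at hx; simp only [c₁]; rw [← hx]; abel
      have h1 : b₁ x = 1 := b₁.one_of_mem_closedBall (by rw [this]; exact mem_closedBall_self (by positivity : (0:ℝ) ≤ r / 2))
      simp only [β, h1]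
      linarith [b₂.nonneg (x := x)]
    · have : x = c₂ := by
        rw [h, neg_smul] at hx; simp only [c₂]; rw [sub_eq_add_neg, ← hx]; abel
      have h1 : b₂ x = 1 := b₂.one_of_mem_closedBall (by rw [this]; exact mem_closedBall_self (by positivity : (0:ℝ) ≤ r / 2))
      simp only [β, h1]
      linarith [b₁.nonneg (x := x)]

/-- No saddle connection starts at `p`. -/
def NoConnFrom (ψ : Euc 2 → ℝ) (p : Euc 2) : Prop :=
  ∀ (γ : ℝ → Euc 2) (q : Euc 2), IsTrajectory (gradient ψ) γ → IsSaddleAt (gradient ψ) p →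
    IsSaddleAt (gradient ψ) q → p ≠ q → Tendsto γ atBot (nhds p) → Tendsto γ atTop (nhds q) → False

lemma exists_setup {ψ : Euc 2 → ℝ} (hψ : ContDiff ℝ 2 ψ) {p : Euc 2} (hq : QuadAt ψ p)
    (hs : IsSaddleAt (gradient ψ) p) (S : Finset (Euc 2)) (hS : ∀ x ∈ S, ψ p < ψ x) :
    ∃ (β : Euc 2 → ℝ) (e₁ e₂ : Euc 2) (a b r C : ℝ), Setup ψ β p e₁ e₂ a b r C ∧
      ∀ x ∈ S, ψ p + 6 * a * r ^ 2 < ψ x := by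
  obtain ⟨e₁, e₂, a, b, hfr, ha, hb, hev⟩ := saddle_form hq hs
  obtain ⟨ρ, hρ, hball⟩ := Metric.eventually_nhds_iff.1 hev
  have h1 : ∀ᶠ r in nhdsWithin (0:ℝ) (Ioi 0), ∀ x ∈ S, ψ p + 6 * a * r ^ 2 < ψ x := by
    rw [Filter.eventually_all_finset]
    intro x hx
    have hc : Continuous fun r : ℝ => ψ p + 6 * a * r ^ 2 := by fun_prop
    exact nhdsWithin_le_nhds (hc.continuousAt.eventually_lt continuousAt_const
      (by simpa using hS x hx))
  have h2 : ∀ᶠ r in nhdsWithin (0:ℝ) (Ioi 0), 10 * r < ρ := by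
    have hc : Continuous fun r : ℝ => 10 * r := by fun_prop
    exact nhdsWithin_le_nhds (hc.continuousAt.eventually_lt continuousAt_const
      (by simpa using hρ))
  obtain ⟨r, g1, g2, g3⟩ := (h1.and (h2.and self_mem_nhdsWithin)).exists
  have hr : 0 < r := g3
  obtain ⟨β, C, k1, k2, k3, k4, k5, k6, k7⟩ := exists_beta (p := p) hfr hr
  have hin : ∀ x, |⟪e₁, x - p⟫| < 5 * r → |⟪e₂, x - p⟫| < 5 * r → dist x p < ρ := by
    intro x hu hv
    rw [dist_eq_norm]
    calc ‖x - p‖ = ‖⟪e₁, x - p⟫ • e₁ + ⟪e₂, x - p⟫ • e₂‖ := by rw [← hfr.rep]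
      _ ≤ ‖⟪e₁, x - p⟫ • e₁‖ + ‖⟪e₂, x - p⟫ • e₂‖ := norm_add_le _ _
      _ = |⟪e₁, x - p⟫| + |⟪e₂, x - p⟫| := by
        rw [norm_smul, norm_smul, hfr.norm1, hfr.norm2, mul_one, mul_one, Real.norm_eq_abs,
          Real.norm_eq_abs]
      _ < ρ := by linarith
  refine ⟨β, e₁, e₂, a, b, r, C, ⟨hfr, ha, hb, hr, hψ, fun x hu hv => (hball (hin x hu hv)).1,
    fun x hu hv => ?_, k1, k2, k3, k4, k5, k6, k7⟩, g1⟩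
  rw [(hball (hin x hu hv)).2, sub_eq_add_neg, neg_smul]

lemma saddle_congr {ψ ψ' : Euc 2 → ℝ} {p : Euc 2} (h : ψ' =ᶠ[nhds p] ψ)
    (hs : IsSaddleAt (gradient ψ') p) : IsSaddleAt (gradient ψ) p := by
  have e : gradient ψ' =ᶠ[nhds p] gradient ψ := by
    filter_upwards [eventually_eventually_nhds.2 h] with x hx
    exact Filter.EventuallyEq.gradient_eq hx
  unfold IsSaddleAt IsSourceAt IsSinkAt at *
  rw [e.fderiv_eq, e.eq_of_nhds] at hs
  exact hs

/-- Breaking the connections starting at `p` for some small parameter. -/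
lemma exists_good {ψ β : Euc 2 → ℝ} {p e₁ e₂ : Euc 2} {a b r C : ℝ}
    (S : Setup ψ β p e₁ e₂ a b r C) (Z : Finset (Euc 2))
    (hZ : ∀ x, gradient ψ x = 0 ↔ x ∈ Z) (hQ : ∀ x ∈ Z, QuadAt ψ x) :
    ∃ s, SmallP a b r C s ∧ NoConnFrom (pert ψ β p e₂ s) p := by
  classical
  by_contra hcon
  push Not at hcon
  -- frames at the saddles
  have hfrm : ∀ q : Euc 2, ∃ (f₁ f₂ : Euc 2) (c d : ℝ), IsSaddleAt (gradient ψ) q →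
      Frame f₁ f₂ ∧ 0 < c ∧ 0 < d ∧ ∀ᶠ x in nhds q,
        gradient ψ x = (c * ⟪f₁, x - q⟫) • f₁ - (d * ⟪f₂, x - q⟫) • f₂ := by
    intro q
    by_cases hq : IsSaddleAt (gradient ψ) q
    · obtain ⟨f₁, f₂, c, d, h1, h2, h3, h4⟩ := saddle_form (hQ q ((hZ q).1 hq.1)) hq
      exact ⟨f₁, f₂, c, d, fun _ => ⟨h1, h2, h3, h4.mono fun x hx => hx.2⟩⟩
    · exact ⟨0, 0, 0, 0, fun h => absurd h hq⟩
  choose f₁ f₂ c d hf using hfrm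
  -- the statement that `s` is bad with given class
  let Bad : Euc 2 → SignType → ℝ → Prop := fun q σ s =>
    ∃ δ : ℝ → Euc 2, IsSaddleAt (gradient ψ) q ∧ (∀ t ≥ 0, HasDerivAt δ (gradient ψ (δ t)) t) ∧
      Tendsto δ atTop (nhds q) ∧ (∀ᶠ t in atTop, SignType.sign ⟪f₂ q, δ t - q⟫ = σ) ∧
      ψ (δ 0) = ψ p + 6 * a * r ^ 2 ∧ 0 < ⟪e₂, δ 0 - p⟫ ∧ ⟪e₂, δ 0 - p⟫ ≤ 2 * s / b
  have hbad : ∀ s, SmallP a b r C s → ∃ q ∈ Z, ∃ σ, Bad q σ s := by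
    intro s hs
    have h := hcon s hs
    unfold NoConnFrom at h
    push Not at h
    obtain ⟨γ, q, hγ, hp, hq, hpq, hbot, htop, -⟩ := h
    have hqz : gradient ψ q = 0 := (S.crit hs q).1 hq.1
    have hqs : IsSaddleAt (gradient ψ) q := saddle_congr (S.pert_loc s (S.not_reg hqz)) hq
    obtain ⟨τ, h1, h2, h3, h4⟩ := S.out hs hγ hbot htop hqz hpq.symm
    have hd : ∀ t ≥ 0, HasDerivAt (fun t => γ (t + τ)) (gradient ψ (γ (t + τ))) t := fun t ht =>
      (h4 (t + τ) (by linarith)).comp_add_const t τ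
    have hl : Tendsto (fun t => γ (t + τ)) atTop (nhds q) :=
      htop.comp (tendsto_atTop_add_const_right _ _ tendsto_id)
    obtain ⟨g1, g2, g3, g4⟩ := hf q hqs
    obtain ⟨σ, hσ⟩ := sign_exists g1 g2 g4 hd hl
    refine ⟨q, (hZ q).1 hqz, σ, fun t => γ (t + τ), hqs, hd, hl, hσ, ?_, ?_, ?_⟩
    · simpa using h1
    · simpa using h2
    · simpa using h3
  -- pigeonhole
  have hfreq : ∃ q ∈ Z, ∃ σ, ∃ᶠ s in nhdsWithin (0:ℝ) (Ioi 0), Bad q σ s := by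
    by_contra hno
    push Not at hno
    have h1 : ∀ᶠ s in nhdsWithin (0:ℝ) (Ioi 0), ∀ q ∈ Z, ∀ σ, ¬ Bad q σ s := by
      rw [Filter.eventually_all_finset]
      intro q hq
      rw [Filter.eventually_all]
      intro σ
      exact Filter.not_frequently.1 (by simpa using hno q hq σ)
    obtain ⟨s, g1, g2⟩ := (h1.and (small_ev (C := C) S.ha S.hb S.hr)).exists
    obtain ⟨q, hq, σ, hb⟩ := hbad s g2
    exact g1 q hq σ hb
  obtain ⟨q, hq, σ, hfr⟩ := hfreq
  obtain ⟨s, δ, hqs, d1, d2, d3, d4, d5, d6⟩ := hfr.exists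
  have hsm : ∀ᶠ s' in nhdsWithin (0:ℝ) (Ioi 0), 2 * s' / b < ⟪e₂, δ 0 - p⟫ := by
    have hc : Continuous fun s' : ℝ => 2 * s' / b := by fun_prop
    exact nhdsWithin_le_nhds (hc.continuousAt.eventually_lt continuousAt_const
      (by simpa using d5))
  obtain ⟨s', ⟨δ', _, k1, k2, k3, k4, k5, k6⟩, hlt⟩ := (hfr.and_eventually hsm).exists
  obtain ⟨g1, g2, g3, g4⟩ := hf q hqs
  have := meet S.hψ g1 g2 g3 g4 d1 k1 d2 k2 d3 k3 (d4.trans k4.symm)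
  rw [this] at hlt
  linarith

lemma traj_ge {ψ : Euc 2 → ℝ} (hψ : ContDiff ℝ 1 ψ) {γ : ℝ → Euc 2} {p : Euc 2}
    (hγ : IsTrajectory (gradient ψ) γ) (hp : Tendsto γ atBot (nhds p)) (t : ℝ) :
    ψ p ≤ ψ (γ t) := by
  have hEd : ∀ t, HasDerivAt (fun t => ψ (γ t)) ⟪gradient ψ (γ t), gradient ψ (γ t)⟫ t := fun t =>
    hg_curve (gr_has hψ _) (hγ t)
  have hEm : Monotone (fun t => ψ (γ t)) :=
    monotone_of_hasDerivAt_nonneg hEd (fun t => real_inner_self_nonneg)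
  exact le_of_tendsto ((hψ.continuous.tendsto p).comp hp)
    (eventually_atBot.2 ⟨t, fun s hs => hEm hs⟩)

lemma break_conn {ψ : Euc 2 → ℝ} (hψ : ContDiff ℝ 2 ψ) (Z : Finset (Euc 2))
    (hZ : ∀ x, gradient ψ x = 0 ↔ x ∈ Z) (hQ : ∀ x ∈ Z, QuadAt ψ x)
    (hinj : ∀ p ∈ Z, ∀ q ∈ Z, ψ p = ψ q → p = q) :
    ∃ ψ' : Euc 2 → ℝ, ContDiff ℝ 2 ψ' ∧ (∃ C, ∀ x, ‖gradient ψ' x - gradient ψ x‖ ≤ C) ∧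
      (∀ x, gradient ψ' x = 0 ↔ x ∈ Z) ∧ (∀ x ∈ Z, QuadAt ψ' x) ∧ (∀ x ∈ Z, ψ' x = ψ x) ∧
      ∀ p ∈ Z, NoConnFrom ψ' p := by
  classical
  suffices H : ∀ S : Finset (Euc 2), S ⊆ Z →
    ∃ ψ' : Euc 2 → ℝ, ContDiff ℝ 2 ψ' ∧ (∃ C, ∀ x, ‖gradient ψ' x - gradient ψ x‖ ≤ C) ∧
      (∀ x, gradient ψ' x = 0 ↔ x ∈ Z) ∧ (∀ x ∈ Z, QuadAt ψ' x) ∧ (∀ x ∈ Z, ψ' x = ψ x) ∧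
      ∀ p ∈ S, NoConnFrom ψ' p from H Z subset_rfl
  intro S
  induction S using Finset.induction_on_min_value ψ with
  | empty =>
    intro _
    exact ⟨ψ, hψ, ⟨0, by simp⟩, hZ, hQ, fun _ _ => rfl, by simp⟩
  | insert p S hpS hmin ih =>
    intro hS
    have hSZ : S ⊆ Z := (Finset.subset_insert _ _).trans hS
    have hpZ : p ∈ Z := hS (Finset.mem_insert_self _ _)
    obtain ⟨ψ₁, h1, ⟨C₁, h2⟩, h3, h4, h5, h6⟩ := ih hSZ
    by_cases hsad : IsSaddleAt (gradient ψ₁) p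
    swap
    · refine ⟨ψ₁, h1, ⟨C₁, h2⟩, h3, h4, h5, fun x hx => ?_⟩
      rcases Finset.mem_insert.1 hx with hx1 | hx1
      · subst hx1
        intro γ q _ hp
        exact absurd hp hsad
      · exact h6 x hx1
    have hlt : ∀ x ∈ S, ψ₁ p < ψ₁ x := by
      intro x hx
      rw [h5 p hpZ, h5 x (hSZ hx)]
      refine lt_of_le_of_ne (hmin x hx) fun h => hpS ?_
      rw [hinj p hpZ x (hSZ hx) h]
      exact hx
    obtain ⟨β, e₁, e₂, a, b, r, C, hset, hhigh⟩ := exists_setup h1 (h4 p hpZ) hsad S hlt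
    obtain ⟨s, hs, hgood⟩ := exists_good hset Z h3 h4
    have hloc : ∀ x ∈ Z, pert ψ₁ β p e₂ s =ᶠ[nhds x] ψ₁ := fun x hx =>
      hset.pert_loc s (hset.not_reg ((h3 x).2 hx))
    have hcrit : ∀ x, gradient (pert ψ₁ β p e₂ s) x = 0 ↔ x ∈ Z := fun x =>
      (hset.crit hs x).trans (h3 x)
    refine ⟨pert ψ₁ β p e₂ s, hset.pert_c2 s, ?_, hcrit, fun x hx => (h4 x hx).congr (hloc x hx),
      fun x hx => (hloc x hx).eq_of_nhds.trans (h5 x hx), ?_⟩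
    · have hout : ∀ x, 5 * r ≤ ‖x - p‖ → pert ψ₁ β p e₂ s x = ψ₁ x := by
        intro x hx
        refine (hset.pert_off s ?_).1
        rintro ⟨k1, k2, k3⟩
        have hr := hset.hr
        have : ‖x - p‖ ≤ |⟪e₁, x - p⟫| + |⟪e₂, x - p⟫| := by
          calc ‖x - p‖ = ‖⟪e₁, x - p⟫ • e₁ + ⟪e₂, x - p⟫ • e₂‖ := by rw [← hset.fr.rep]
            _ ≤ ‖⟪e₁, x - p⟫ • e₁‖ + ‖⟪e₂, x - p⟫ • e₂‖ := norm_add_le _ _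
            _ = |⟪e₁, x - p⟫| + |⟪e₂, x - p⟫| := by
              rw [norm_smul, norm_smul, hset.fr.norm1, hset.fr.norm2, mul_one, mul_one,
                Real.norm_eq_abs, Real.norm_eq_abs]
        linarith
      obtain ⟨C', hC'⟩ := bdd_of_eq_out (h1.of_le (by norm_num))
        ((hset.pert_c2 s).of_le (by norm_num)) hout
      refine ⟨C' + C₁, fun x => ?_⟩
      have : gradient (pert ψ₁ β p e₂ s) x - gradient ψ x =
        (gradient (pert ψ₁ β p e₂ s) x - gradient ψ₁ x) +
        (gradient ψ₁ x - gradient ψ x) := by abel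
      rw [this]
      exact (norm_add_le _ _).trans (add_le_add (hC' x) (h2 x))
    · intro x hx
      rcases Finset.mem_insert.1 hx with hx1 | hx1
      · rw [hx1]; exact hgood
      · intro γ q hγ hx2 hq hxq hbot htop
        have hoff : ∀ t, ¬ Reg p e₁ e₂ r (γ t) := by
          rintro t ⟨k1, k2, k3⟩
          have g1 := hset.val_lt hs k2 k3
          have g2 := traj_ge ((hset.pert_c2 s).of_le (by norm_num)) hγ hbot t
          rw [(hloc x (hSZ hx1)).eq_of_nhds] at g2
          linarith [hhigh x hx1]
        refine h6 x hx1 γ q (fun t => ?_) (saddle_congr (hloc x (hSZ hx1)) hx2)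
          (saddle_congr (hloc q ((hcrit q).1 hq.1)) hq) hxq hbot htop
        rw [← (hset.pert_off s (hoff t)).2]
        exact hγ t

/-- every proper gradient map `f : ℝ² → ℝ²` is proper gradient homotopic to a
generic proper gradient map. -/
theorem proper_gradient_homotopic_to_generic (f : Euc 2 → Euc 2)
    (hgrad : IsGradient f) (hprop : IsProper f) :
    ∃ f' : Euc 2 → Euc 2, IsGenericGradient f' ∧ IsProper f' ∧
      ProperGradientHomotopic f f' := by
  classical
  obtain ⟨φ, hφ, hf⟩ := hgrad
  obtain ⟨ψ₀, hψ₀, hb₀⟩ := exists_smooth hφ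
  have hG : ContDiff ℝ 1 (gradient ψ₀) := gr_contDiff hψ₀
  obtain ⟨a, ha, hreg⟩ := exists_regular hG
  have hψ₀1 : ContDiff ℝ 1 ψ₀ := hψ₀.of_le (by norm_num)
  let ψ₁ : Euc 2 → ℝ := fun x => ψ₀ x + ⟪a, x - 0⟫
  have hψ₁ : ContDiff ℝ 2 ψ₁ := by
    refine hψ₀.add ?_
    exact contDiff_const.inner ℝ (contDiff_id.sub contDiff_const)
  have hg1 : gradient ψ₁ = fun x => gradient ψ₀ x + a := by
    funext x
    exact (hg_add (gr_has hψ₀1 x) (hg_inner a 0 x)).gradient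
  have hfd : ∀ p, fderiv ℝ (gradient ψ₁) p = fderiv ℝ (gradient ψ₀) p := by
    intro p; rw [hg1]; simp
  have hb1 : ∀ x, ‖gradient ψ₁ x - f x‖ ≤ 3 := by
    intro x
    have h := hb₀ x
    rw [hf] at h
    have e : gradient ψ₁ x - f x = (gradient ψ₀ x - f x) + a := by
      rw [hg1]
      exact add_sub_right_comm _ _ _
    rw [e]
    linarith [norm_add_le (gradient ψ₀ x - f x) a]
  have hp1 : IsProper (gradient ψ₁) :=
    (homotopy_of_bdd hφ (hψ₁.of_le (by norm_num)) hf 3 hb1 hprop).1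
  have hbij : ∀ p, gradient ψ₁ p = 0 → Function.Bijective (fderiv ℝ (gradient ψ₁) p) := by
    intro p hp
    rw [hfd]
    refine hreg p ?_
    rw [hg1] at hp
    exact hp
  have hfin := finite_zeros (gr_contDiff hψ₁) (hp1 {0} isCompact_singleton) hbij
  have hZ : ∀ x, gradient ψ₁ x = 0 ↔ x ∈ hfin.toFinset := by
    intro x; simp
  obtain ⟨ψ₂, c2, ⟨C, hC⟩, z2, q2, i2⟩ :=
    distinct_vals hψ₁ hfin.toFinset hZ (fun p hp => hbij p ((hZ p).2 hp))
  obtain ⟨ψ₃, c3, ⟨C', hC'⟩, z3, q3, v3, n3⟩ := break_conn c2 hfin.toFinset z2 q2 i2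
  have hb3 : ∀ x, ‖gradient ψ₃ x - f x‖ ≤ C' + (C + 3) := by
    intro x
    have e : gradient ψ₃ x - f x = (gradient ψ₃ x - gradient ψ₂ x) +
      ((gradient ψ₂ x - gradient ψ₁ x) + (gradient ψ₁ x - f x)) := by abel
    rw [e]
    exact (norm_add_le _ _).trans (add_le_add (hC' x)
      ((norm_add_le _ _).trans (add_le_add (hC x) (hb1 x))))
  have hfinal := homotopy_of_bdd hφ (c3.of_le (by norm_num)) hf _ hb3 hprop
  refine ⟨gradient ψ₃, ⟨ψ₃, c3, fun _ => rfl, fun p hp => (q3 p ((z3 p).1 hp)).bij,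
    fun p q hp hq h => ?_, ?_⟩, hfinal.1, hfinal.2⟩
  · have hp' := (z3 p).1 hp
    have hq' := (z3 q).1 hq
    refine i2 p hp' q hq' ?_
    rw [← v3 p hp', ← v3 q hq', h]
  · rintro ⟨γ, p, q, hγ, hp, hq, hpq, h1, h2⟩
    exact n3 p ((z3 p).1 hp.1) γ q hγ hp hq hpq h1 h2
end
end

section
/- Let f = ∇φ : ℝ² → ℝ² be a generic proper gradient map with local flow η, let x be a source of f, and assume the set B_f of saddles of f is nonempty. Then there exists a saddle y ∈ B_f such that x and y are connected by a trajectory of η, i.e., there is z ∈ ℝ² with η^t(z) → x as t → −∞ and η^t(z) → y as t → ∞. -/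
open Set Metric Filter

noncomputable section

open scoped RealInnerProductSpace

section Aux
open Topology

lemma aux_exists_curve (g : Euc 2 → Euc 2) (K L : NNReal) (hK : LipschitzWith K g)
    (hL : ∀ z, ‖g z‖ ≤ L) (z : Euc 2) :
    ∃ γ : ℝ → Euc 2, γ 0 = z ∧ ∀ t, HasDerivAt γ (g (γ t)) t := by
  have h1 : ∀ n : ℕ, ∃ α : ℝ → Euc 2, α 0 = z ∧
      ∀ t ∈ Ioo (-((n:ℝ)+1)) ((n:ℝ)+1), HasDerivAt α (g (α t)) t := by
    intro n
    have h0 : (0:ℝ) ∈ Icc (-((n:ℝ)+1)) ((n:ℝ)+1) := by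
      constructor <;> linarith [(Nat.cast_nonneg n : (0:ℝ) ≤ n)]
    have hP : IsPicardLindelof (fun _ => g) (⟨0, h0⟩ : Icc (-((n:ℝ)+1)) ((n:ℝ)+1)) z
        (L * (n + 1)) 0 L K := by
      refine ⟨fun _ _ => hK.lipschitzOnWith, fun _ _ => continuousOn_const,
        fun _ _ y _ => hL y, ?_⟩
      simp
    obtain ⟨α, hα0, hα⟩ := hP.exists_eq_forall_mem_Icc_hasDerivWithinAt₀
    exact ⟨α, hα0, fun t ht => (hα t (Ioo_subset_Icc_self ht)).hasDerivAt (Icc_mem_nhds ht.1 ht.2)⟩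
  choose α hα0 hα using h1
  have hag : ∀ n m : ℕ, ∀ s : ℝ, |s| < n + 1 → |s| < m + 1 → α n s = α m s := by
    intro n m s hn hm
    rw [abs_lt] at hn hm
    set c : ℝ := min ((n:ℝ)+1) ((m:ℝ)+1) with hc
    have hc0 : 0 < c := lt_min (by positivity) (by positivity)
    have hcn : c ≤ n + 1 := min_le_left _ _
    have hcm : c ≤ m + 1 := min_le_right _ _
    have := ODE_solution_unique_of_mem_Ioo (v := fun _ => g) (s := fun _ => univ) (K := K)
      (f := α n) (g := α m) (a := -c) (b := c) (t₀ := 0)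
      (fun t _ => hK.lipschitzOnWith) ⟨by linarith, hc0⟩
      (fun t ht => ⟨hα n t ⟨by linarith [ht.1], by linarith [ht.2]⟩, trivial⟩)
      (fun t ht => ⟨hα m t ⟨by linarith [ht.1], by linarith [ht.2]⟩, trivial⟩)
      (by rw [hα0, hα0])
    exact this ⟨by rcases min_choice ((n:ℝ)+1) ((m:ℝ)+1) with h | h <;> rw [hc, h] <;> linarith,
      lt_min hn.2 hm.2⟩
  refine ⟨fun t => α ⌈|t|⌉₊ t, by simp [hα0], fun t => ?_⟩
  have hlt : ∀ s : ℝ, |s| < (⌈|s|⌉₊ : ℝ) + 1 := fun s => by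
    linarith [Nat.le_ceil (|s|)]
  have hd := hα ⌈|t|⌉₊ t (abs_lt.1 (hlt t))
  refine hd.congr_of_eventuallyEq ?_
  have : ∀ᶠ s in 𝓝 t, |s| < (⌈|t|⌉₊ : ℝ) + 1 :=
    continuous_abs.continuousAt.eventually_lt continuousAt_const (hlt t)
  filter_upwards [this] with s hs
  exact hag _ _ s (hlt s) hs

lemma aux_cont_fwd (g : Euc 2 → Euc 2) (K : NNReal) (hK : LipschitzWith K g)
    (η : ℝ → Euc 2 → Euc 2) (h0 : ∀ z, η 0 z = z)
    (hη : ∀ z t, HasDerivAt (fun t => η t z) (g (η t z)) t) (t : ℝ) (ht : 0 ≤ t) :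
    Continuous (η t) := by
  have : LipschitzWith (Real.toNNReal (Real.exp (K * t))) (η t) := by
    refine LipschitzWith.of_dist_le_mul fun y z => ?_
    have hc : ∀ z, Continuous (fun t => η t z) := fun z =>
      continuous_iff_continuousAt.2 fun t => (hη z t).continuousAt
    have := dist_le_of_trajectories_ODE (v := fun _ => g) (K := K) (f := fun t => η t y)
      (g := fun t => η t z) (a := 0) (b := t) (δ := dist y z) (fun _ => hK)
      (hc y).continuousOn (fun t _ => (hη y t).hasDerivWithinAt)
      (hc z).continuousOn (fun t _ => (hη z t).hasDerivWithinAt) (by simp [h0]) t ⟨ht, le_rfl⟩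
    rw [Real.coe_toNNReal _ (Real.exp_pos _).le]
    simpa [mul_comm] using this
  exact this.continuous

lemma aux_exists_flow (g : Euc 2 → Euc 2) (K L : NNReal) (hK : LipschitzWith K g)
    (hL : ∀ z, ‖g z‖ ≤ L) :
    ∃ η : ℝ → Euc 2 → Euc 2, (∀ z, η 0 z = z) ∧
      (∀ z t, HasDerivAt (fun t => η t z) (g (η t z)) t) ∧
      (∀ s t z, η (s + t) z = η s (η t z)) ∧
      Continuous (fun p : ℝ × Euc 2 => η p.1 p.2) ∧
      (∀ p, g p = 0 → ∀ t, η t p = p) := by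
  choose γ hγ0 hγ using aux_exists_curve g K L hK hL
  refine ⟨fun t z => γ z t, hγ0, hγ, ?_, ?_, ?_⟩
  · intro s t z
    have h := ODE_solution_unique_univ (v := fun _ => g) (s := fun _ => univ) (K := K)
      (f := fun s => γ z (s + t)) (g := γ (γ z t)) (t₀ := 0)
      (fun t => hK.lipschitzOnWith)
      (fun s => ⟨(hγ z (s + t)).comp_add_const s t, trivial⟩)
      (fun s => ⟨hγ _ s, trivial⟩) (by simp [hγ0])
    exact congrFun h s
  · refine continuous_prod_of_continuous_lipschitzWith _ L ?_ ?_
    · intro t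
      rcases le_total 0 t with ht | ht
      · exact aux_cont_fwd g K hK (fun t z => γ z t) hγ0 hγ t ht
      · have := aux_cont_fwd (fun z => - g z) K hK.neg (fun t z => γ z (-t))
          (by simp [hγ0]) (fun z t => by
            have := (hγ z (-t)).scomp t (hasDerivAt_neg t)
            rw [neg_one_smul] at this
            exact this) (-t) (by linarith)
        simpa using this
    · intro z
      refine lipschitzWith_of_nnnorm_deriv_le (fun t => (hγ z t).differentiableAt) fun t => ?_
      rw [(hγ z t).deriv]
      exact hL _
  · intro p hp t
    have h := ODE_solution_unique_univ (v := fun _ => g) (s := fun _ => univ) (K := K)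
      (f := γ p) (g := fun _ => p) (t₀ := 0)
      (fun t => hK.lipschitzOnWith)
      (fun s => ⟨hγ _ s, trivial⟩)
      (fun s => ⟨by rw [hp]; exact hasDerivAt_const s p, trivial⟩) (hγ0 p)
    exact congrFun h t

lemma aux_local_pos (f : Euc 2 → Euc 2) (p : Euc 2) (hd : DifferentiableAt ℝ f p) (hp : f p = 0)
    (hpos : ∀ v : Euc 2, v ≠ 0 → 0 < ⟪fderiv ℝ f p v, v⟫) :
    ∃ c > 0, ∃ ρ > 0, ∀ z ∈ closedBall p ρ, c * ‖z - p‖ ^ 2 ≤ ⟪f z, z - p⟫ := by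
  set A := fderiv ℝ f p
  have hS : IsCompact (sphere (0 : Euc 2) 1) := isCompact_sphere _ _
  have hne : (sphere (0 : Euc 2) 1).Nonempty := NormedSpace.sphere_nonempty.2 zero_le_one
  obtain ⟨v₀, hv₀, hmin⟩ := hS.exists_isMinOn hne
    (f := fun v => ⟪A v, v⟫) (by fun_prop)
  have hv₀n : v₀ ≠ 0 := by
    rintro rfl
    simp at hv₀
  set c := ⟪A v₀, v₀⟫ with hc
  have hc0 : 0 < c := hpos v₀ hv₀n
  have hA : ∀ v, c * ‖v‖ ^ 2 ≤ ⟪A v, v⟫ := by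
    intro v
    by_cases hv : v = 0
    · simp [hv]
    have hvn : 0 < ‖v‖ := norm_pos_iff.2 hv
    have h1 : ‖v‖⁻¹ • v ∈ sphere (0 : Euc 2) 1 := by
      simp [norm_smul, hvn.ne']
    have h2 := hmin h1
    simp only [mem_ofPred_eq, map_smul, inner_smul_left, inner_smul_right] at h2
    simp only [RCLike.conj_to_real] at h2
    change c ≤ _ at h2
    calc c * ‖v‖ ^ 2 ≤ (‖v‖⁻¹ * (‖v‖⁻¹ * ⟪A v, v⟫)) * ‖v‖ ^ 2 := by gcongr
      _ = ⟪A v, v⟫ := by field_simp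
  have ho := hd.hasFDerivAt.isLittleO.bound (half_pos hc0)
  obtain ⟨ρ, hρ, hb⟩ := Metric.nhds_basis_closedBall.eventually_iff.1 ho
  refine ⟨c / 2, half_pos hc0, ρ, hρ, fun z hz => ?_⟩
  have h1 := hb hz
  rw [hp, sub_zero] at h1
  have h2 : |⟪f z - A (z - p), z - p⟫| ≤ c / 2 * ‖z - p‖ * ‖z - p‖ :=
    (abs_real_inner_le_norm _ _).trans (by gcongr)
  rw [inner_sub_left] at h2
  have h3 := (abs_le.1 h2).1
  have h4 := hA (z - p)
  nlinarith

lemma aux_contract (γ γ' : ℝ → Euc 2) (hγ : ∀ t, HasDerivAt γ (γ' t) t) (p : Euc 2) (c ρ : ℝ)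
    (hc : 0 < c) (hρ : 0 < ρ)
    (h : ∀ t, γ t ∈ closedBall p ρ → c * ‖γ t - p‖ ^ 2 ≤ - ⟪γ' t, γ t - p⟫)
    (h0 : γ 0 ∈ closedBall p ρ) (t : ℝ) (ht : 0 ≤ t) :
    ‖γ t - p‖ ^ 2 ≤ ρ ^ 2 * Real.exp (- c * t) := by
  have hu : ∀ t, HasDerivAt (fun t => ‖γ t - p‖ ^ 2) (2 * ⟪γ t - p, γ' t⟫) t := fun t =>
    ((hγ t).sub_const p).norm_sq
  have hB : ∀ t, HasDerivAt (fun t => ρ ^ 2 * Real.exp (- c * t))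
      (ρ ^ 2 * (Real.exp (- c * t) * (- c))) t := fun t => by
    have := (((hasDerivAt_id t).const_mul (-c)).exp).const_mul (ρ ^ 2)
    simpa using this
  refine image_le_of_deriv_right_lt_deriv_boundary (a := 0) (b := t)
    (f := fun t => ‖γ t - p‖ ^ 2)
    (fun s _ => (hu s).continuousAt.continuousWithinAt)
    (fun s _ => (hu s).hasDerivWithinAt) ?_ hB ?_ ⟨ht, le_rfl⟩
  · rw [mem_closedBall, dist_eq_norm] at h0
    simp only [mul_zero, Real.exp_zero, mul_one]
    gcongr
  · intro s hs he
    have hpos : 0 < ρ ^ 2 * Real.exp (- c * s) := by positivity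
    have hle : ρ ^ 2 * Real.exp (- c * s) ≤ ρ ^ 2 := by
      have : Real.exp (-c * s) ≤ 1 := Real.exp_le_one_iff.2 (by nlinarith [hs.1])
      nlinarith [sq_nonneg ρ]
    have hm : γ s ∈ closedBall p ρ := by
      rw [mem_closedBall, dist_eq_norm]
      exact (pow_le_pow_iff_left₀ (norm_nonneg _) hρ.le two_ne_zero).1 (he ▸ hle)
    have h1 := h s hm
    rw [real_inner_comm]
    rw [he] at h1
    nlinarith

end Aux
section Aux2
open Topology

lemma aux_sinks_countable (f : Euc 2 → Euc 2) (hf : Differentiable ℝ f) :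
    {p | IsSinkAt f p}.Countable := by
  have hd : DiscreteTopology {p | IsSinkAt f p} := by
    rw [discreteTopology_subtype_iff']
    intro p hp
    obtain ⟨c, hc, ρ, hρ, h⟩ := aux_local_pos (fun z => - f z) p (hf p).neg (by simp [hp.1])
      (fun v hv => by
        have := hp.2 v hv
        rw [fderiv_fun_neg]
        simpa using this)
    refine ⟨ball p ρ, isOpen_ball, ?_⟩
    ext q
    simp only [mem_inter_iff, mem_singleton_iff]
    constructor
    · rintro ⟨hq, hqs⟩
      have h1 := h q (ball_subset_closedBall hq)
      have h2 : f q = 0 := hqs.1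
      simp only [h2, neg_zero, inner_zero_left] at h1
      have h3 : ‖q - p‖ ^ 2 ≤ 0 := by nlinarith
      have h4 : ‖q - p‖ = 0 := by nlinarith [norm_nonneg (q - p)]
      exact sub_eq_zero.1 (norm_eq_zero.1 h4)
    · rintro rfl
      exact ⟨mem_ball_self hρ, hp⟩
  exact (HereditarilyLindelofSpace.isLindelof _).countable hd

/-- The a priori bound: a trajectory of `χ f` cannot go far without increasing `φ`. -/
lemma aux_bound (φ : Euc 2 → ℝ) (f : Euc 2 → Euc 2)
    (hgr : ∀ z, HasGradientAt φ (f z) z) (χ : Euc 2 → ℝ) (hχ : ∀ z, 0 ≤ χ z)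
    (γ : ℝ → Euc 2) (hγ : ∀ t, HasDerivAt γ (χ (γ t) • f (γ t)) t) :
    (∀ t, HasDerivAt (fun t => φ (γ t)) (χ (γ t) * ‖f (γ t)‖ ^ 2) t) ∧
    Monotone (fun t => φ (γ t)) ∧
    ∀ R, (∀ z, R ≤ ‖z‖ → 1 ≤ ‖f z‖) → ‖γ 0‖ ≤ R → ∀ t, 0 ≤ t →
      ‖γ t‖ ≤ R + (φ (γ t) - φ (γ 0)) + 1 := by
  have h1 : ∀ t, HasDerivAt (fun t => φ (γ t)) (χ (γ t) * ‖f (γ t)‖ ^ 2) t := by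
    intro t
    have := (hgr (γ t)).hasFDerivAt.comp_hasDerivAt t (hγ t)
    refine this.congr_deriv ?_
    simp
  have h2 : Monotone (fun t => φ (γ t)) := by
    refine monotone_of_deriv_nonneg (fun t => (h1 t).differentiableAt) fun t => ?_
    rw [(h1 t).deriv]
    exact mul_nonneg (hχ _) (sq_nonneg _)
  refine ⟨h1, h2, fun R hR h0 t ht => ?_⟩
  have hB : ∀ t, HasDerivAt (fun t => R + (φ (γ t) - φ (γ 0)) + (1 - Real.exp (-t)))
      (χ (γ t) * ‖f (γ t)‖ ^ 2 + Real.exp (-t)) t := by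
    intro t
    have := (((h1 t).sub_const (φ (γ 0))).const_add R).add
      (((hasDerivAt_neg t).exp).const_sub 1)
    refine this.congr_deriv ?_
    ring
  have key : ‖γ t‖ ≤ R + (φ (γ t) - φ (γ 0)) + (1 - Real.exp (-t)) := by
    refine image_norm_le_of_norm_deriv_right_lt_deriv_boundary (a := 0) (b := t)
      (fun s _ => (hγ s).continuousAt.continuousWithinAt)
      (fun s _ => (hγ s).hasDerivWithinAt) ?_ hB ?_ ⟨ht, le_rfl⟩
    · simpa using h0
    · intro s hs he
      have hm : φ (γ 0) ≤ φ (γ s) := h2 hs.1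
      have hexp : Real.exp (-s) ≤ 1 := Real.exp_le_one_iff.2 (by linarith [hs.1])
      have hf1 := hR (γ s) (by rw [he]; linarith)
      rw [norm_smul, Real.norm_of_nonneg (hχ _)]
      have h3 : χ (γ s) * ‖f (γ s)‖ ≤ χ (γ s) * ‖f (γ s)‖ ^ 2 := by
        have := hχ (γ s)
        gcongr
        nlinarith
      linarith [Real.exp_pos (-s)]
  linarith [Real.exp_pos (-t)]

/-- A bounded forward trajectory converges to a critical point. -/
lemma aux_conv (φ : Euc 2 → ℝ) (f : Euc 2 → Euc 2)
    (hgr : ∀ z, HasGradientAt φ (f z) z) (χ : Euc 2 → ℝ) (hχ : ∀ z, 0 ≤ χ z)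
    (hcrit : ∀ p q : Euc 2, f p = 0 → f q = 0 → φ p = φ q → p = q)
    (η : ℝ → Euc 2 → Euc 2) (h0 : ∀ z, η 0 z = z)
    (hη : ∀ z t, HasDerivAt (fun t => η t z) (χ (η t z) • f (η t z)) t)
    (hadd : ∀ s t z, η (s + t) z = η s (η t z))
    (hcont : Continuous (fun p : ℝ × Euc 2 => η p.1 p.2))
    (R M : ℝ) (hχ1 : ∀ z, ‖z‖ ≤ R → χ z = 1) (z : Euc 2)
    (hM : ∀ t, 0 ≤ t → φ (η t z) ≤ M) (hR : ∀ t, 0 ≤ t → ‖η t z‖ ≤ R) :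
    ∃ p, f p = 0 ∧ ‖p‖ ≤ R ∧ Tendsto (fun t => η t z) atTop (𝓝 p) := by
  have hφc : Continuous φ := continuous_iff_continuousAt.2 fun z => (hgr z).continuousAt
  have hηc : ∀ t, Continuous (η t) := fun t => by fun_prop
  have hmono := fun w => (aux_bound φ f hgr χ hχ (fun t => η t w) (hη w)).2.1
  have hbdd : BddAbove (range fun t => φ (η t z)) := by
    refine ⟨M, ?_⟩
    rintro _ ⟨t, rfl⟩
    exact (hmono z (le_max_left t 0)).trans (hM _ (le_max_right _ _))
  set l := ⨆ t, φ (η t z)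
  have hl : Tendsto (fun t => φ (η t z)) atTop (𝓝 l) := tendsto_atTop_ciSup (hmono z) hbdd
  have hcl : ∀ p, MapClusterPt p atTop (fun t => η t z) → ∀ s, φ (η s p) = l := by
    intro p hp s
    have h1 : MapClusterPt (φ (η s p)) atTop ((fun w => φ (η s w)) ∘ fun t => η t z) :=
      MapClusterPt.continuousAt_comp (f := fun w => φ (η s w))
        (hφc.comp (hηc s)).continuousAt hp
    have h2 : Tendsto ((fun w => φ (η s w)) ∘ fun t => η t z) atTop (𝓝 l) := by
      have := hl.comp (tendsto_atTop_add_const_left atTop s tendsto_id)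
      refine this.congr fun t => ?_
      simp [hadd]
    have h3 : ClusterPt (φ (η s p)) (𝓝 l) := ClusterPt.mono h1 h2
    exact eq_of_nhds_neBot h3
  have hcl2 : ∀ p ∈ closedBall (0 : Euc 2) R, MapClusterPt p atTop (fun t => η t z) →
      f p = 0 ∧ φ p = l := by
    intro p hpR hp
    have h1 := hcl p hp
    have h2 := (aux_bound φ f hgr χ hχ (fun t => η t p) (hη p)).1 0
    have h3 : (fun t => φ (η t p)) = fun _ => l := funext h1
    simp only [h3] at h2
    have h4 := h2.unique (hasDerivAt_const 0 l)
    rw [h0, hχ1 p (by simpa using hpR)] at h4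
    refine ⟨?_, by simpa [h0] using h1 0⟩
    simpa using h4
  have hev : ∀ᶠ t in atTop, η t z ∈ closedBall (0 : Euc 2) R := by
    filter_upwards [eventually_ge_atTop 0] with t ht
    simpa using hR t ht
  obtain ⟨p, hpR, hp⟩ := (isCompact_closedBall (0 : Euc 2) R).exists_mapClusterPt
    (f := atTop) (u := fun t => η t z) (by simpa using hev)
  refine ⟨p, (hcl2 p hpR hp).1, by simpa using hpR, ?_⟩
  refine (isCompact_closedBall (0 : Euc 2) R).tendsto_nhds_of_unique_mapClusterPt hev ?_
  intro q hqR hq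
  obtain ⟨a, b⟩ := hcl2 q hqR hq
  obtain ⟨a', b'⟩ := hcl2 p hpR hp
  exact hcrit q p a a' (b.trans b'.symm)

end Aux2

section Aux3
open Topology

lemma aux_fwd (g : Euc 2 → Euc 2) (η : ℝ → Euc 2 → Euc 2) (h0 : ∀ z, η 0 z = z)
    (hη : ∀ z t, HasDerivAt (fun t => η t z) (g (η t z)) t) (p : Euc 2) (c ρ : ℝ)
    (hc : 0 < c) (hρ : 0 < ρ)
    (h : ∀ z ∈ closedBall p ρ, c * ‖z - p‖ ^ 2 ≤ ⟪- g z, z - p⟫)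
    (w : Euc 2) (hw : w ∈ closedBall p ρ) (t : ℝ) (ht : 0 ≤ t) :
    ‖η t w - p‖ ^ 2 ≤ ρ ^ 2 * Real.exp (- c * t) := by
  refine aux_contract (fun t => η t w) (fun t => g (η t w)) (hη w) p c ρ hc hρ
    (fun t ht => ?_) (by simpa [h0] using hw) t ht
  have := h _ ht
  rwa [inner_neg_left] at this

lemma aux_back (g : Euc 2 → Euc 2) (η : ℝ → Euc 2 → Euc 2) (h0 : ∀ z, η 0 z = z)
    (hη : ∀ z t, HasDerivAt (fun t => η t z) (g (η t z)) t) (p : Euc 2) (c ρ : ℝ)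
    (hc : 0 < c) (hρ : 0 < ρ)
    (h : ∀ z ∈ closedBall p ρ, c * ‖z - p‖ ^ 2 ≤ ⟪g z, z - p⟫)
    (w : Euc 2) (hw : w ∈ closedBall p ρ) (t : ℝ) (ht : 0 ≤ t) :
    ‖η (-t) w - p‖ ^ 2 ≤ ρ ^ 2 * Real.exp (- c * t) := by
  refine aux_fwd (fun z => - g z) (fun t z => η (-t) z) (by simpa using h0) ?_ p c ρ hc hρ
    (fun z hz => by simpa using h z hz) w hw t ht
  intro z t
  have := (hη z (-t)).scomp t (hasDerivAt_neg t)
  rw [neg_one_smul] at this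
  exact this

lemma aux_decay (c ρ : ℝ) (hc : 0 < c) :
    Tendsto (fun t => ρ ^ 2 * Real.exp (- c * t)) atTop (𝓝 0) := by
  have h1 : Tendsto (fun t : ℝ => - c * t) atTop atBot :=
    tendsto_id.const_mul_atTop_of_neg (by linarith)
  have := (Real.tendsto_exp_atBot.comp h1).const_mul (ρ ^ 2)
  simpa using this

lemma aux_ball_of_decay (c ρ t : ℝ) (hc : 0 < c) (hρ : 0 < ρ) (ht : 0 ≤ t) (u p : Euc 2)
    (h : ‖u - p‖ ^ 2 ≤ ρ ^ 2 * Real.exp (- c * t)) : u ∈ closedBall p ρ := by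
  have h1 : Real.exp (-c * t) ≤ 1 := Real.exp_le_one_iff.2 (by nlinarith)
  rw [mem_closedBall, dist_eq_norm]
  refine (pow_le_pow_iff_left₀ (norm_nonneg _) hρ.le two_ne_zero).1 (h.trans ?_)
  nlinarith [sq_nonneg ρ]

end Aux3

/-- if `f = ∇φ` is a generic proper gradient map, `x` is a source and the set
of saddles is nonempty, then some saddle `y` is connected to `x` by a trajectory of the
local flow: there is a full trajectory tending to `x` as `t → -∞` and to `y` as `t → ∞`. -/
theorem source_connected_to_saddle (φ : Euc 2 → ℝ) (f : Euc 2 → Euc 2)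
    (hgen : IsGenericGradientPair φ f) (hprop : IsProper f)
    (x : Euc 2) (hx : IsSourceAt f x) (hB : (saddleSet f).Nonempty) :
    ∃ (y : Euc 2) (γ : ℝ → Euc 2), IsSaddleAt f y ∧ IsTrajectory f γ ∧
      Filter.Tendsto γ Filter.atBot (nhds x) ∧ Filter.Tendsto γ Filter.atTop (nhds y) := by
  classical
  obtain ⟨hφ, hgrad, -, hcrit, -⟩ := hgen
  obtain ⟨y₀, hy₀⟩ := hB
  by_contra hno
  -- regularity
  have hgr : ∀ z, HasGradientAt φ (f z) z := fun z => by
    rw [← hgrad z]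
    exact ((hφ.differentiable (by norm_num)) z).hasGradientAt
  have hfC : ContDiff ℝ 1 f := by
    have h1 : ContDiff ℝ 1 (fderiv ℝ φ) := hφ.fderiv_right (by norm_num)
    have h2 : f = fun z => (InnerProductSpace.toDual ℝ (Euc 2)).symm (fderiv ℝ φ z) := by
      funext z
      rw [← hgrad z]
      rfl
    rw [h2]
    exact (InnerProductSpace.toDual ℝ (Euc 2)).symm.contDiff.comp h1
  have hfd : Differentiable ℝ f := hfC.differentiable (by norm_num)
  have hφc : Continuous φ := hφ.continuous
  -- local analysis at x
  obtain ⟨c, hc, r, hr, hxloc⟩ := aux_local_pos f x (hfd x) hx.1 hx.2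
  -- the path
  have hxs : ¬ IsSinkAt f x := fun h => by
    have hv : (EuclideanSpace.single 0 1 : Euc 2) ≠ 0 := by simp
    linarith [hx.2 _ hv, h.2 _ hv]
  have hpc : IsPathConnected {p | IsSinkAt f p}ᶜ :=
    (aux_sinks_countable f hfd).isPathConnected_compl_of_one_lt_rank (by
      rw [← Module.finrank_eq_rank]; simp)
  have hj := hpc.joinedIn x hxs y₀ hy₀.2.2
  set Γ : Set (Euc 2) := range hj.somePath with hΓ
  have hΓc : IsCompact Γ := isCompact_range hj.somePath.continuous
  have hΓp : IsPreconnected Γ := isPreconnected_range hj.somePath.continuous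
  have hxΓ : x ∈ Γ := ⟨0, by simp⟩
  have hyΓ : y₀ ∈ Γ := ⟨1, by simp⟩
  have hΓs : ∀ s, IsSinkAt f s → s ∉ Γ := by
    rintro s hs ⟨t, rfl⟩
    exact hj.somePath_mem t hs
  -- constants
  obtain ⟨M, hM⟩ := hΓc.bddAbove_image hφc.continuousOn
  have hM : ∀ z ∈ Γ, φ z ≤ M := fun z hz => hM (mem_image_of_mem φ hz)
  have hSc : IsCompact (sphere x r) := isCompact_sphere x r
  obtain ⟨m, hm⟩ := hSc.bddBelow_image hφc.continuousOn
  have hm : ∀ z ∈ sphere x r, m ≤ φ z := fun z hz => hm (mem_image_of_mem φ hz)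
  obtain ⟨R₀, hR₀⟩ := (hprop (closedBall 0 1) (isCompact_closedBall 0 1)).isBounded.subset_closedBall 0
  set Ra : ℝ := max R₀ (‖x‖ + r) + 1 with hRa
  have hRa1 : R₀ + 1 ≤ Ra := by rw [hRa]; linarith [le_max_left R₀ (‖x‖ + r)]
  have hRa2 : ‖x‖ + r + 1 ≤ Ra := by rw [hRa]; linarith [le_max_right R₀ (‖x‖ + r)]
  have hRaf : ∀ z, Ra ≤ ‖z‖ → 1 ≤ ‖f z‖ := by
    intro z hz
    by_contra hlt
    have : z ∈ closedBall (0 : Euc 2) R₀ := hR₀ (by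
      simp only [mem_preimage, mem_closedBall, dist_zero_right]; linarith)
    simp only [mem_closedBall, dist_zero_right] at this
    linarith
  set R : ℝ := Ra + |M - m| + 1 with hR
  have hRpos : 0 < R + 1 := by linarith [norm_nonneg x, abs_nonneg (M - m)]
  have hRRa : Ra + 1 ≤ R := by linarith [abs_nonneg (M - m)]
  -- cut-off field
  let χ : ContDiffBump (0 : Euc 2) := ⟨R + 1, R + 2, hRpos, by linarith⟩
  have hχ0 : ∀ z, 0 ≤ χ z := fun z => χ.nonneg
  have hχ1 : ∀ z, ‖z‖ ≤ R + 1 → χ z = 1 := fun z hz =>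
    χ.one_of_mem_closedBall (by simpa using hz)
  set g : Euc 2 → Euc 2 := fun z => χ z • f z with hg
  have hgf : ∀ z, ‖z‖ ≤ R + 1 → g z = f z := fun z hz => by simp [hg, hχ1 z hz]
  have hgC : ContDiff ℝ 1 g := χ.contDiff.smul hfC
  have hgs : HasCompactSupport g := χ.hasCompactSupport.smul_right
  obtain ⟨K, hK⟩ := hgC.lipschitzWith_of_hasCompactSupport hgs (by norm_num)
  obtain ⟨L, hL⟩ := hgs.exists_bound_of_continuous hgC.continuous
  obtain ⟨η, h0, hη, hadd, hcont, hfix⟩ := aux_exists_flow g K L.toNNReal hK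
    (fun z => (hL z).trans (Real.le_coe_toNNReal L))
  have hηc : ∀ t, Continuous (η t) := fun t => by fun_prop
  have hηt : ∀ z, Continuous (fun t => η t z) := fun z => by fun_prop
  have hmono := fun w => (aux_bound φ f hgr χ hχ0 (fun t => η t w) (hη w)).2.1
  have hfix' : ∀ p, f p = 0 → ∀ t, η t p = p := fun p hp => hfix p (by simp [hg, hp])
  have hinv : ∀ t z, η (-t) (η t z) = z := fun t z => by rw [← hadd]; simp [h0]
  -- the basin W
  have hball : ∀ z ∈ closedBall x r, ‖z‖ ≤ R + 1 := by
    intro z hz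
    rw [mem_closedBall, dist_eq_norm] at hz
    have : ‖z‖ ≤ ‖z - x‖ + ‖x‖ := by simpa using norm_add_le (z - x) x
    linarith
  have hxg : ∀ z ∈ closedBall x r, c * ‖z - x‖ ^ 2 ≤ ⟪g z, z - x⟫ := fun z hz => by
    rw [hgf z (hball z hz)]; exact hxloc z hz
  have hback := aux_back g η h0 hη x c r hc hr hxg
  set W : Set (Euc 2) := {w | Tendsto (fun t => η t w) atBot (nhds x)} with hW
  have hbW : closedBall x r ⊆ W := by
    intro w hw
    have h1 : Tendsto (fun t => ‖η (-t) w - x‖ ^ 2) atTop (nhds 0) :=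
      squeeze_zero' (Eventually.of_forall fun t => sq_nonneg _)
        ((eventually_ge_atTop 0).mono fun t ht => hback w hw t ht) (aux_decay c r hc)
    have h2 : Tendsto (fun t => ‖η (-t) w - x‖) atTop (nhds 0) := by
      have := h1.sqrt
      simpa [Real.sqrt_sq] using this
    have h3 : Tendsto (fun t => η (-t) w) atTop (nhds x) :=
      tendsto_iff_norm_sub_tendsto_zero.2 h2
    have := h3.comp tendsto_neg_atBot_atTop
    change Tendsto (fun t => η t w) atBot (nhds x)
    simpa [Function.comp_def] using this
  have hWinv : ∀ s w, η s w ∈ W ↔ w ∈ W := by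
    have h1 : ∀ s w, w ∈ W → η s w ∈ W := by
      intro s w hw
      have := hw.comp (tendsto_atBot_add_const_right atBot s tendsto_id)
      refine this.congr fun t => ?_
      simp [hadd]
    refine fun s w => ⟨fun h => ?_, h1 s w⟩
    have := h1 (-s) _ h
    rwa [hinv] at this
  have hWo : IsOpen W := by
    rw [isOpen_iff_mem_nhds]
    intro w hw
    obtain ⟨T, hT⟩ := (hw.eventually (ball_mem_nhds x hr)).exists
    have : (η T) ⁻¹' (ball x r) ∈ nhds w := (hηc T).continuousAt.preimage_mem_nhds
      (isOpen_ball.mem_nhds hT)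
    refine mem_of_superset this fun w' hw' => ?_
    exact (hWinv T w').1 (hbW (ball_subset_closedBall hw'))
  have hloc : ∀ z ∈ sphere x r, ∃ U ∈ nhdsWithin z (sphere x r), ∃ T : ℝ, ∀ z' ∈ U, ∀ t, T ≤ t →
      η t z' ∉ Γ := by
    intro z hz
    by_cases hesc : ∃ T, 0 ≤ T ∧ M < φ (η T z)
    · obtain ⟨T, -, hTM⟩ := hesc
      refine ⟨{z' | M < φ (η T z')}, mem_nhdsWithin_of_mem_nhds
        ((isOpen_lt continuous_const (hφc.comp (hηc T))).mem_nhds hTM), T, ?_⟩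
      intro z' hz' t ht hmem
      have h1 : φ (η T z') ≤ φ (η t z') := hmono z' ht
      have h2 : M < φ (η T z') := hz'
      linarith [hM _ hmem]
    · have hle : ∀ t, 0 ≤ t → φ (η t z) ≤ M := fun t ht => by
        by_contra hlt
        exact hesc ⟨t, ht, not_le.1 hlt⟩
      have hzb : z ∈ closedBall x r := sphere_subset_closedBall hz
      have hbd : ∀ t, 0 ≤ t → ‖η t z‖ ≤ R := by
        intro t ht
        have hz0 : ‖η 0 z‖ ≤ Ra := by
          rw [h0]
          rw [mem_closedBall, dist_eq_norm] at hzb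
          have : ‖z‖ ≤ ‖z - x‖ + ‖x‖ := by simpa using norm_add_le (z - x) x
          linarith
        have h1 := (aux_bound φ f hgr χ hχ0 (fun t => η t z) (hη z)).2.2 Ra hRaf hz0 t ht
        simp only [h0] at h1
        linarith [hle t ht, hm z hz, le_abs_self (M - m)]
      obtain ⟨p, hp0, hpR, hpt⟩ := aux_conv φ f hgr χ hχ0 hcrit η h0 hη hadd hcont R M
        (fun z hz => hχ1 z (by linarith)) z hle hbd
      have hnear : ∀ ρ ≤ 1, ∀ w ∈ closedBall p ρ, g w = f w := by
        intro ρ hρ w hw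
        rw [mem_closedBall, dist_eq_norm] at hw
        have : ‖w‖ ≤ ‖w - p‖ + ‖p‖ := by simpa using norm_add_le (w - p) p
        exact hgf w (by linarith)
      by_cases hso : IsSourceAt f p
      · exfalso
        obtain ⟨c', hc', ρ, hρ, hploc⟩ := aux_local_pos f p (hfd p) hp0 hso.2
        set ρ' := min ρ 1 with hρ'
        have hρ'0 : 0 < ρ' := lt_min hρ one_pos
        have hbk := aux_back g η h0 hη p c' ρ' hc' hρ'0 (fun w hw => by
          rw [hnear ρ' (min_le_right _ _) w hw]
          exact hploc w (closedBall_subset_closedBall (min_le_left _ _) hw))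
        obtain ⟨T, hT⟩ := eventually_atTop.1 (hpt.eventually (closedBall_mem_nhds p hρ'0))
        have h1 : ∀ u, 0 ≤ u → ‖η T z - p‖ ^ 2 ≤ ρ' ^ 2 * Real.exp (- c' * u) := by
          intro u hu
          have h2 := hbk (η (u + T) z) (hT _ (by linarith)) u hu
          rwa [hadd u T z, hinv] at h2
        have h3 : ‖η T z - p‖ ^ 2 ≤ 0 :=
          ge_of_tendsto (aux_decay c' ρ' hc') ((eventually_ge_atTop 0).mono h1)
        have h4 : ‖η T z - p‖ = 0 := by nlinarith [norm_nonneg (η T z - p)]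
        have h5 : η T z = p := sub_eq_zero.1 (norm_eq_zero.1 h4)
        have h6 : z = p := by
          rw [← hinv T z, h5, hfix' p hp0]
        have h7 := hxloc z hzb
        rw [h6, hp0, inner_zero_left, ← h6] at h7
        rw [mem_sphere, dist_eq_norm] at hz
        rw [hz] at h7
        have : 0 < c * r ^ 2 := by positivity
        linarith
      · by_cases hsi : IsSinkAt f p
        · obtain ⟨c', hc', ρ, hρ, hploc⟩ := aux_local_pos (fun z => - f z) p (hfd p).neg
            (by simp [hp0]) (fun v hv => by
              have := hsi.2 v hv
              rw [fderiv_fun_neg]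
              simpa using this)
          obtain ⟨δ, hδ, hδΓ⟩ := Metric.nhds_basis_closedBall.mem_iff.1
            (hΓc.isClosed.isOpen_compl.mem_nhds (hΓs p hsi))
          set ρ' := min (min ρ δ) 1 with hρ'
          have hρ'0 : 0 < ρ' := lt_min (lt_min hρ hδ) one_pos
          have hfw := aux_fwd g η h0 hη p c' ρ' hc' hρ'0 (fun w hw => by
            rw [hnear ρ' (min_le_right _ _) w hw]
            exact hploc w (closedBall_subset_closedBall
              ((min_le_left _ _).trans (min_le_left _ _)) hw))
          obtain ⟨T, hT⟩ := (hpt.eventually (ball_mem_nhds p hρ'0)).exists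
          refine ⟨(η T) ⁻¹' (ball p ρ'), mem_nhdsWithin_of_mem_nhds
            ((hηc T).continuousAt.preimage_mem_nhds (isOpen_ball.mem_nhds hT)), T, ?_⟩
          intro z' hz' t ht
          have h1 := hfw (η T z') (ball_subset_closedBall hz') (t - T) (by linarith)
          rw [← hadd, sub_add_cancel] at h1
          have h2 := aux_ball_of_decay c' ρ' (t - T) hc' hρ'0 (by linarith) _ _ h1
          exact hδΓ (closedBall_subset_closedBall
              ((min_le_left _ _).trans (min_le_right _ _)) h2)
        · exfalso
          refine hno ⟨p, fun t => η t z, ⟨hp0, hso, hsi⟩, fun t => ?_, hbW hzb, hpt⟩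
          have h1 : g (η t z) = f (η t z) := by
            rcases le_total 0 t with ht | ht
            · exact hgf _ (by linarith [hbd t ht])
            · have h2 := hback z hzb (-t) (by linarith)
              rw [neg_neg] at h2
              exact hgf _ (hball _ (aux_ball_of_decay c r (-t) hc hr (by linarith) _ _ h2))
          rw [← h1]
          exact hη z t
  have hunif : ∃ T : ℝ, ∀ z' ∈ sphere x r, ∀ t, T ≤ t → η t z' ∉ Γ := by
    refine hSc.induction_on (p := fun U => ∃ T : ℝ, ∀ z' ∈ U, ∀ t, T ≤ t → η t z' ∉ Γ)
      ⟨0, by simp⟩ ?_ ?_ hloc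
    · rintro s t hst ⟨T, hT⟩
      exact ⟨T, fun z' hz' => hT z' (hst hz')⟩
    · rintro s t ⟨T, hT⟩ ⟨T', hT'⟩
      refine ⟨max T T', fun z' hz' u hu => ?_⟩
      rcases hz' with h | h
      · exact hT z' h u ((le_max_left _ _).trans hu)
      · exact hT' z' h u ((le_max_right _ _).trans hu)
  obtain ⟨T, hT⟩ := hunif
  set C : Set (Euc 2) := closedBall x r ∪
    (fun p : ℝ × Euc 2 => η p.1 p.2) '' (Icc 0 T ×ˢ sphere x r) with hC
  have hCc : IsCompact C := (isCompact_closedBall x r).union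
    ((isCompact_Icc.prod hSc).image hcont)
  have hCW : C ⊆ W := by
    rintro w (hw | ⟨⟨t, z⟩, ⟨-, hz⟩, rfl⟩)
    · exact hbW hw
    · exact (hWinv t z).2 (hbW (sphere_subset_closedBall hz))
  have hWC : ∀ w ∈ Γ, w ∈ W → w ∈ C := by
    intro w hwΓ hw
    by_cases hwb : w ∈ closedBall x r
    · exact Or.inl hwb
    right
    have hev := (hw.eventually (ball_mem_nhds x hr)).and (eventually_le_atBot (0:ℝ))
    obtain ⟨t₁, ht₁, ht₁0⟩ := hev.exists
    have hiv := intermediate_value_Icc ht₁0 (f := fun t => dist (η t w) x)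
      ((hηt w).dist continuous_const).continuousOn
    have hrm : r ∈ Icc (dist (η t₁ w) x) (dist (η 0 w) x) := by
      refine ⟨(mem_ball.1 ht₁).le, ?_⟩
      rw [h0]
      rw [mem_closedBall] at hwb
      linarith
    obtain ⟨s, hs, hsr⟩ := hiv hrm
    refine ⟨(-s, η s w), ⟨⟨by linarith [hs.2], ?_⟩, hsr⟩, hinv s w⟩
    by_contra hlt
    exact hT (η s w) hsr (-s) (not_le.1 hlt).le (by rwa [hinv])
  have hfinal := isPreconnected_iff_subset_of_disjoint.1 hΓp W Cᶜ hWo hCc.isClosed.isOpen_compl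
    (fun w _ => by
      by_cases h : w ∈ C
      · exact Or.inl (hCW h)
      · exact Or.inr h)
    (by
      ext w
      simp only [mem_inter_iff, mem_compl_iff, mem_empty_iff_false, iff_false]
      rintro ⟨h1, h2, h3⟩
      exact h3 (hWC w h1 h2))
  rcases hfinal with h | h
  · have hyW : Tendsto (fun t => η t y₀) atBot (nhds x) := h hyΓ
    have h2 : (fun t => η t y₀) = fun _ => y₀ := funext (hfix' y₀ hy₀.1)
    rw [h2] at hyW
    have h3 : y₀ = x := tendsto_nhds_unique tendsto_const_nhds hyW
    exact hy₀.2.1 (h3 ▸ hx)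
  · exact h hxΓ (Or.inl (mem_closedBall_self hr.le))
end
end

section
/- Let n ≥ 2. If f, f' : ℝⁿ → ℝⁿ are proper gradient maps with no zeros, then f and f' are proper gradient homotopic. -/
open Set Metric Filter

noncomputable section

/-- The map `x ↦ (1 + s|x|²) x`. -/
def Dil {n : ℕ} (s : ℝ) (x : Euc n) : Euc n := (1 + s * ‖x‖ ^ 2) • x

/-- The (symmetric) derivative of `Dil s` at `x`. -/
def Amap {n : ℕ} (s : ℝ) (x w : Euc n) : Euc n :=
  (1 + s * ‖x‖ ^ 2) • w + (2 * s * inner ℝ x w) • x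

lemma dil_hasFDerivAt {n : ℕ} (s : ℝ) (x : Euc n) :
    HasFDerivAt (Dil s) ((1 + s * ‖x‖ ^ 2) • (ContinuousLinearMap.id ℝ (Euc n)) +
      (s • (2 • (innerSL ℝ x))).smulRight x) x := by
  have h1 : HasFDerivAt (fun y : Euc n => ‖y‖ ^ 2) (2 • (innerSL ℝ x)) x :=
    (hasStrictFDerivAt_norm_sq x).hasFDerivAt
  have h2 := (h1.const_mul s).const_add 1
  exact h2.smul (hasFDerivAt_id x)

lemma dil_contDiff {n : ℕ} (s : ℝ) : ContDiff ℝ 1 (Dil s : Euc n → Euc n) := by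
  unfold Dil
  exact (contDiff_const.add (contDiff_const.mul (contDiff_norm_sq ℝ))).smul contDiff_id

lemma inner_amap {n : ℕ} (s : ℝ) (x w v : Euc n) :
    inner ℝ (Amap s x w) v =
      inner ℝ w (((1 + s * ‖x‖ ^ 2) • (ContinuousLinearMap.id ℝ (Euc n)) +
      (s • (2 • (innerSL ℝ x))).smulRight x) v) := by
  simp [Amap, inner_add_left, inner_add_right, inner_smul_left, inner_smul_right,
    real_inner_comm w x]
  ring

lemma isGradient_comp {n : ℕ} (s : ℝ) (g : Euc n → Euc n) (hg : IsGradient g) :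
    IsGradient (fun x => Amap s x (g (Dil s x))) := by
  obtain ⟨φ, hφ, hφg⟩ := hg
  refine ⟨fun x => φ (Dil s x), hφ.comp (dil_contDiff s), fun x => ?_⟩
  have h1 : HasGradientAt φ (g (Dil s x)) (Dil s x) := by
    rw [← hφg]
    exact (hφ.differentiable one_ne_zero _).hasGradientAt
  apply HasGradientAt.gradient
  rw [hasGradientAt_iff_hasFDerivAt] at h1 ⊢
  refine (h1.comp x (dil_hasFDerivAt s x)).congr_fderiv ?_
  ext v
  rw [InnerProductSpace.toDual_apply_apply, inner_amap]
  rfl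

lemma isGradient_scale {n : ℕ} (r : ℝ) (f : Euc n → Euc n) (hf : IsGradient f) :
    IsGradient (fun x => f (r • x)) := by
  by_cases hr : r = 0
  · subst hr
    refine ⟨fun x => inner ℝ (f 0) x, (innerSL ℝ (f 0)).contDiff, fun x => ?_⟩
    apply HasGradientAt.gradient
    rw [hasGradientAt_iff_hasFDerivAt]
    simp only [zero_smul]
    exact (innerSL ℝ (f 0)).hasFDerivAt
  obtain ⟨φ, hφ, hφg⟩ := hf
  refine ⟨fun x => r⁻¹ * φ (r • x), by fun_prop, fun x => ?_⟩
  have h1 : HasGradientAt φ (f (r • x)) (r • x) := by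
    rw [← hφg]
    exact (hφ.differentiable one_ne_zero _).hasGradientAt
  apply HasGradientAt.gradient
  rw [hasGradientAt_iff_hasFDerivAt] at h1 ⊢
  refine ((h1.comp x ((hasFDerivAt_id x).const_smul r)).const_mul r⁻¹).congr_fderiv ?_
  ext v
  simp [InnerProductSpace.toDual_apply_apply, inner_smul_right, hr]

lemma IsGradient.cont {n : ℕ} {f : Euc n → Euc n} (hf : IsGradient f) : Continuous f := by
  obtain ⟨φ, hφ, hφg⟩ := hf
  have : f = fun x => (InnerProductSpace.toDual ℝ (Euc n)).symm (fderiv ℝ φ x) := by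
    ext1 x
    rw [← hφg]; rfl
  rw [this]
  exact (LinearIsometryEquiv.continuous _).comp (hφ.continuous_fderiv one_ne_zero)

lemma amap_norm {n : ℕ} {s : ℝ} (hs : 0 ≤ s) (x w : Euc n) :
    (1 + s * ‖x‖ ^ 2) * ‖w‖ ≤ ‖Amap s x w‖ := by
  have h1 : (1 + s * ‖x‖ ^ 2) * ‖w‖ ^ 2 ≤ inner ℝ (Amap s x w) w := by
    simp only [Amap, inner_add_left, inner_smul_left, real_inner_self_eq_norm_sq]
    simp only [conj_trivial]
    nlinarith [mul_nonneg hs (mul_self_nonneg (inner ℝ x w))]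
  have h2 := real_inner_le_norm (Amap s x w) w
  rcases (norm_nonneg w).eq_or_lt with h | h
  · rw [← h]; simp
  · nlinarith

/-- Convenient version of the homotopy relation. -/
def Hom' {n : ℕ} (f g : Euc n → Euc n) : Prop :=
  ∃ h : ℝ → Euc n → Euc n, Continuous (fun p : ℝ × Euc n => h p.1 p.2) ∧
    (∀ t ∈ Icc (0:ℝ) 1, IsGradient (h t)) ∧
    (∀ R : ℝ, ∃ M : ℝ, ∀ t ∈ Icc (0:ℝ) 1, ∀ x, ‖h t x‖ ≤ R → ‖x‖ ≤ M) ∧ h 0 = f ∧ h 1 = g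

lemma Hom'.symm {n : ℕ} {f g : Euc n → Euc n} (H : Hom' f g) : Hom' g f := by
  obtain ⟨h, hc, hg, hp, h0, h1⟩ := H
  refine ⟨fun t => h (1 - t), ?_, ?_, ?_, by simpa using h1, by simpa using h0⟩
  · exact hc.comp (f := fun p : ℝ × Euc n => (1 - p.1, p.2)) (by fun_prop)
  · intro t ht
    exact hg _ ⟨by linarith [ht.2], by linarith [ht.1]⟩
  · intro R
    obtain ⟨M, hM⟩ := hp R
    exact ⟨M, fun t ht => hM _ ⟨by linarith [ht.2], by linarith [ht.1]⟩⟩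

lemma Hom'.trans {n : ℕ} {f g k : Euc n → Euc n} (H : Hom' f g) (H' : Hom' g k) :
    Hom' f k := by
  obtain ⟨h, hc, hg, hp, h0, h1⟩ := H
  obtain ⟨h', hc', hg', hp', h0', h1'⟩ := H'
  refine ⟨fun t x => if t ≤ 1 / 2 then h (2 * t) x else h' (2 * t - 1) x, ?_, ?_, ?_, ?_, ?_⟩
  · refine Continuous.if_le ?_ ?_ continuous_fst continuous_const ?_
    · exact hc.comp (f := fun p : ℝ × Euc n => (2 * p.1, p.2)) (by fun_prop)
    · exact hc'.comp (f := fun p : ℝ × Euc n => (2 * p.1 - 1, p.2)) (by fun_prop)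
    · intro p hp
      rw [hp]
      norm_num [h1, h0']
  · intro t ht
    by_cases h2 : t ≤ 1 / 2
    · simp only [h2, if_true]
      exact hg _ ⟨by linarith [ht.1], by linarith⟩
    · simp only [h2, if_false]
      exact hg' _ ⟨by linarith, by linarith [ht.2]⟩
  · intro R
    obtain ⟨M, hM⟩ := hp R
    obtain ⟨M', hM'⟩ := hp' R
    refine ⟨max M M', fun t ht x hx => ?_⟩
    by_cases h2 : t ≤ 1 / 2
    · simp only [h2, if_true] at hx
      exact (hM _ ⟨by linarith [ht.1], by linarith⟩ x hx).trans (le_max_left _ _)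
    · simp only [h2, if_false] at hx
      exact (hM' _ ⟨by linarith, by linarith [ht.2]⟩ x hx).trans (le_max_right _ _)
  · ext1 x; norm_num [h0]
  · ext1 x; norm_num [h1']

lemma Hom'.proper {n : ℕ} {f g : Euc n → Euc n} (H : Hom' f g) :
    ProperGradientHomotopic f g := by
  obtain ⟨h, hc, hg, hp, h0, h1⟩ := H
  refine ⟨h, ⟨hc.continuousOn, hg, fun K hK => ?_⟩, h0, h1⟩
  obtain ⟨R, hR⟩ := hK.isBounded.exists_norm_le
  obtain ⟨M, hM⟩ := hp R
  refine ((isCompact_Icc (a := (0:ℝ)) (b := 1)).prod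
    (isCompact_closedBall (0 : Euc n) M)).of_isClosed_subset ?_ ?_
  · exact (isClosed_Icc.preimage continuous_fst).inter (hK.isClosed.preimage hc)
  · rintro ⟨t, x⟩ ⟨ht, hx⟩
    refine ⟨ht, ?_⟩
    simpa using hM t ht x (hR _ hx)

lemma amap_cont {n : ℕ} {X : Type*} [TopologicalSpace X] {s : X → ℝ} {x w : X → Euc n}
    (hs : Continuous s) (hx : Continuous x) (hw : Continuous w) :
    Continuous (fun p => Amap (s p) (x p) (w p)) := by
  unfold Amap
  fun_prop

lemma dil_cont {n : ℕ} {X : Type*} [TopologicalSpace X] {s : X → ℝ} {x : X → Euc n}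
    (hs : Continuous s) (hx : Continuous x) :
    Continuous (fun p => Dil (s p) (x p)) := by
  unfold Dil
  fun_prop

lemma proper_bound {n : ℕ} {f : Euc n → Euc n} (hfp : IsProper f) (R : ℝ) :
    ∃ M : ℝ, ∀ x, ‖f x‖ ≤ R → ‖x‖ ≤ M := by
  obtain ⟨M, hM⟩ := (hfp _ (isCompact_closedBall 0 R)).isBounded.exists_norm_le
  exact ⟨M, fun x hx => hM x (by simpa using hx)⟩

lemma proper_lower {n : ℕ} {f : Euc n → Euc n} (hf : Continuous f) (hfp : IsProper f)
    (hf0 : ∀ x, f x ≠ 0) : ∃ c : ℝ, 0 < c ∧ ∀ x, c ≤ ‖f x‖ := by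
  have hK := hfp _ (isCompact_closedBall 0 ‖f 0‖)
  obtain ⟨y, -, hy⟩ := hK.exists_isMinOn ⟨0, by simp⟩ hf.norm.continuousOn
  refine ⟨‖f y‖, norm_pos_iff.2 (hf0 y), fun x => ?_⟩
  by_cases hx : ‖f x‖ ≤ ‖f 0‖
  · exact hy (by simpa using hx)
  · exact (hy (show (0 : Euc n) ∈ f ⁻¹' closedBall 0 ‖f 0‖ by simp)).trans (not_le.1 hx).le

/-- If `(1 + |x|²/2) c ≤ R` then `x` is bounded. -/
lemma quad_bound {c R r : ℝ} (hc : 0 < c) (h : (1 + r ^ 2 / 2) * c ≤ R) :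
    r ≤ R / c := by
  rw [le_div_iff₀ hc]
  nlinarith [sq_nonneg (r - 1)]

lemma hom_const {n : ℕ} {f : Euc n → Euc n} (hf : IsGradient f) (hfp : IsProper f)
    (hf0 : ∀ x, f x ≠ 0) : Hom' f (fun x => Amap 1 x (f 0)) := by
  have hc := hf.cont
  obtain ⟨c, hc0, hcf⟩ := proper_lower hc hfp hf0
  refine ⟨fun t x => Amap t x (f ((1 - t) • Dil t x)), ?_, ?_, ?_, ?_, ?_⟩
  · refine amap_cont continuous_fst continuous_snd (hc.comp ?_)
    exact (continuous_const.sub continuous_fst).smul (dil_cont continuous_fst continuous_snd)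
  · intro t _
    exact isGradient_comp t _ (isGradient_scale (1 - t) f hf)
  · intro R
    obtain ⟨M, hM⟩ := proper_bound hfp R
    refine ⟨max (R / c) (2 * M), fun t ht x hx => ?_⟩
    have h1 := (amap_norm ht.1 x (f ((1 - t) • Dil t x))).trans hx
    have hq : 0 ≤ t * ‖x‖ ^ 2 := mul_nonneg ht.1 (sq_nonneg _)
    rcases le_total t (1 / 2) with h2 | h2
    · refine le_max_of_le_right ?_
      have h3 := hM ((1 - t) • Dil t x) (by nlinarith [norm_nonneg (f ((1 - t) • Dil t x))])
      rw [Dil, norm_smul, norm_smul, Real.norm_of_nonneg (by linarith),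
        Real.norm_of_nonneg (by linarith)] at h3
      have h4 : ‖x‖ ≤ (1 + t * ‖x‖ ^ 2) * ‖x‖ := by nlinarith [norm_nonneg x]
      nlinarith [norm_nonneg x]
    · refine le_max_of_le_left (quad_bound hc0 (le_trans ?_ h1))
      have h5 := hcf ((1 - t) • Dil t x)
      have h6 : ‖x‖ ^ 2 / 2 ≤ t * ‖x‖ ^ 2 := by nlinarith [sq_nonneg ‖x‖]
      exact mul_le_mul (by linarith) h5 hc0.le (by linarith)
  · ext1 x; simp [Amap, Dil]
  · ext1 x; simp

lemma hom_path {n : ℕ} (hn : 2 ≤ n) {v v' : Euc n} (hv : v ≠ 0) (hv' : v' ≠ 0) :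
    Hom' (fun x => Amap 1 x v) (fun x => Amap 1 x v') := by
  have hr : 1 < Module.rank ℝ (Euc n) := by
    rw [← Module.finrank_eq_rank, finrank_euclideanSpace_fin]
    exact_mod_cast hn
  obtain ⟨γ, hγ⟩ := (isPathConnected_compl_singleton_of_one_lt_rank hr (0 : Euc n)).joinedIn
    v hv v' hv'
  obtain ⟨t0, ht0⟩ : ∃ t0, ∀ t, ‖γ t0‖ ≤ ‖γ t‖ := by
    obtain ⟨t0, -, h⟩ := isCompact_univ.exists_isMinOn univ_nonempty
      (γ.continuous.norm.continuousOn)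
    exact ⟨t0, fun t => h (mem_univ t)⟩
  have hc0 : 0 < ‖γ t0‖ := norm_pos_iff.2 (hγ t0)
  refine ⟨fun t x => Amap 1 x (γ.extend t), ?_, ?_, ?_, ?_, ?_⟩
  · exact amap_cont continuous_const continuous_snd (γ.continuous_extend.comp continuous_fst)
  · intro t _
    refine isGradient_comp 1 (fun _ => γ.extend t) ?_
    refine ⟨fun x => inner ℝ (γ.extend t) x, (innerSL ℝ (γ.extend t)).contDiff, fun x => ?_⟩
    apply HasGradientAt.gradient
    rw [hasGradientAt_iff_hasFDerivAt]
    exact (innerSL ℝ (γ.extend t)).hasFDerivAt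
  · intro R
    refine ⟨R / ‖γ t0‖, fun t ht x hx => quad_bound hc0 (le_trans ?_
      ((amap_norm zero_le_one x _).trans hx))⟩
    have h5 : ‖γ t0‖ ≤ ‖γ.extend t‖ := by
      rw [γ.extend_apply ht]; exact ht0 _
    have h6 := sq_nonneg ‖x‖
    exact mul_le_mul (by linarith) h5 hc0.le (by linarith)
  · ext1 x; simp
  · ext1 x; simp

/-- for `n ≥ 2`, any two proper gradient maps `ℝⁿ → ℝⁿ` with no zeros are
proper gradient homotopic. -/
theorem proper_gradient_no_zeros_homotopic (n : ℕ) (hn : 2 ≤ n)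
    (f f' : Euc n → Euc n)
    (hf : IsGradient f) (hfp : IsProper f) (hf0 : ∀ x, f x ≠ 0)
    (hf' : IsGradient f') (hf'p : IsProper f') (hf'0 : ∀ x, f' x ≠ 0) :
    ProperGradientHomotopic f f' := by
  exact ((hom_const hf hfp hf0).trans ((hom_path hn (hf0 0) (hf'0 0)).trans
    (hom_const hf' hf'p hf'0).symm)).proper
end
end
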